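/- Let G1 be a K5-minor-free bridgeless chordal graph with at least one edge, let G2 be a K5-minor-free bipartite graph with at least one edge and with no induced cycle of length greater than or equal to 6, and let G = G1 #_0 G2 be a 0-sum, identifying ℤ^{E(G)} with ℤ^{E(G1)} × ℤ^{E(G2)}. Then int(M_G) is the union over all y ∈ ℤ^{E(G2)} with (y, 4) ∈ int(M_{G2}) of the sets ((2, …, 2), y, 4) + M_G, where (2, …, 2) denotes the all-2 vector in ℤ^{E(G1)}. -/

import Mathlib

/-!
Write `M_G` for the cut monoid. Its elements of degree `d` are the sums of `d` cuts, encoded by maps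
`φ : V → Fin d → Bool`: the value on the edge `uv` is the Hamming distance `hd (φ u) (φ v)`
(`mem_cutMonoid_iff`). Such a sum is an even semimetric all of whose triangles have perimeter at
most `2 * d` (`Tri`). The argument rests on two converses.

* `exists_cuts`: on a `K₅`-minor-free graph which is chordal, or bipartite without induced cycles of
  length at least six (both satisfy the common property `StarC`), every vector satisfying `Tri`
  restricts to a sum of `d` cuts. The graph is split along minimal separators, which are completed
  in the process. Either there is a separator with at most three vertices whose completion keeps the
  graph `K₅`-minor-free, and sums of cuts on the two sides glue because a triangle determines its
  sum of cuts up to permutation and complement (`exists_glue`), or the graph is complete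
  (`Red.complete`). A complete `K₅`-minor-free graph has at most four vertices, and there the
  decomposition is explicit (`Tri.sumCut_four`).
* `LocalCond.exists_tri`: if there are no induced cycles of length at least five, edge values which
  satisfy the cycle inequalities on triangles and on induced quadrilaterals extend to a vector
  satisfying `Tri` on all pairs of vertices. On the double cover `V × Bool`, in which antipodal
  points are put at distance `d`, every walk between antipodal points has weight at least `d`, since
  a chord splits a long closed walk into two shorter ones (`CoverWeight.antipodal`). The shortest
  walk distance can then be lowered until the distances from a point to `q` and to the antipode of
  `q` add up to `d` (`Met.exists_tight`), and this is the triangle condition on one sheet.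

For the inclusion from left to right, let `p` be an interior point of degree `d`. Valid inequalities
are strict at `p`, and where parity applies they have slack two. In the chordal summand every edge
lies in a triangle (`exists_triangle`), so `p - ((2, …, 2), 4)` still satisfies the local conditions
(`localCond_chordal`); in the bipartite summand the same holds for `p - ((1, …, 1), 2)`
(`localCond_bipartite`). Hence these are sums of `d - 4` and of `d - 2` cuts. Two of the `d - 2`
cuts, added to `((1, …, 1), 2)`, form the point `(y, 4)`; the remaining `d - 4` cuts are glued to
those of the chordal summand at the common vertex (`exists_glue_one`). The point `(y, 4)` is in the
monoid because `(1, …, 1)` is the cut of the bipartition, and interior because `((1, …, 1), 2)`, the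
average of all cuts in degree two, is interior (`ctr_mem_interior`).

For the other inclusion, `((2, …, 2), 4)` is a sum of four cuts of the chordal summand by
`exists_cuts`, so `((2, …, 2), y, 4)` lies in `M_G`. It is interior since each cut of the bipartite
summand, averaged over its extensions to `G`, becomes a point of the cone with value `1 / 2` on the
edges of the chordal summand (`exists_lift_cone`), so that a multiple of the interior point
`((1, …, 1), 2)` can be split off.
-/

/-! Basic definitions for cut monoids of finite simple graphs. -/

open Classical in
/-- The cut vector of a vertex set `A`, as a function on `Sym2 V`:
value `1` on pairs with exactly one element in `A`, and `0` otherwise. -/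
noncomputable def cutVec {V : Type} (A : Set V) : Sym2 V → ℤ :=
  Sym2.lift ⟨fun v w => if ((v ∈ A) ↔ (w ∈ A)) then 0 else 1,
    fun v w => if_congr iff_comm rfl rfl⟩

variable {V : Type}

/-- The generators `(δ_A, 1)` of the cut monoid of `G`. -/
def cutGens (G : SimpleGraph V) : Set ((G.edgeSet → ℤ) × ℤ) :=
  {p | ∃ A : Set V, p = (fun e => cutVec A e.1, 1)}

/-- The cut monoid `M_G` of a graph `G`. -/
def cutMonoid (G : SimpleGraph V) : AddSubmonoid ((G.edgeSet → ℤ) × ℤ) :=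
  AddSubmonoid.closure (cutGens G)

/-- The group `gp(M_G)` generated by the cut monoid. -/
def cutGroup (G : SimpleGraph V) : AddSubgroup ((G.edgeSet → ℤ) × ℤ) :=
  AddSubgroup.closure (cutGens G)

/-- `M_G` is normal: every `x ∈ gp(M_G)` with `n • x ∈ M_G` for some `n ≥ 1` lies in `M_G`. -/
def CutNormal (G : SimpleGraph V) : Prop :=
  ∀ x ∈ cutGroup G, (∃ n : ℕ, 1 ≤ n ∧ n • x ∈ cutMonoid G) → x ∈ cutMonoid G

/-- `M_G` is seminormal: every `x ∈ gp(M_G)` with `2 • x ∈ M_G` and `3 • x ∈ M_G`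
lies in `M_G`. -/
def CutSeminormal (G : SimpleGraph V) : Prop :=
  ∀ x ∈ cutGroup G, 2 • x ∈ cutMonoid G → 3 • x ∈ cutMonoid G → x ∈ cutMonoid G

/-- Generators of the cone of `M_G`: nonnegative real multiples of the `(δ_A, 1)`. -/
noncomputable def cutConeGens (G : SimpleGraph V) : Set ((G.edgeSet → ℝ) × ℝ) :=
  {q | ∃ (c : ℝ) (A : Set V), 0 ≤ c ∧
    q = c • ((fun e => ((cutVec A e.1 : ℤ) : ℝ), (1 : ℝ)))}

/-- The cone `cone(M_G)`: all finite nonnegative real combinations of the `(δ_A, 1)`. -/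
noncomputable def cutCone (G : SimpleGraph V) : Set ((G.edgeSet → ℝ) × ℝ) :=
  (AddSubmonoid.closure (cutConeGens G) : Set ((G.edgeSet → ℝ) × ℝ))

/-- The canonical map from `ℤ^E × ℤ` to `ℝ^E × ℝ`. -/
noncomputable def toRealCut (G : SimpleGraph V) (p : (G.edgeSet → ℤ) × ℤ) :
    (G.edgeSet → ℝ) × ℝ :=
  (fun e => ((p.1 e : ℤ) : ℝ), ((p.2 : ℤ) : ℝ))

/-- `int(M_G)`: elements of `M_G` mapping into the topological interior of `cone(M_G)`. -/
noncomputable def cutInterior (G : SimpleGraph V) : Set ((G.edgeSet → ℤ) × ℤ) :=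
  {p | p ∈ cutMonoid G ∧ toRealCut G p ∈ interior (cutCone G)}

/-- The set of last coordinates `α ∈ ℕ` realized by elements of `int(M_G)`;
its least element is `m(G)`. -/
noncomputable def cutDegrees (G : SimpleGraph V) : Set ℕ :=
  {α | ∃ x : G.edgeSet → ℤ, ((x, (α : ℤ)) : (G.edgeSet → ℤ) × ℤ) ∈ cutInterior G}

/-- `H` is a minor of `G`: branch sets `B u` are nonempty, pairwise disjoint,
induce connected subgraphs, and edges of `H` are witnessed by edges of `G`. -/
def GraphMinor {W V : Type} (H : SimpleGraph W) (G : SimpleGraph V) : Prop :=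
  ∃ B : W → Set V,
    (∀ u, (B u).Nonempty) ∧
    (∀ u v, u ≠ v → Disjoint (B u) (B v)) ∧
    (∀ u, (G.induce (B u)).Connected) ∧
    (∀ u v, H.Adj u v → ∃ a ∈ B u, ∃ b ∈ B v, G.Adj a b)

/-- `G` is `K₅`-minor-free. -/
def K5Free (G : SimpleGraph V) : Prop :=
  ¬ GraphMinor (⊤ : SimpleGraph (Fin 5)) G

/-- `G` is bipartite: vertices split into two parts so every edge joins the parts. -/
def BipartiteG (G : SimpleGraph V) : Prop :=
  ∃ s : Set V, ∀ ⦃v w⦄, G.Adj v w → ((v ∈ s ∧ w ∉ s) ∨ (w ∈ s ∧ v ∉ s))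

/-- `G` has an induced cycle of length `n` (n ≥ 3): an induced-subgraph copy of the
cycle graph of length `n`. -/
def HasInducedCycleLen (G : SimpleGraph V) (n : ℕ) : Prop :=
  3 ≤ n ∧ Nonempty (SimpleGraph.cycleGraph n ↪g G)

/-- `G` contains a triangle. -/
def HasTriangle (G : SimpleGraph V) : Prop :=
  ∃ a b c, G.Adj a b ∧ G.Adj b c ∧ G.Adj a c

/-- `G` is chordal: every induced cycle is a triangle. -/
def ChordalG (G : SimpleGraph V) : Prop :=
  ∀ n, HasInducedCycleLen G n → n = 3

/-- `G` is bridgeless: every edge lies on some cycle. -/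
def BridgelessG (G : SimpleGraph V) : Prop :=
  ∀ e ∈ G.edgeSet, ∃ (v : V) (c : G.Walk v v), c.IsCycle ∧ e ∈ c.edges

/-- `G` is (isomorphic to) a cycle of length `n`. -/
def IsCycleOfLen (G : SimpleGraph V) (n : ℕ) : Prop :=
  3 ≤ n ∧ Nonempty (G ≃g SimpleGraph.cycleGraph n)

/-- `G` is a cycle. -/
def IsCycleGraph (G : SimpleGraph V) : Prop :=
  ∃ n, IsCycleOfLen G n

/-- `G` is a `0`-sum of `G1` and `G2`: copies of `G1`, `G2` cover `G`,
overlap in exactly one vertex, and every edge comes from `G1` or `G2`. -/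
def IsZeroSumDecomp {V1 V2 : Type} (G : SimpleGraph V) (G1 : SimpleGraph V1)
    (G2 : SimpleGraph V2) : Prop :=
  ∃ (f1 : V1 ↪ V) (f2 : V2 ↪ V),
    Set.range f1 ∪ Set.range f2 = Set.univ ∧
    (∃ v, Set.range f1 ∩ Set.range f2 = {v}) ∧
    (∀ a b, G.Adj a b ↔
      ((∃ x y, f1 x = a ∧ f1 y = b ∧ G1.Adj x y) ∨
       (∃ x y, f2 x = a ∧ f2 y = b ∧ G2.Adj x y)))

/-- `G` is a `1`-sum of `G1` and `G2` along a common edge. -/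
def IsOneSumDecomp {V1 V2 : Type} (G : SimpleGraph V) (G1 : SimpleGraph V1)
    (G2 : SimpleGraph V2) : Prop :=
  ∃ (f1 : V1 ↪ V) (f2 : V2 ↪ V) (v w : V),
    v ≠ w ∧
    Set.range f1 ∪ Set.range f2 = Set.univ ∧
    Set.range f1 ∩ Set.range f2 = {v, w} ∧
    (∃ x y, f1 x = v ∧ f1 y = w ∧ G1.Adj x y) ∧
    (∃ x y, f2 x = v ∧ f2 y = w ∧ G2.Adj x y) ∧
    (∀ a b, G.Adj a b ↔
      ((∃ x y, f1 x = a ∧ f1 y = b ∧ G1.Adj x y) ∨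
       (∃ x y, f2 x = a ∧ f2 y = b ∧ G2.Adj x y)))

/-- Ring graphs: obtained, up to adding isolated vertices, from finitely many
(finite) trees and cycles by iterated `0`-sums and `1`-sums. -/
inductive IsRingGraph : {V : Type} → SimpleGraph V → Prop
  | tree {V : Type} (G : SimpleGraph V) :
      Finite V → G.Connected → G.IsAcyclic → IsRingGraph G
  | cycle {V : Type} (G : SimpleGraph V) : IsCycleGraph G → IsRingGraph G
  | zeroSum {V1 V2 V : Type} {G1 : SimpleGraph V1} {G2 : SimpleGraph V2}
      {G : SimpleGraph V} :
      IsRingGraph G1 → IsRingGraph G2 → IsZeroSumDecomp G G1 G2 → IsRingGraph G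
  | oneSum {V1 V2 V : Type} {G1 : SimpleGraph V1} {G2 : SimpleGraph V2}
      {G : SimpleGraph V} :
      IsRingGraph G1 → IsRingGraph G2 → IsOneSumDecomp G G1 G2 → IsRingGraph G
  | addIsolated {V W : Type} {G : SimpleGraph V} {H : SimpleGraph W} (f : V ↪ W) :
      IsRingGraph G → (∀ a b, H.Adj a b ↔ ∃ x y, f x = a ∧ f y = b ∧ G.Adj x y) →
      IsRingGraph H

/-- An edge of an induced subgraph is an edge of the ambient graph. -/
lemma induce_edge_mem (G : SimpleGraph V) (s : Set V) (e : Sym2 s)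
    (he : e ∈ (G.induce s).edgeSet) : e.map Subtype.val ∈ G.edgeSet := by
  induction e using Sym2.ind with
  | _ a b =>
    rw [Sym2.map_pair_eq, SimpleGraph.mem_edgeSet]
    exact he

/-- Restriction of a vector indexed by the edges of `G` to the edges of the
subgraph of `G` induced on `s`. -/
noncomputable def restrictCut (G : SimpleGraph V) (s : Set V) (p : G.edgeSet → ℤ) :
    (G.induce s).edgeSet → ℤ :=
  fun e => p ⟨e.1.map Subtype.val, induce_edge_mem G s e.1 e.2⟩

/-! ### Connected vertex sets -/

/-- The vertex set `X` is nonempty and induces a connected subgraph of `G`, phrased through cuts: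
no nonempty proper part of `X` is closed under adjacency inside `X`. -/
def CS (G : SimpleGraph V) (X : Set V) : Prop :=
  X.Nonempty ∧ ∀ Y ⊆ X, Y.Nonempty → (∀ y ∈ Y, ∀ x ∈ X, G.Adj y x → x ∈ Y) → X ⊆ Y

/-- The connected component of `x` in the subgraph induced on `U`
(intended for `x ∈ U`). -/
def compIn (G : SimpleGraph V) (U : Set V) (x : V) : Set V :=
  {y | Relation.ReflTransGen (fun a b => b ∈ U ∧ G.Adj a b) x y}

section CS
variable {G H : SimpleGraph V} {X Y U : Set V} {x y : V}

lemma CS.exists_cross (h : CS G X) (Y : Set V) (hx : x ∈ X) (hxY : x ∈ Y) (hy : y ∈ X)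
    (hyY : y ∉ Y) : ∃ a ∈ X, a ∈ Y ∧ ∃ b ∈ X, b ∉ Y ∧ G.Adj a b := by
  by_contra! hc
  have := h.2 (X ∩ Y) Set.inter_subset_left ⟨x, hx, hxY⟩
    (fun a ha b hb hab => ⟨hb, by_contra fun hbY => hc a ha.1 ha.2 b hb hbY hab⟩)
  exact hyY (this hy).2

lemma CS.of_cross (hne : X.Nonempty)
    (h : ∀ Y : Set V, ∀ x ∈ X, x ∈ Y → ∀ y ∈ X, y ∉ Y →
      ∃ a ∈ X, a ∈ Y ∧ ∃ b ∈ X, b ∉ Y ∧ G.Adj a b) : CS G X := by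
  refine ⟨hne, fun Y hYX ⟨y, hy⟩ hcl z hz => by_contra fun hzY => ?_⟩
  obtain ⟨a, -, haY, b, hb, hbY, hab⟩ := h Y y (hYX hy) hy z hz hzY
  exact hbY (hcl a haY b hb hab)

lemma CS.of_adj (h : CS G X) (hadj : ∀ a ∈ X, ∀ b ∈ X, G.Adj a b → H.Adj a b) : CS H X :=
  CS.of_cross h.1 fun Y x hx hxY y hy hyY => by
    obtain ⟨a, ha, haY, b, hb, hbY, hab⟩ := h.exists_cross Y hx hxY hy hyY
    exact ⟨a, ha, haY, b, hb, hbY, hadj a ha b hb hab⟩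

lemma CS.singleton (x : V) : CS G {x} :=
  CS.of_cross (by simp) fun Y a ha haY b hb hbY => by
    rw [Set.mem_singleton_iff] at ha hb; subst ha; subst hb; exact absurd haY hbY

/-- Two connected sets that meet or are joined by an edge have connected union. -/
lemma CS.union (hX : CS G X) (hY : CS G Y) (h : ∃ x ∈ X, ∃ y ∈ Y, x = y ∨ G.Adj x y) :
    CS G (X ∪ Y) := by
  obtain ⟨x, hx, y, hy, hxy⟩ := h
  refine CS.of_cross (hX.1.inl) fun Z a ha haZ b hb hbZ => ?_
  by_contra! hc
  have key : ∀ W : Set V, CS G W → W ⊆ X ∪ Y → ∀ c ∈ W, ∀ d ∈ W, c ∈ Z → d ∈ Z := by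
    intro W hW hWs c hc' d hd hcZ
    by_contra hdZ
    obtain ⟨p, hp, hpZ, q, hq, hqZ, hpq⟩ := hW.exists_cross Z hc' hcZ hd hdZ
    exact hc p (hWs hp) hpZ q (hWs hq) hqZ hpq
  have k1 := key X hX Set.subset_union_left
  have k2 := key Y hY Set.subset_union_right
  have hxy' : x ∈ Z ↔ y ∈ Z := by
    rcases hxy with rfl | hxy
    · rfl
    · constructor
      · intro h; by_contra h'; exact hc x (.inl hx) h y (.inr hy) h' hxy
      · intro h; by_contra h'; exact hc y (.inr hy) h x (.inl hx) h' hxy.symm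
  rcases ha with ha | ha <;> rcases hb with hb | hb
  · exact hbZ (k1 a ha b hb haZ)
  · exact hbZ (k2 y hy b hb (hxy'.1 (k1 a ha x hx haZ)))
  · exact hbZ (k1 x hx b hb (hxy'.2 (k2 a ha y hy haZ)))
  · exact hbZ (k2 a ha b hb haZ)

lemma CS.insert (hX : CS G X) (hx : x ∈ X) (h : G.Adj y x) : CS G (insert y X) := by
  rw [Set.insert_eq]
  exact (CS.singleton y).union hX ⟨y, rfl, x, hx, .inr h⟩

lemma CS.pair (h : G.Adj x y) : CS G {x, y} :=
  (CS.singleton y).insert rfl h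

lemma CS.image {W : Type} {K : SimpleGraph W} (h : CS G X) (f : V → W)
    (hf : ∀ a ∈ X, ∀ b ∈ X, G.Adj a b → f a = f b ∨ K.Adj (f a) (f b)) : CS K (f '' X) := by
  refine CS.of_cross (h.1.image f) ?_
  rintro Y _ ⟨x, hx, rfl⟩ hxY _ ⟨y, hy, rfl⟩ hyY
  obtain ⟨a, ha, haY, b, hb, hbY, hab⟩ := h.exists_cross (f ⁻¹' Y) hx hxY hy hyY
  refine ⟨f a, ⟨a, ha, rfl⟩, haY, f b, ⟨b, hb, rfl⟩, hbY, ?_⟩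
  rcases hf a ha b hb hab with h | h
  · exact absurd (show f b ∈ Y from h ▸ haY) hbY
  · exact h

lemma compIn_self : x ∈ compIn G U x := Relation.ReflTransGen.refl

lemma compIn_closed (hy : y ∈ compIn G U x) {z : V} (hz : z ∈ U) (h : G.Adj y z) :
    z ∈ compIn G U x := hy.tail ⟨hz, h⟩

lemma compIn_subset (hx : x ∈ U) : compIn G U x ⊆ U := by
  intro y hy
  rcases Relation.ReflTransGen.cases_tail hy with rfl | ⟨c, -, h, -⟩
  · exact hx
  · exact h

lemma compIn_cs (G : SimpleGraph V) (U : Set V) (x : V) : CS G (compIn G U x) := by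
  have key : ∀ Y : Set V, ∀ y, y ∈ compIn G U x → (x ∈ Y ↔ y ∉ Y) →
      ∃ a ∈ compIn G U x, ∃ b ∈ compIn G U x, G.Adj a b ∧ (a ∈ Y ↔ b ∉ Y) := by
    intro Y y hy
    induction hy with
    | refl => intro h; tauto
    | tail hab hbc ih =>
      rename_i b c
      intro h
      by_cases hb : x ∈ Y ↔ b ∉ Y
      · exact ih hb
      · exact ⟨b, hab, c, hab.tail hbc, hbc.2, by tauto⟩
  refine CS.of_cross ⟨x, compIn_self⟩ fun Y a ha haY b hb hbY => ?_
  have : ∃ a ∈ compIn G U x, ∃ b ∈ compIn G U x, G.Adj a b ∧ (a ∈ Y ↔ b ∉ Y) := by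
    by_cases hx : x ∈ Y
    · exact key Y b hb (by tauto)
    · exact key Y a ha (by tauto)
  obtain ⟨p, hp, q, hq, hpq, h⟩ := this
  by_cases hpY : p ∈ Y
  · exact ⟨p, hp, hpY, q, hq, by tauto, hpq⟩
  · exact ⟨q, hq, by tauto, p, hp, by tauto, hpq.symm⟩

lemma CS.subset_closed (h : CS G X) (hx : x ∈ X) (hxY : x ∈ Y)
    (hcl : ∀ a ∈ X, a ∈ Y → ∀ b ∈ X, G.Adj a b → b ∈ Y) : X ⊆ Y := by
  intro z hz
  by_contra hzY
  obtain ⟨a, ha, haY, b, hb, hbY, hab⟩ := h.exists_cross Y hx hxY hz hzY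
  exact hbY (hcl a ha haY b hb hab)

lemma CS.subset_compIn (h : CS G X) (hXU : X ⊆ U) (hx : x ∈ X) : X ⊆ compIn G U x :=
  h.subset_closed hx compIn_self fun _ _ haY _ hb hab => compIn_closed haY (hXU hb) hab

lemma cs_iff_connected : CS G X ↔ (G.induce X).Connected := by
  constructor
  · intro h
    obtain ⟨x, hx⟩ := h.1
    have : ∀ y (hy : y ∈ X), (G.induce X).Reachable ⟨x, hx⟩ ⟨y, hy⟩ := by
      have hs : X ⊆ {y | ∃ hy : y ∈ X, (G.induce X).Reachable ⟨x, hx⟩ ⟨y, hy⟩} := by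
        refine h.subset_closed hx ⟨hx, .refl _⟩ ?_
        rintro a ha ⟨_, har⟩ b hb hab
        exact ⟨hb, har.trans (SimpleGraph.Adj.reachable (by simpa using hab))⟩
      intro y hy
      exact (hs hy).2
    have hne : Nonempty X := ⟨⟨x, hx⟩⟩
    exact ⟨fun a b => (this a.1 a.2).symm.trans (this b.1 b.2)⟩
  · intro h
    obtain ⟨⟨x, hx⟩⟩ := h.nonempty
    refine ⟨⟨x, hx⟩, fun Y hYX ⟨y, hy⟩ hcl z hz => ?_⟩
    have := h.preconnected ⟨y, hYX hy⟩ ⟨z, hz⟩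
    rw [SimpleGraph.reachable_iff_reflTransGen] at this
    have key : ∀ w : X, Relation.ReflTransGen (G.induce X).Adj ⟨y, hYX hy⟩ w → w.1 ∈ Y := by
      intro w hw
      induction hw with
      | refl => exact hy
      | tail _ hbc ih => exact hcl _ ih _ (Subtype.prop _) (by simpa using hbc)
    exact key ⟨z, hz⟩ this

end CS

/-- The vertex sets `A` and `B` are disjoint and joined by an edge. -/
def Tch (G : SimpleGraph V) (A B : Set V) : Prop :=
  Disjoint A B ∧ ∃ a ∈ A, ∃ b ∈ B, G.Adj a b

lemma Tch.symm {G : SimpleGraph V} {A B : Set V} (h : Tch G A B) : Tch G B A :=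
  ⟨h.1.symm, by obtain ⟨a, ha, b, hb, hab⟩ := h.2; exact ⟨b, hb, a, ha, hab.symm⟩⟩

/-- `B` is a family of branch sets of a `K₅`-minor of `G`. -/
def K5M (G : SimpleGraph V) (B : Fin 5 → Set V) : Prop :=
  (∀ i, CS G (B i)) ∧ ∀ i j, i ≠ j → Tch G (B i) (B j)

lemma k5Free_iff {G : SimpleGraph V} : K5Free G ↔ ∀ B, ¬ K5M G B := by
  constructor
  · rintro h B ⟨h1, h2⟩
    exact h ⟨B, fun u => (h1 u).1, fun u v huv => (h2 u v huv).1, fun u => cs_iff_connected.1 (h1 u),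
      fun u v huv => (h2 u v huv.ne).2⟩
  · rintro h ⟨B, h1, h2, h3, h4⟩
    exact h B ⟨fun i => cs_iff_connected.2 (h3 i), fun i j hij => ⟨h2 i j hij, h4 i j hij⟩⟩

lemma K5Free.contra {G : SimpleGraph V} (hK : K5Free G) {A B C D E : Set V}
    (hA : CS G A) (hB : CS G B) (hC : CS G C) (hD : CS G D) (hE : CS G E)
    (hAB : Tch G A B) (hAC : Tch G A C) (hAD : Tch G A D) (hAE : Tch G A E)
    (hBC : Tch G B C) (hBD : Tch G B D) (hBE : Tch G B E)
    (hCD : Tch G C D) (hCE : Tch G C E) (hDE : Tch G D E) : False := by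
  refine k5Free_iff.1 hK ![A, B, C, D, E] ⟨?_, ?_⟩
  · intro i
    fin_cases i <;> assumption
  · intro i j hij
    fin_cases i <;> fin_cases j <;>
      first
      | exact absurd rfl hij
      | assumption
      | (apply Tch.symm; assumption)

/-- `K₅`-minor-freeness passes to graphs mapping injectively and edge-preservingly. -/
lemma K5Free.of_inj {W : Type} {G : SimpleGraph V} {H : SimpleGraph W} (hK : K5Free G)
    (f : W → V) (hf : Function.Injective f) (hadj : ∀ a b, H.Adj a b → G.Adj (f a) (f b)) :
    K5Free H := by
  rw [k5Free_iff] at hK ⊢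
  rintro B ⟨h1, h2⟩
  refine hK (fun i => f '' B i) ⟨fun i => (h1 i).image f fun a _ b _ h => .inr (hadj a b h), ?_⟩
  intro i j hij
  obtain ⟨hd, a, ha, b, hb, hab⟩ := h2 i j hij
  exact ⟨(Set.disjoint_image_iff hf).2 hd, f a, ⟨a, ha, rfl⟩, f b, ⟨b, hb, rfl⟩, hadj a b hab⟩

/-! ### Full separators and their completion -/

/-- The set of neighbours of `A` outside `A`. -/
def nb (G : SimpleGraph V) (A : Set V) : Set V := {v | v ∉ A ∧ ∃ a ∈ A, G.Adj a v}

/-- `A` and `B` are disjoint and have no edge between them. -/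
def Anti (G : SimpleGraph V) (A B : Set V) : Prop :=
  Disjoint A B ∧ ∀ a ∈ A, ∀ b ∈ B, ¬ G.Adj a b

/-- `A` and `B` are two different full components of the complement of the separator
`nb G A = nb G B`, i.e. this set is a minimal separator of `G`. -/
structure FP (G : SimpleGraph V) (A B : Set V) : Prop where
  cA : CS G A
  cB : CS G B
  disj : Disjoint A B
  eq : nb G A = nb G B

/-- Two non-adjacent vertices attached to two mutually separated connected sets have the same
colour and a common neighbour of the other colour in the first of the two sets. It is satisfied
by chordal graphs (where the situation never occurs) and by bipartite graphs without induced cycles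
of length at least six, with their bipartition as the colouring. -/
def StarC (G : SimpleGraph V) (c : V → Bool) : Prop :=
  ∀ s t X Y, s ≠ t → ¬ G.Adj s t → CS G X → CS G Y → Anti G X Y →
    s ∈ nb G X → t ∈ nb G X → s ∈ nb G Y → t ∈ nb G Y →
    c s = c t ∧ ∃ x ∈ X, G.Adj x s ∧ G.Adj x t ∧ c x ≠ c s

/-- The graph `G` with all edges inside `S` added. -/
def complG (G : SimpleGraph V) (S : Set V) : SimpleGraph V where
  Adj u v := u ≠ v ∧ (G.Adj u v ∨ (u ∈ S ∧ v ∈ S))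
  symm := ⟨fun _ _ h => ⟨h.1.symm, h.2.imp (fun h => h.symm) fun h => ⟨h.2, h.1⟩⟩⟩
  loopless := ⟨fun _ h => h.1 rfl⟩

section sep
variable {G : SimpleGraph V} {A B C D S X Y : Set V} {c : V → Bool}

lemma Anti.symm (h : Anti G X Y) : Anti G Y X :=
  ⟨h.1.symm, fun a ha b hb hab => h.2 b hb a ha hab.symm⟩

lemma FP.symm (h : FP G A B) : FP G B A := ⟨h.cB, h.cA, h.disj.symm, h.eq.symm⟩

lemma FP.not_adj (h : FP G A B) {a b : V} (ha : a ∈ A) (hb : b ∈ B) : ¬ G.Adj a b := by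
  intro hab
  have : b ∈ nb G A := ⟨fun hbA => Set.disjoint_left.1 h.disj hbA hb, a, ha, hab⟩
  rw [h.eq] at this
  exact this.1 hb

lemma FP.anti (h : FP G A B) : Anti G A B := ⟨h.disj, fun _ ha _ hb => h.not_adj ha hb⟩

lemma FP.notMem_left (h : FP G A B) {s : V} (hs : s ∈ nb G A) : s ∉ B := by
  rw [h.eq] at hs; exact hs.1

lemma FP.subset_compl (h : FP G A B) : A ⊆ (nb G A)ᶜ := fun _ ha hn => hn.1 ha

lemma complG_adj_of_notMem {u v : V} (h : (complG G S).Adj u v) (hu : u ∉ S ∨ v ∉ S) :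
    G.Adj u v := by
  rcases h.2 with h | h
  · exact h
  · tauto

lemma le_complG : G ≤ complG G S := fun _ _ h => ⟨h.ne, .inl h⟩

/-- A full component different from a given component `C` of the complement of the separator. -/
lemma FP.other (h : FP G A B) {x : V} (C : Set V) (hC : C = compIn G (nb G A)ᶜ x)
    (hx : x ∉ nb G A) :
    ∃ B', CS G B' ∧ nb G B' = nb G A ∧ Disjoint B' C ∧ (∀ b ∈ B', ∀ y ∈ C, ¬ G.Adj b y) ∧
      (B' = A ∨ B' = B) := by
  have hCS : C ⊆ (nb G A)ᶜ := hC ▸ compIn_subset hx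
  have key : ∀ B', CS G B' → nb G B' = nb G A → Disjoint B' C →
      (∀ b ∈ B', ∀ y ∈ C, ¬ G.Adj b y) := by
    intro B' _ hn hd b hb y hy hby
    have : y ∈ nb G B' := ⟨fun h => Set.disjoint_left.1 hd h hy, b, hb, hby⟩
    rw [hn] at this
    exact hCS hy this
  by_cases hAC : Disjoint A C
  · exact ⟨A, h.cA, rfl, hAC, key A h.cA rfl hAC, .inl rfl⟩
  · obtain ⟨p, hpA, hpC⟩ := Set.not_disjoint_iff.1 hAC
    have hCc : CS G C := hC ▸ compIn_cs G _ _
    have hsub : C ⊆ A := hCc.subset_closed hpC hpA fun a _ haA b hb hab => by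
      by_contra hbA
      exact hCS hb ⟨hbA, a, haA, hab⟩
    have hd : Disjoint B C := (h.disj.mono_left hsub).symm
    exact ⟨B, h.cB, h.eq.symm, hd, key B h.cB h.eq.symm hd, .inr rfl⟩

/-- The step of `StarC.complG` in which `X` meets the completed separator. Its part in the separator and
in the component containing `Y` becomes connected in `G` after adding another full component. -/
lemma StarC.complG_aux (hFP : FP G A B) {s t : V} (hS : S = nb G A)
    (hst' : s ∉ S ∨ t ∉ S)
    (hX : CS (complG G S) X) (hY : CS (complG G S) Y) (hXY : Anti (complG G S) X Y)
    (hsX : s ∈ nb (complG G S) X) (htX : t ∈ nb (complG G S) X)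
    (hsY : s ∈ nb (complG G S) Y) (htY : t ∈ nb (complG G S) Y) (hXS : (X ∩ S).Nonempty) :
    ∃ X', CS G X' ∧ CS G Y ∧ Anti G X' Y ∧ s ∈ nb G X' ∧ t ∈ nb G X' ∧ s ∈ nb G Y ∧ t ∈ nb G Y ∧
      ∀ x ∈ X', G.Adj x s → G.Adj x t → x ∈ X := by
  obtain ⟨p, hpX, hpS⟩ := hXS
  have hYS : ∀ y ∈ Y, y ∉ S := fun y hy hyS => by
    refine hXY.2 p hpX y hy ⟨?_, .inr ⟨hpS, hyS⟩⟩
    rintro rfl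
    exact Set.disjoint_left.1 hXY.1 hpX hy
  have hYG : CS G Y := hY.of_adj fun a ha b hb hab => complG_adj_of_notMem hab (.inl (hYS a ha))
  obtain ⟨y0, hy0⟩ := hY.1
  set C := compIn G Sᶜ y0 with hC
  have hCS : C ⊆ Sᶜ := compIn_subset (hYS y0 hy0)
  have hYC : Y ⊆ C := hYG.subset_compIn hYS hy0
  obtain ⟨B', hB', hnB', hd, hna, -⟩ := hFP.other C (hS ▸ hC) (hS ▸ hYS y0 hy0)
  rw [← hS] at hnB'
  have hnbY : ∀ u, u ∈ nb (complG G S) Y → u ∈ nb G Y := by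
    rintro u ⟨hu, y, hy, hyu⟩
    exact ⟨hu, y, hy, complG_adj_of_notMem hyu (.inl (hYS y hy))⟩
  have hCcl : ∀ a ∈ C, ∀ b, G.Adj a b → b ∈ C ∨ b ∈ S := by
    intro a ha b hab
    by_cases hb : b ∈ S
    · exact .inr hb
    · exact .inl (compIn_closed ha hb hab)
  have hCS' : ∀ u, u ∈ nb (complG G S) Y → u ∈ C ∨ u ∈ S := by
    intro u hu
    obtain ⟨-, y, hy, hyu⟩ := hnbY u hu
    exact hCcl y (hYC hy) u hyu
  set X' := (X ∩ (C ∪ S)) ∪ B' with hX'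
  obtain ⟨b0, hb0⟩ := hB'.1
  have hBS : ∀ b ∈ B', b ∉ S := fun b hb hbS => by rw [← hnB'] at hbS; exact hbS.1 hb
  set T := compIn G X' b0
  have hBT : B' ⊆ T := hB'.subset_compIn Set.subset_union_right hb0
  have hST : ∀ x ∈ X, x ∈ S → x ∈ T := by
    intro x hx hxS
    have : x ∈ nb G B' := hnB' ▸ hxS
    obtain ⟨-, b, hb, hbx⟩ := this
    exact compIn_closed (hBT hb) (.inl ⟨hx, .inr hxS⟩) hbx
  have hXT : X ⊆ {x | x ∈ T ∨ x ∉ C ∪ S} := by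
    refine hX.subset_closed hpX (.inl (hST p hpX hpS)) ?_
    intro a ha haT b hb hab
    by_cases hbS : b ∈ S
    · exact .inl (hST b hb hbS)
    by_cases hbC : b ∈ C
    · have hab' := complG_adj_of_notMem hab (.inr hbS)
      have := hCcl b hbC a hab'.symm
      rcases haT with haT | haT
      · exact .inl (compIn_closed haT (.inl ⟨hb, .inl hbC⟩) hab')
      · exact absurd this haT
    · right; simp [hbS, hbC]
  have hX'T : X' = T := by
    apply Set.Subset.antisymm
    · rintro x (⟨hx, hx'⟩ | hx)
      · rcases hXT hx with h | h
        · exact h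
        · exact absurd hx' h
      · exact hBT hx
    · exact compIn_subset (.inr hb0)
  have hnX' : ∀ u, u ∈ nb (complG G S) Y → u ∈ nb (complG G S) X → u ∈ nb G X' := by
    intro u huY huX
    have huCS := hCS' u huY
    refine ⟨?_, ?_⟩
    · rintro (h | h)
      · exact huX.1 h.1
      · rcases huCS with h' | h'
        · exact Set.disjoint_left.1 hd h h'
        · exact hBS u h h'
    · by_cases huS : u ∈ S
      · rw [← hnB'] at huS
        obtain ⟨-, b, hb, hbu⟩ := huS
        exact ⟨b, .inr hb, hbu⟩
      · obtain ⟨-, x, hx, hxu⟩ := huX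
        have hxu' := complG_adj_of_notMem hxu (.inr huS)
        exact ⟨x, .inl ⟨hx, hCcl u (by tauto) x hxu'.symm⟩, hxu'⟩
  refine ⟨X', hX'T ▸ compIn_cs G _ _, hYG, ⟨?_, ?_⟩, hnX' s hsY hsX, hnX' t htY htX,
    hnbY s hsY, hnbY t htY, ?_⟩
  · rw [Set.disjoint_left]
    rintro x (hx | hx) hxY
    · exact Set.disjoint_left.1 hXY.1 hx.1 hxY
    · exact Set.disjoint_left.1 hd hx (hYC hxY)
  · rintro x (hx | hx) y hy hxy
    · exact hXY.2 x hx.1 y hy (le_complG hxy)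
    · exact hna x hx y (hYC hy) hxy
  · rintro x (hx | hx) hxs hxt
    · exact hx.1
    · exfalso
      have h1 := hCS' s hsY
      have h2 := hCS' t htY
      rcases hst' with h | h
      · exact hna x hx s (by tauto) hxs
      · exact hna x hx t (by tauto) hxt

/-- Completing a minimal separator preserves `StarC`. -/
lemma StarC.complG (h : StarC G c) (hFP : FP G A B) (hS : S = nb G A) : StarC (complG G S) c := by
  intro s t X Y hne hst hX hY hXY hsX htX hsY htY
  have hst1 : ¬ G.Adj s t := fun h => hst (le_complG h)
  have hst2 : s ∉ S ∨ t ∉ S := by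
    by_contra! hc
    exact hst ⟨hne, .inr hc⟩
  by_cases hXS : (X ∩ S).Nonempty
  · obtain ⟨X', h1, h2, h3, h4, h5, h6, h7, h8⟩ :=
      StarC.complG_aux hFP hS hst2 hX hY hXY hsX htX hsY htY hXS
    obtain ⟨hc, x, hx, hxs, hxt, hcx⟩ := h s t X' Y hne hst1 h1 h2 h3 h4 h5 h6 h7
    exact ⟨hc, x, h8 x hx hxs hxt, le_complG hxs, le_complG hxt, hcx⟩
  by_cases hYS : (Y ∩ S).Nonempty
  · obtain ⟨Y', h1, h2, h3, h4, h5, h6, h7, h8⟩ :=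
      StarC.complG_aux hFP hS hst2 hY hX hXY.symm hsY htY hsX htX hYS
    obtain ⟨hc, x, hx, hxs, hxt, hcx⟩ := h s t X Y' hne hst1 h2 h1 h3.symm h6 h7 h4 h5
    exact ⟨hc, x, hx, le_complG hxs, le_complG hxt, hcx⟩
  · have key : ∀ Z : Set V, ¬ (Z ∩ S).Nonempty → CS (_root_.complG G S) Z →
        CS G Z ∧ ∀ u ∈ nb (_root_.complG G S) Z, u ∈ nb G Z := by
      intro Z hZ hZc
      have hZ' : ∀ z ∈ Z, z ∉ S := fun z hz hzS => hZ ⟨z, hz, hzS⟩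
      refine ⟨hZc.of_adj fun a ha b _ hab => complG_adj_of_notMem hab (.inl (hZ' a ha)), ?_⟩
      rintro u ⟨hu, z, hz, hzu⟩
      exact ⟨hu, z, hz, complG_adj_of_notMem hzu (.inl (hZ' z hz))⟩
    obtain ⟨hXc, hXn⟩ := key X hXS hX
    obtain ⟨hYc, hYn⟩ := key Y hYS hY
    obtain ⟨hc, x, hx, hxs, hxt, hcx⟩ := h s t X Y hne hst1 hXc hYc
      ⟨hXY.1, fun a ha b hb hab => hXY.2 a ha b hb (le_complG hab)⟩
      (hXn s hsX) (hXn t htX) (hYn s hsY) (hYn t htY)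
    exact ⟨hc, x, hx, le_complG hxs, le_complG hxt, hcx⟩

/-- Edges from `z` to other neighbours of a connected set `D` can be removed from a `K₅`-model
avoiding `D`, by adding `D` to the branch set of `z`. -/
lemma K5M.star {H H' : SimpleGraph V} {B : Fin 5 → Set V} (hB : K5M H' B) {D : Set V} {z : V}
    (hD : CS H D) (hBD : ∀ i, Disjoint (B i) D)
    (hadj : ∀ a b, H'.Adj a b → H.Adj a b ∨ ((∃ d ∈ D, H.Adj d z) ∧
      ((a = z ∧ ∃ d ∈ D, H.Adj d b) ∨ (b = z ∧ ∃ d ∈ D, H.Adj d a)))) :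
    ∃ B', K5M H B' ∧ ∀ i, B' i ⊆ B i ∪ D := by
  classical
  by_cases hz : ∃ d ∈ D, H.Adj d z
  swap
  · have hle : ∀ a b, H'.Adj a b → H.Adj a b := fun a b hab => (hadj a b hab).resolve_right
      fun h => hz h.1
    refine ⟨B, ⟨fun i => (hB.1 i).of_adj fun a _ b _ => hle a b, fun i j hij => ?_⟩,
      fun i => Set.subset_union_left⟩
    obtain ⟨hd, a, ha, b, hb, hab⟩ := hB.2 i j hij
    exact ⟨hd, a, ha, b, hb, hle a b hab⟩
  obtain ⟨d, hd, hdz⟩ := hz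
  have hsub : ∀ i, B i ⊆ (if z ∈ B i then B i ∪ D else B i) := by
    intro i; split_ifs
    · exact Set.subset_union_left
    · exact subset_rfl
  refine ⟨fun i => if z ∈ B i then B i ∪ D else B i, ⟨fun i => ?_, fun i j hij => ⟨?_, ?_⟩⟩, ?_⟩
  · beta_reduce
    split_ifs with hzi
    · set T := compIn H (B i ∪ D) z
      have hdT : d ∈ T := compIn_closed compIn_self (.inr hd) hdz.symm
      have hDT : D ⊆ T := hD.subset_closed hd hdT fun a _ haT b hb hab =>
        compIn_closed haT (.inr hb) hab
      have hBT : B i ⊆ T := (hB.1 i).subset_closed hzi compIn_self fun a ha haT b hb hab => by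
        rcases hadj a b hab with h | ⟨-, ⟨-, e, he, heb⟩ | ⟨rfl, -⟩⟩
        · exact compIn_closed haT (.inl hb) h
        · exact compIn_closed (hDT he) (.inl hb) heb
        · exact compIn_self
      have : B i ∪ D = T := Set.Subset.antisymm (Set.union_subset hBT hDT)
        (compIn_subset (.inl hzi))
      exact this ▸ compIn_cs H _ _
    · refine (hB.1 i).of_adj fun a ha b hb hab => ?_
      rcases hadj a b hab with h | ⟨-, ⟨rfl, -⟩ | ⟨rfl, -⟩⟩
      · exact h
      · exact absurd ha hzi
      · exact absurd hb hzi
  · have h0 := (hB.2 i j hij).1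
    have hi := hBD i
    have hj := hBD j
    beta_reduce
    split_ifs with h1 h2 h2
    · exact absurd h2 (Set.disjoint_left.1 h0 h1)
    · exact Set.disjoint_union_left.2 ⟨h0, hj.symm⟩
    · exact Set.disjoint_union_right.2 ⟨h0, hi⟩
    · exact h0
  · obtain ⟨-, a, ha, b, hb, hab⟩ := hB.2 i j hij
    rcases hadj a b hab with h | ⟨-, ⟨rfl, e, he, h⟩ | ⟨rfl, e, he, h⟩⟩
    · exact ⟨a, hsub i ha, b, hsub j hb, h⟩
    · exact ⟨e, by simp [ha, he], b, hsub j hb, h⟩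
    · exact ⟨a, hsub i ha, e, by simp [hb, he], h.symm⟩
  · intro i
    beta_reduce
    split_ifs
    · exact subset_rfl
    · exact Set.subset_union_left

/-- A minimal separator with at most three vertices along which a `K₅`-minor-free graph can be
decomposed: it contains an edge (or has at most two vertices), or it has three full components. -/
def GoodSep (G : SimpleGraph V) (A B : Set V) : Prop :=
  FP G A B ∧ ∃ z1 z2 z3, nb G A ⊆ {z1, z2, z3} ∧
    ((z1 = z2 ∨ G.Adj z1 z2) ∨ ∃ D, FP G A D ∧ Disjoint B D)

/-- A `K₅`-model in `G` completed along `S` can be moved into one component `C` together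
with `S`. -/
lemma K5M.restrict {M : Fin 5 → Set V} (hM : K5M (complG G S) M) {z1 z2 z3 : V}
    (hS : S ⊆ {z1, z2, z3}) :
    ∃ (x : V) (M' : Fin 5 → Set V), x ∉ S ∧ K5M (complG G S) M' ∧
      ∀ i, M' i ⊆ compIn G Sᶜ x ∪ S := by
  have h0 : ∃ i, ∀ y ∈ M i, y ∉ S := by
    by_contra! hc
    choose f hfM hfS using hc
    have hinj : Function.Injective f := by
      intro i j hij
      by_contra hne
      exact Set.disjoint_left.1 (hM.2 i j hne).1 (hfM i) (hij ▸ hfM j)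
    classical
    have h5 : (Finset.univ.image f).card = 5 := by
      rw [Finset.card_image_of_injective _ hinj]; rfl
    have h3 : Finset.univ.image f ⊆ {z1, z2, z3} := by
      intro v hv
      obtain ⟨i, -, rfl⟩ := Finset.mem_image.1 hv
      simpa using hS (hfS i)
    have := Finset.card_le_card h3
    have := Finset.card_le_three (a := z1) (b := z2) (c := z3)
    omega
  obtain ⟨i0, hi0⟩ := h0
  obtain ⟨x, hx⟩ := (hM.1 i0).1
  set C := compIn G Sᶜ x with hC
  have hcl : ∀ a ∈ C, ∀ b, (complG G S).Adj a b → b ∈ C ∨ b ∈ S := by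
    intro a ha b hab
    by_cases hb : b ∈ S
    · exact .inr hb
    · exact .inl (compIn_closed ha hb (complG_adj_of_notMem hab (.inr hb)))
  have havoid : ∀ i, (∀ y ∈ M i, y ∉ S) → ∀ y ∈ M i, y ∈ C → M i ⊆ C := by
    intro i hi y hy hyC
    refine (hM.1 i).subset_closed hy hyC fun a ha haC b hb hab => ?_
    exact (hcl a haC b hab).resolve_right (hi b hb)
  have hsub : ∀ i, (∀ y ∈ M i, y ∉ S) → M i ⊆ C := by
    intro i hi
    by_cases h : i = i0
    · subst h
      exact havoid i hi x hx compIn_self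
    · obtain ⟨-, a, ha, b, hb, hab⟩ := hM.2 i0 i (Ne.symm h)
      have haC := havoid i0 hi0 x hx compIn_self ha
      exact havoid i hi b hb ((hcl a haC b hab).resolve_right (hi b hb))
  have hCS : C ⊆ Sᶜ := compIn_subset (hi0 x hx)
  refine ⟨x, fun i => M i ∩ (C ∪ S), hi0 x hx, ⟨fun i => ?_, fun i j hij => ⟨?_, ?_⟩⟩,
    fun i => Set.inter_subset_right⟩
  · by_cases hi : ∀ y ∈ M i, y ∉ S
    · have : M i ∩ (C ∪ S) = M i := Set.inter_eq_left.2 ((hsub i hi).trans Set.subset_union_left)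
      beta_reduce
      rw [this]; exact hM.1 i
    · push Not at hi
      obtain ⟨p, hp, hpS⟩ := hi
      set T := compIn (complG G S) (M i ∩ (C ∪ S)) p
      have hST : ∀ y ∈ M i, y ∈ S → y ∈ T := by
        intro y hy hyS
        by_cases hyp : p = y
        · exact hyp ▸ compIn_self
        · exact compIn_closed compIn_self ⟨hy, .inr hyS⟩ ⟨hyp, .inr ⟨hpS, hyS⟩⟩
      have hMT : M i ⊆ {y | y ∈ T ∨ y ∉ C ∪ S} := by
        refine (hM.1 i).subset_closed hp (.inl compIn_self) fun a ha haT b hb hab => ?_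
        by_cases hbS : b ∈ S
        · exact .inl (hST b hb hbS)
        by_cases hbC : b ∈ C
        · rcases haT with haT | haT
          · exact .inl (compIn_closed haT ⟨hb, .inl hbC⟩ hab)
          · exact absurd (hcl b hbC a hab.symm) haT
        · right; simp [hbS, hbC]
      have : M i ∩ (C ∪ S) = T := by
        apply Set.Subset.antisymm
        · rintro y ⟨hy, hy'⟩
          exact (hMT hy).resolve_right (not_not.2 hy')
        · exact compIn_subset ⟨hp, .inr hpS⟩
      beta_reduce
      rw [this]; exact compIn_cs _ _ _
  · exact (hM.2 i j hij).1.mono Set.inter_subset_left Set.inter_subset_left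
  · by_cases hi : ∀ y ∈ M i, y ∉ S
    · obtain ⟨-, a, ha, b, hb, hab⟩ := hM.2 i j hij
      have haC := hsub i hi ha
      exact ⟨a, ⟨ha, .inl haC⟩, b, ⟨hb, hcl a haC b hab⟩, hab⟩
    by_cases hj : ∀ y ∈ M j, y ∉ S
    · obtain ⟨-, a, ha, b, hb, hab⟩ := hM.2 i j hij
      have hbC := hsub j hj hb
      exact ⟨a, ⟨ha, hcl b hbC a hab.symm⟩, b, ⟨hb, .inl hbC⟩, hab⟩
    push Not at hi hj
    obtain ⟨p, hp, hpS⟩ := hi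
    obtain ⟨q, hq, hqS⟩ := hj
    refine ⟨p, ⟨hp, .inr hpS⟩, q, ⟨hq, .inr hqS⟩, ?_, .inr ⟨hpS, hqS⟩⟩
    rintro rfl
    exact Set.disjoint_left.1 (hM.2 i j hij).1 hp hq

/-- Completing a good separator preserves `K₅`-minor-freeness. -/
lemma K5Free.complG (hK : K5Free G) (hg : GoodSep G A B) (hS : S = nb G A) :
    K5Free (complG G S) := by
  obtain ⟨hFP, z1, z2, z3, hz, hcase⟩ := hg
  rw [k5Free_iff]
  intro M0 hM0
  obtain ⟨x, M, hxS, hM, hMC⟩ := hM0.restrict (hS ▸ hz)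
  set C := compIn G Sᶜ x with hC
  have hCS : C ⊆ Sᶜ := compIn_subset hxS
  rw [← hS] at hz
  have hdis : ∀ D, Disjoint D C → nb G D = S → ∀ i, Disjoint (M i) D := by
    intro D hD hn i
    refine Disjoint.mono_left (hMC i) (Set.disjoint_union_left.2 ⟨hD.symm, ?_⟩)
    rw [Set.disjoint_left]
    intro s hs hsD
    rw [← hn] at hs
    exact hs.1 hsD
  have hSadj : ∀ D, nb G D = S → ∀ s ∈ S, ∃ d ∈ D, G.Adj d s := by
    intro D hn s hs
    rw [← hn] at hs; exact hs.2
  rcases hcase with hcase | ⟨D, hFD, hBD⟩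
  · obtain ⟨D, hD, hn, hd, -, -⟩ := hFP.other C (hS ▸ hC) (hS ▸ hxS)
    rw [← hS] at hn
    obtain ⟨M', hM', -⟩ := hM.star (H := G) (z := z3) hD (hdis D hd hn) (by
      rintro a b ⟨hab, h | ⟨ha, hb⟩⟩
      · exact .inl h
      have ha' := hz ha
      have hb' := hz hb
      simp only [Set.mem_insert_iff, Set.mem_singleton_iff] at ha' hb'
      by_cases ha3 : a = z3
      · subst ha3
        exact .inr ⟨hSadj D hn _ ha, .inl ⟨rfl, hSadj D hn _ hb⟩⟩
      by_cases hb3 : b = z3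
      · subst hb3
        exact .inr ⟨hSadj D hn _ hb, .inr ⟨rfl, hSadj D hn _ ha⟩⟩
      left
      rcases hcase with rfl | hcase
      · exact absurd (show a = b by grind) hab
      · rcases ha' with rfl | rfl | rfl <;> rcases hb' with rfl | rfl | rfl <;>
          first
          | exact absurd rfl hab
          | exact absurd rfl ha3
          | exact absurd rfl hb3
          | exact hcase
          | exact hcase.symm)
    exact k5Free_iff.1 hK M' hM'
  · have h2 : ∃ D1 D2, CS G D1 ∧ CS G D2 ∧ nb G D1 = S ∧ nb G D2 = S ∧ Disjoint D1 D2 ∧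
        Disjoint D1 C ∧ Disjoint D2 C := by
      have h2 : ∀ D1 D2, FP G D1 D2 → nb G D1 = S → Disjoint D1 C ∨ Disjoint D2 C := by
        intro D1 D2 h hn
        obtain ⟨B', -, -, hd, -, rfl | rfl⟩ := h.other C (hn ▸ hC) (hn ▸ hxS)
        · exact .inl hd
        · exact .inr hd
      have hBD' : FP G B D := ⟨hFP.cB, hFD.cB, hBD, hFP.eq.symm.trans hFD.eq⟩
      have e1 := hFP.eq.symm.trans hS.symm
      have e2 := hFD.eq.symm.trans hS.symm
      have h12 := h2 A B hFP hS.symm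
      have h13 := h2 A D hFD hS.symm
      have h23 := h2 B D hBD' e1
      have cA := hFP.cA
      have cB := hFP.cB
      have cD := hFD.cB
      by_cases hA : Disjoint A C
      · rcases h23 with h | h
        · exact ⟨A, B, cA, cB, hS.symm, e1, hFP.disj, hA, h⟩
        · exact ⟨A, D, cA, cD, hS.symm, e2, hFD.disj, hA, h⟩
      · exact ⟨B, D, cB, cD, e1, e2, hBD, h12.resolve_left hA, h13.resolve_left hA⟩
    obtain ⟨D1, D2, c1, c2, n1, n2, d12, d1, d2⟩ := h2
    -- the intermediate graph contains only the added edges at `z1`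
    let H : SimpleGraph V :=
      { Adj := fun u v => u ≠ v ∧ (G.Adj u v ∨ (u ∈ S ∧ v ∈ S ∧ (u = z1 ∨ v = z1)))
        symm := ⟨fun u v h => ⟨h.1.symm, h.2.imp (fun h => h.symm) (by tauto)⟩⟩
        loopless := ⟨fun _ h => h.1 rfl⟩ }
    have hGH : ∀ a b, G.Adj a b → H.Adj a b := fun a b h => ⟨h.ne, .inl h⟩
    obtain ⟨M', hM', hM's⟩ := hM.star (H := H) (z := z2) (c2.of_adj fun a _ b _ => hGH a b)
      (hdis D2 d2 n2) (by
      rintro a b ⟨hab, h | ⟨ha, hb⟩⟩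
      · exact .inl (hGH _ _ h)
      have ha' := hz ha
      have hb' := hz hb
      simp only [Set.mem_insert_iff, Set.mem_singleton_iff] at ha' hb'
      by_cases h1 : a = z1 ∨ b = z1
      · exact .inl ⟨hab, .inr ⟨ha, hb, h1⟩⟩
      right
      obtain ⟨p, hp, hpa⟩ := hSadj D2 n2 _ ha
      obtain ⟨q, hq, hqb⟩ := hSadj D2 n2 _ hb
      by_cases h2 : a = z2
      · subst h2
        exact ⟨⟨p, hp, hGH _ _ hpa⟩, .inl ⟨rfl, q, hq, hGH _ _ hqb⟩⟩
      by_cases h3 : b = z2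
      · subst h3
        exact ⟨⟨q, hq, hGH _ _ hqb⟩, .inr ⟨rfl, p, hp, hGH _ _ hpa⟩⟩
      · exact absurd (show a = b by grind) hab)
    obtain ⟨M'', hM'', -⟩ := hM'.star (H := G) (z := z1) c1 (fun i =>
      Disjoint.mono_left (hM's i) (Set.disjoint_union_left.2 ⟨hdis D1 d1 n1 i, d12.symm⟩)) (by
      rintro a b ⟨hab, h | ⟨ha, hb, h1⟩⟩
      · exact .inl h
      right
      rcases h1 with rfl | rfl
      · exact ⟨hSadj D1 n1 _ ha, .inl ⟨rfl, hSadj D1 n1 _ hb⟩⟩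
      · exact ⟨hSadj D1 n1 _ hb, .inr ⟨rfl, hSadj D1 n1 _ ha⟩⟩)
    exact k5Free_iff.1 hK M'' hM''

end sep

/-- `StarC` passes to induced subgraphs. -/
lemma StarC.comap {W : Type} {G : SimpleGraph V} {c : V → Bool} (h : StarC G c) (f : W → V)
    (hf : Function.Injective f) : StarC (G.comap f) (c ∘ f) := by
  intro s t X Y hne hst hX hY hXY hsX htX hsY htY
  have hcs : ∀ Z, CS (G.comap f) Z → CS G (f '' Z) := fun Z hZ =>
    hZ.image f fun a _ b _ hab => .inr hab
  have hnb : ∀ Z u, u ∈ nb (G.comap f) Z → f u ∈ nb G (f '' Z) := by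
    rintro Z u ⟨hu, z, hz, hzu⟩
    refine ⟨?_, f z, ⟨z, hz, rfl⟩, hzu⟩
    rintro ⟨w, hw, hwu⟩
    exact hu (hf hwu ▸ hw)
  obtain ⟨hc, _, ⟨x, hx, rfl⟩, hxs, hxt, hcx⟩ := h (f s) (f t) (f '' X) (f '' Y) (hf.ne hne) hst
    (hcs X hX) (hcs Y hY) ⟨(Set.disjoint_image_iff hf).2 hXY.1, by
      rintro _ ⟨a, ha, rfl⟩ _ ⟨b, hb, rfl⟩ hab
      exact hXY.2 a ha b hb hab⟩ (hnb X s hsX) (hnb X t htX) (hnb Y s hsY) (hnb Y t htY)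
  exact ⟨hc, x, hx, hxs, hxt, hcx⟩

/-! ### Separators of graphs satisfying `StarC` -/

lemma Tch.of {G : SimpleGraph V} {A B : Set V} (a b : V) (hab : G.Adj a b) (ha : a ∈ A)
    (hb : b ∈ B) (hd : ∀ x ∈ A, x ∉ B) : Tch G A B :=
  ⟨Set.disjoint_left.2 hd, a, ha, b, hb, hab⟩

lemma FP.tch_left {G : SimpleGraph V} {A B T : Set V} (h : FP G A B) (s : V) (hs : s ∈ nb G A)
    (hsT : s ∈ T) (hd : ∀ x ∈ T, x ∉ A) : Tch G A T := by
  obtain ⟨-, a, ha, has⟩ := hs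
  exact Tch.of a s has ha hsT fun x hx hxT => hd x hxT hx

/-- A connected set `R` attached to all neighbours of a connected set `K` turns `nb G K` into a
minimal separator. -/
lemma exists_FP {G : SimpleGraph V} {K R : Set V} (hK : CS G K) (hR : CS G R)
    (hRK : ∀ r ∈ R, r ∉ K ∧ r ∉ nb G K) (hadj : ∀ s ∈ nb G K, ∃ r ∈ R, G.Adj r s) :
    ∃ B, FP G K B ∧ R ⊆ B ∧ B = compIn G (K ∪ nb G K)ᶜ hR.1.some := by
  have hr := hR.1.some_mem
  have hRU : R ⊆ (K ∪ nb G K)ᶜ := fun x hx h => h.elim (hRK x hx).1 (hRK x hx).2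
  set B := compIn G (K ∪ nb G K)ᶜ hR.1.some with hB
  have hBU : B ⊆ (K ∪ nb G K)ᶜ := compIn_subset (hRU hr)
  have hRB : R ⊆ B := hR.subset_compIn hRU hr
  refine ⟨B, ⟨hK, compIn_cs _ _ _, Set.disjoint_left.2 fun x hx hxB => hBU hxB (.inl hx), ?_⟩,
    hRB, rfl⟩
  ext u
  constructor
  · intro hu
    obtain ⟨r, hr, hru⟩ := hadj u hu
    exact ⟨fun h => hBU h (.inr hu), r, hRB hr, hru⟩
  · rintro ⟨huB, b, hb, hbu⟩
    by_contra hu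
    by_cases huK : u ∈ K
    · exact hBU hb (.inr ⟨fun h => hBU hb (.inl h), u, huK, hbu.symm⟩)
    · exact huB (compIn_closed hb (fun h => h.elim huK hu) hbu)

/-- Two non-adjacent vertices `a`, `b` are separated by a minimal separator close to `a`. -/
lemma closeSep {G : SimpleGraph V} {a b : V} (hne : a ≠ b) (hab : ¬ G.Adj a b) :
    ∃ A D, FP G D A ∧ a ∈ A ∧ b ∈ D ∧ ∀ s ∈ nb G D, G.Adj a s := by
  set U : Set V := {v | v ≠ a ∧ ¬ G.Adj a v} with hU
  have hbU : b ∈ U := ⟨hne.symm, hab⟩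
  set D := compIn G U b
  have hDU : D ⊆ U := compIn_subset hbU
  have hn : ∀ s ∈ nb G D, G.Adj a s := by
    rintro s ⟨hs, d, hd, hds⟩
    by_contra has
    refine hs (compIn_closed hd ⟨?_, has⟩ hds)
    rintro rfl
    exact (hDU hd).2 hds.symm
  obtain ⟨A, hA, haA, -⟩ := exists_FP (K := D) (compIn_cs G U b) (CS.singleton a)
    (by rintro r rfl; exact ⟨fun h => (hDU h).1 rfl, fun h => (hn _ h).ne rfl⟩)
    (fun s hs => ⟨a, rfl, hn s hs⟩)
  exact ⟨A, D, hA, haA rfl, compIn_self, hn⟩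

/-- A Helly property. If `x ∈ X` has as many neighbours in `R` as possible and misses `q ∈ R`, an
exchange argument based on the hypothesis `H3` on independent triples yields a better vertex. -/
lemma helly [Finite V] {G : SimpleGraph V} {R X : Set V}
    (H1 : ∀ s ∈ R, ∀ t ∈ R, s ≠ t → ¬ G.Adj s t → ∃ x ∈ X, G.Adj x s ∧ G.Adj x t)
    (H2 : ∀ q ∈ R, ∀ t ∈ R, ∀ s ∈ R, ∀ u ∈ X, G.Adj q t → t ≠ s → ¬ G.Adj t s → G.Adj u t →
      G.Adj u s → G.Adj u q)
    (H3 : ∀ s ∈ R, ∀ t ∈ R, ∀ q ∈ R, ∀ x ∈ X, ∀ x' ∈ X, ∀ y ∈ X, s ≠ t → s ≠ q → t ≠ q →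
      ¬ G.Adj s t → ¬ G.Adj s q → ¬ G.Adj t q → G.Adj x s → G.Adj x t → G.Adj x' s →
      G.Adj x' q → G.Adj y t → G.Adj y q → G.Adj x q ∨ G.Adj x' t ∨ G.Adj y s)
    (H4 : ∀ s ∈ R, ∀ t ∈ R, ∀ q ∈ R, G.Adj s t → G.Adj q t → s = q)
    (H5 : ∃ s ∈ R, ∃ t ∈ R, s ≠ t ∧ ¬ G.Adj s t) :
    ∃ x ∈ X, ∀ r ∈ R, G.Adj x r := by
  obtain ⟨s0, hs0, t0, ht0, hne0, hst0⟩ := H5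
  obtain ⟨x0, hx0, hx0s, hx0t⟩ := H1 s0 hs0 t0 ht0 hne0 hst0
  obtain ⟨x, hx, hmax⟩ := Set.exists_max_image X (fun x => {r ∈ R | G.Adj x r}.ncard)
    (Set.toFinite X) ⟨x0, hx0⟩
  refine ⟨x, hx, fun q hq => by_contra fun hxq => ?_⟩
  set T : Set V := {r ∈ R | G.Adj x r} with hT
  have hT2 : 1 < T.ncard := by
    refine lt_of_lt_of_le ?_ (hmax x0 hx0)
    rw [Set.one_lt_ncard]
    exact ⟨s0, ⟨hs0, hx0s⟩, t0, ⟨ht0, hx0t⟩, hne0⟩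
  have hTq : ∀ t ∈ T, ¬ G.Adj t q := by
    intro t ht htq
    obtain ⟨t', ht', htt'⟩ := Set.exists_ne_of_one_lt_ncard hT2 t
    by_cases hadj : G.Adj t t'
    · have := H4 t' ht'.1 t ht.1 q hq hadj.symm htq.symm
      exact hxq (this ▸ ht'.2)
    · exact hxq (H2 q hq t ht.1 t' ht'.1 x hx htq.symm htt'.symm hadj ht.2 ht'.2)
  have hTne : ∀ t ∈ T, t ≠ q := by
    rintro t ht rfl; exact hxq ht.2
  obtain ⟨t1, ht1⟩ : T.Nonempty := Set.nonempty_of_ncard_ne_zero (by omega)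
  obtain ⟨x1, hx1, hx1t, hx1q⟩ := H1 t1 ht1.1 q hq (hTne t1 ht1) (hTq t1 ht1)
  obtain ⟨x', ⟨hx', hx'q⟩, hmax'⟩ := Set.exists_max_image {z ∈ X | G.Adj z q}
    (fun z => {r ∈ T | G.Adj z r}.ncard) (Set.toFinite _) ⟨x1, hx1, hx1q⟩
  by_cases hsub : ∀ t ∈ T, G.Adj x' t
  · have h1 : insert q T ⊆ {r ∈ R | G.Adj x' r} := by
      rintro r (rfl | hr)
      · exact ⟨hq, hx'q⟩
      · exact ⟨hr.1, hsub r hr⟩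
    have h2 := Set.ncard_le_ncard h1 (Set.toFinite _)
    rw [Set.ncard_insert_of_notMem (fun h => hxq h.2) (Set.toFinite _)] at h2
    have h3 := hmax x' hx'
    omega
  · push Not at hsub
    obtain ⟨t, ht, hx't⟩ := hsub
    obtain ⟨y, hy, hyt, hyq⟩ := H1 t ht.1 q hq (hTne t ht) (hTq t ht)
    have h1 : insert t {r ∈ T | G.Adj x' r} ⊆ {r ∈ T | G.Adj y r} := by
      rintro s (rfl | ⟨hs, hx's⟩)
      · exact ⟨ht, hyt⟩
      · refine ⟨hs, ?_⟩
        have hst : s ≠ t := by rintro rfl; exact hx't hx's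
        by_cases hadj : G.Adj s t
        · exact H2 s hs.1 t ht.1 q hq y hy hadj (hTne t ht) (hTq t ht) hyt hyq
        · have := H3 s hs.1 t ht.1 q hq x hx x' hx' y hy hst (hTne s hs) (hTne t ht) hadj
            (hTq s hs) (hTq t ht) hs.2 ht.2 hx's hx'q hyt hyq
          tauto
    have h2 := Set.ncard_le_ncard h1 (Set.toFinite _)
    rw [Set.ncard_insert_of_notMem (fun h => hx't h.2) (Set.toFinite _)] at h2
    have h3 := hmax' y ⟨hy, hyq⟩
    omega

/-- The setting of a minimal counterexample: no separator along which it can be decomposed. -/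
structure Red (G : SimpleGraph V) (c : V → Bool) : Prop where
  star : StarC G c
  k5 : K5Free G
  noSep : ∀ A B, ¬ GoodSep G A B

section red
variable {G : SimpleGraph V} {c : V → Bool} {A B D K R X : Set V}

lemma Red.r3 (h : Red G c) (hFP : FP G A B) {z1 z2 z3 : V} (hz : z1 = z2 ∨ G.Adj z1 z2)
    (hs : ∀ s ∈ nb G A, s = z1 ∨ s = z2 ∨ s = z3) : False :=
  h.noSep A B ⟨hFP, z1, z2, z3, fun s hsA => by simpa using hs s hsA, .inl hz⟩

lemma Red.r4 (h : Red G c) (hFP : FP G A B) (hFD : FP G A D) (hd : Disjoint B D) {z1 z2 z3 : V}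
    (hs : ∀ s ∈ nb G A, s = z1 ∨ s = z2 ∨ s = z3) : False :=
  h.noSep A B ⟨hFP, z1, z2, z3, fun s hsA => by simpa using hs s hsA, .inr ⟨D, hFD, hd⟩⟩

lemma Red.r3' (h : Red G c) (hK : CS G K) (hR : CS G R)
    (hRK : ∀ r ∈ R, r ∉ K ∧ r ∉ nb G K) (hadj : ∀ s ∈ nb G K, ∃ r ∈ R, G.Adj r s)
    {z1 z2 z3 : V} (hz : z1 = z2 ∨ G.Adj z1 z2)
    (hs : ∀ s ∈ nb G K, s = z1 ∨ s = z2 ∨ s = z3) : False := by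
  obtain ⟨B, hB, -, -⟩ := exists_FP hK hR hRK hadj
  exact h.r3 hB hz hs

/-- A connected set avoiding the separator and meeting a full component is contained in it. -/
lemma FP.subset_of_mem (h : FP G A B) (hX : CS G X) (hXS : ∀ x ∈ X, x ∉ nb G A) {x : V}
    (hx : x ∈ X) (hxA : x ∈ A) : X ⊆ A :=
  hX.subset_closed hx hxA fun a _ haA b hb hab => by
    by_contra hbA
    exact hXS b hb ⟨hbA, a, haA, hab⟩

/-- The conclusion of `StarC` for two vertices of a minimal separator. -/
lemma StarC.fp (h : StarC G c) (hFP : FP G A B) {s t : V} (hs : s ∈ nb G A) (ht : t ∈ nb G A)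
    (hne : s ≠ t) (hst : ¬ G.Adj s t) (hX : CS G X) (hXS : ∀ x ∈ X, x ∉ nb G A)
    (hsX : ∃ x ∈ X, G.Adj x s) (htX : ∃ x ∈ X, G.Adj x t) :
    c s = c t ∧ ∃ x ∈ X, G.Adj x s ∧ G.Adj x t ∧ c x ≠ c s := by
  have hsX' : s ∈ nb G X := ⟨fun h => hXS s h hs, hsX⟩
  have htX' : t ∈ nb G X := ⟨fun h => hXS t h ht, htX⟩
  by_cases hXA : ∃ x ∈ X, x ∈ A
  · obtain ⟨x, hx, hxA⟩ := hXA
    have hsub := hFP.subset_of_mem hX hXS hx hxA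
    refine h s t X B hne hst hX hFP.cB ⟨hFP.disj.mono_left hsub, fun a ha b hb =>
      hFP.not_adj (hsub ha) hb⟩ hsX' htX' (hFP.eq ▸ hs) (hFP.eq ▸ ht)
  · push Not at hXA
    refine h s t X A hne hst hX hFP.cA ⟨Set.disjoint_left.2 hXA, fun a ha b hb hab => ?_⟩
      hsX' htX' hs ht
    exact hXS a ha ⟨hXA a ha, b, hb, hab.symm⟩

lemma StarC.color (h : StarC G c) (hFP : FP G A B) {s t : V} (hs : s ∈ nb G A) (ht : t ∈ nb G A)
    (hne : s ≠ t) (hst : ¬ G.Adj s t) : c s = c t :=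
  (h.fp hFP hs ht hne hst hFP.cA (fun _ h => hFP.subset_compl h) hs.2 ht.2).1

lemma StarC.adj_of_color (h : StarC G c) (hFP : FP G A B) {s t : V} (hs : s ∈ nb G A)
    (ht : t ∈ nb G A) (hst : c s ≠ c t) : G.Adj s t := by
  by_contra hadj
  exact hst (h.color hFP hs ht (by rintro rfl; exact hst rfl) hadj)

lemma StarC.common (h : StarC G c) (hFP : FP G A B) {s t : V} (hs : s ∈ nb G A) (ht : t ∈ nb G A)
    (hne : s ≠ t) (hst : ¬ G.Adj s t) :
    ∃ a ∈ A, ∃ b ∈ B, G.Adj a s ∧ G.Adj a t ∧ c a ≠ c s ∧ G.Adj b s ∧ G.Adj b t ∧ c b ≠ c s := by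
  obtain ⟨-, a, ha, h1, h2, h3⟩ := h.fp hFP hs ht hne hst hFP.cA (fun _ h => hFP.subset_compl h)
    hs.2 ht.2
  rw [hFP.eq] at hs ht
  obtain ⟨-, b, hb, h4, h5, h6⟩ := h.fp hFP.symm hs ht hne hst hFP.cB
    (fun _ h => hFP.symm.subset_compl h) hs.2 ht.2
  exact ⟨a, ha, b, hb, h1, h2, h3, h4, h5, h6⟩

/-- There is no `3`-sun on an independent triple of a minimal separator. -/
lemma StarC.noSun (h : StarC G c) (hFP : FP G A B) {s t q x x' y : V} (hs : s ∈ nb G A)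
    (ht : t ∈ nb G A) (hq : q ∈ nb G A) (hx : x ∉ nb G A) (hx' : x' ∉ nb G A) (hy : y ∉ nb G A)
    (hst : s ≠ t) (hsq : s ≠ q) (htq : t ≠ q) (nst : ¬ G.Adj s t) (nsq : ¬ G.Adj s q)
    (ntq : ¬ G.Adj t q) (hxs : G.Adj x s) (hxt : G.Adj x t) (hx's : G.Adj x' s)
    (hx'q : G.Adj x' q) (hyt : G.Adj y t) (hyq : G.Adj y q) :
    G.Adj x q ∨ G.Adj x' t ∨ G.Adj y s := by
  by_contra! hc
  obtain ⟨hxq, hx't, hys⟩ := hc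
  have hxx' : ¬ G.Adj x x' := by
    intro hadj
    obtain ⟨-, u, hu, hut, huq, -⟩ := h.fp hFP ht hq htq ntq (CS.pair hadj)
      (by rintro u (rfl | rfl) <;> assumption) ⟨x, .inl rfl, hxt⟩ ⟨x', .inr rfl, hx'q⟩
    rcases hu with rfl | rfl
    · exact hxq huq
    · exact hx't hut
  have hxy : ¬ G.Adj x y := by
    intro hadj
    obtain ⟨-, u, hu, hus, huq, -⟩ := h.fp hFP hs hq hsq nsq (CS.pair hadj)
      (by rintro u (rfl | rfl) <;> assumption) ⟨x, .inl rfl, hxs⟩ ⟨y, .inr rfl, hyq⟩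
    rcases hu with rfl | rfl
    · exact hxq huq
    · exact hys hus
  have hY : CS G {y, q, x'} := (CS.pair hx'q.symm).insert (.inl rfl) hyq
  obtain ⟨-, u, hu, hus, hut, -⟩ := h s t {y, q, x'} {x} hst nst hY (CS.singleton x)
    ⟨by
      rw [Set.disjoint_left]
      rintro u hu rfl
      rcases hu with rfl | rfl | rfl
      · exact hys hxs
      · exact hx hq
      · exact hx't hxt, by
      rintro u hu _ rfl hadj
      rcases hu with rfl | rfl | rfl
      · exact hxy hadj.symm
      · exact hxq hadj.symm
      · exact hxx' hadj.symm⟩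
    ⟨by rintro (rfl | rfl | rfl) <;> contradiction, x', by simp, hx's⟩
    ⟨by rintro (rfl | rfl | rfl) <;> contradiction, y, by simp, hyt⟩
    ⟨by rintro rfl; exact hx hs, x, rfl, hxs⟩ ⟨by rintro rfl; exact hx ht, x, rfl, hxt⟩
  rcases hu with rfl | rfl | rfl
  · exact hys hus
  · exact nsq hus.symm
  · exact hx't hut

/-- An independent triple of a minimal separator attached to a connected set `X` has a common
neighbour in `X`. -/
lemma StarC.common3 (h : StarC G c) (hFP : FP G A B) {s t q : V} (hs : s ∈ nb G A)
    (ht : t ∈ nb G A) (hq : q ∈ nb G A) (hst : s ≠ t) (hsq : s ≠ q) (htq : t ≠ q)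
    (nst : ¬ G.Adj s t) (nsq : ¬ G.Adj s q) (ntq : ¬ G.Adj t q) (hX : CS G X)
    (hXS : ∀ x ∈ X, x ∉ nb G A) (hsX : ∃ x ∈ X, G.Adj x s) (htX : ∃ x ∈ X, G.Adj x t)
    (hqX : ∃ x ∈ X, G.Adj x q) : ∃ x ∈ X, G.Adj x s ∧ G.Adj x t ∧ G.Adj x q := by
  obtain ⟨-, x, hx, hxs, hxt, -⟩ := h.fp hFP hs ht hst nst hX hXS hsX htX
  obtain ⟨-, x', hx', hx's, hx'q, -⟩ := h.fp hFP hs hq hsq nsq hX hXS hsX hqX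
  obtain ⟨-, y, hy, hyt, hyq, -⟩ := h.fp hFP ht hq htq ntq hX hXS htX hqX
  rcases h.noSun hFP hs ht hq (hXS x hx) (hXS x' hx') (hXS y hy) hst hsq htq nst nsq ntq hxs hxt
    hx's hx'q hyt hyq with h | h | h
  · exact ⟨x, hx, hxs, hxt, h⟩
  · exact ⟨x', hx', hx's, h, hx'q⟩
  · exact ⟨y, hy, h, hyt, hyq⟩

end red

/-! ### Excluding complete bipartite subgraphs -/

section k33
variable {G : SimpleGraph V} {c : V → Bool} {A B D K : Set V}

lemma fin3_third (i j : Fin 3) (h : i ≠ j) :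
    ∃ k, k ≠ i ∧ k ≠ j ∧ ∀ l, l = i ∨ l = j ∨ l = k := by
  revert i j; decide

lemma fin3_others (i : Fin 3) :
    ∃ k, k ≠ i ∧ ∃ l, l ≠ i ∧ l ≠ k ∧ ∀ m, m = i ∨ m = k ∨ m = l := by
  revert i; decide

/-- `z` and `w` are the two sides of a complete bipartite subgraph `K₃,₃` of `G`. -/
structure K33 (G : SimpleGraph V) (z w : Fin 3 → V) : Prop where
  iz : Function.Injective z
  iw : Function.Injective w
  adj : ∀ i j, G.Adj (z i) (w j)

lemma K33.symm {z w : Fin 3 → V} (h : K33 G z w) : K33 G w z :=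
  ⟨h.iw, h.iz, fun i j => (h.adj j i).symm⟩

/-- A component of the complement of a `K₃,₃` attached to a whole side and to a vertex of the other
side gives a `K₅`-minor. -/
lemma K33.caseA {z w : Fin 3 → V} (h : K33 G z w) (hK5 : K5Free G) (hK : CS G K)
    (hzK : ∀ i, z i ∉ K) (hwK : ∀ i, w i ∉ K) (hz : ∀ i, z i ∈ nb G K) (j : Fin 3)
    (hw : w j ∈ nb G K) : False := by
  obtain ⟨k, hkj, l, hlj, hlk, -⟩ := fin3_others j
  obtain ⟨-, p, hp, hpw⟩ := hw
  obtain ⟨-, p0, hp0, hpz0⟩ := hz 0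
  obtain ⟨-, p1, hp1, hpz1⟩ := hz 1
  obtain ⟨-, p2, hp2, hpz2⟩ := hz 2
  have n1 := h.iw.ne hkj
  have n2 := h.iw.ne hlj
  have n3 := h.iw.ne hlk
  have m1 := h.iz.ne (show (0 : Fin 3) ≠ 1 by decide)
  have m2 := h.iz.ne (show (0 : Fin 3) ≠ 2 by decide)
  have m3 := h.iz.ne (show (1 : Fin 3) ≠ 2 by decide)
  have hne : ∀ i j, z i ≠ w j := fun i j => (h.adj i j).ne
  refine hK5.contra hK (CS.singleton (w j)) (CS.singleton (z 0)) (CS.pair (h.adj 1 k))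
    (CS.pair (h.adj 2 l))
    (Tch.of p (w j) hpw hp (by simp) ?_) (Tch.of p0 (z 0) hpz0 hp0 (by simp) ?_)
    (Tch.of p1 (z 1) hpz1 hp1 (by simp) ?_) (Tch.of p2 (z 2) hpz2 hp2 (by simp) ?_)
    (Tch.of (w j) (z 0) (h.adj _ _).symm (by simp) (by simp) ?_)
    (Tch.of (w j) (z 1) (h.adj _ _).symm (by simp) (by simp) ?_)
    (Tch.of (w j) (z 2) (h.adj _ _).symm (by simp) (by simp) ?_)
    (Tch.of (z 0) (w k) (h.adj _ _) (by simp) (by simp) ?_)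
    (Tch.of (z 0) (w l) (h.adj _ _) (by simp) (by simp) ?_)
    (Tch.of (z 1) (w l) (h.adj _ _) (by simp) (by simp) ?_) <;> grind

/-- A connected set avoiding a `K₃,₃` and attached to two vertices of each side gives a `K₅`-minor. -/
lemma K33.caseC {z w : Fin 3 → V} (h : K33 G z w) (hK5 : K5Free G) (hK : CS G K)
    (hzK : ∀ i, z i ∉ K) (hwK : ∀ i, w i ∉ K) {i j i' j' : Fin 3} (hij : i ≠ j) (hij' : i' ≠ j')
    (hi : z i ∈ nb G K) (hj : z j ∈ nb G K) (hi' : w i' ∈ nb G K) (hj' : w j' ∈ nb G K) :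
    False := by
  obtain ⟨k, hki, hkj, -⟩ := fin3_third i j hij
  obtain ⟨k', hki', hkj', -⟩ := fin3_third i' j' hij'
  obtain ⟨-, p, hp, hpz⟩ := hi
  obtain ⟨-, q, hq, hqz⟩ := hj
  obtain ⟨-, p', hp', hpw⟩ := hi'
  obtain ⟨-, q', hq', hqw⟩ := hj'
  have n1 := h.iw.ne hij'
  have n2 := h.iw.ne hki'
  have n3 := h.iw.ne hkj'
  have m1 := h.iz.ne hij
  have m2 := h.iz.ne hki
  have m3 := h.iz.ne hkj
  have hne : ∀ i j, z i ≠ w j := fun i j => (h.adj i j).ne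
  refine hK5.contra hK (CS.singleton (w i')) (CS.pair (h.adj k j')) (CS.singleton (z i))
    (CS.pair (h.adj j k'))
    (Tch.of p' (w i') hpw hp' (by simp) ?_) (Tch.of q' (w j') hqw hq' (by simp) ?_)
    (Tch.of p (z i) hpz hp (by simp) ?_) (Tch.of q (z j) hqz hq (by simp) ?_)
    (Tch.of (w i') (z k) (h.adj _ _).symm (by simp) (by simp) ?_)
    (Tch.of (w i') (z i) (h.adj _ _).symm (by simp) (by simp) ?_)
    (Tch.of (w i') (z j) (h.adj _ _).symm (by simp) (by simp) ?_)
    (Tch.of (w j') (z i) (h.adj _ _).symm (by simp) (by simp) ?_)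
    (Tch.of (z k) (w k') (h.adj _ _) (by simp) (by simp) ?_)
    (Tch.of (z i) (w k') (h.adj _ _) (by simp) (by simp) ?_) <;> grind

/-- In a reduced graph, no component `K` of the complement of a `K₃,₃` is attached to at most one vertex
of the second side, provided that it misses this side when it is attached to the whole first side. -/
lemma K33.caseD {z w : Fin 3 → V} (h : K33 G z w) (hR : Red G c) (hK : CS G K)
    (hzK : ∀ i, z i ∉ K) (hwK : ∀ i, w i ∉ K)
    (hnb : ∀ s ∈ nb G K, (∃ i, s = z i) ∨ ∃ i, s = w i)
    (hnA : (∀ i, z i ∈ nb G K) → ∀ j, w j ∉ nb G K)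
    (hW : ∀ i j, w i ∈ nb G K → w j ∈ nb G K → i = j) : False := by
  by_cases hw : ∃ j, w j ∈ nb G K
  · obtain ⟨j, hj⟩ := hw
    have : ∃ i, z i ∉ nb G K := by by_contra! hc; exact hnA hc j hj
    obtain ⟨i, hi⟩ := this
    obtain ⟨k, hki, l, hli, hlk, hall⟩ := fin3_others i
    obtain ⟨j', hj'⟩ : ∃ j', j' ≠ j := exists_ne j
    refine hR.r3' hK (CS.pair (h.adj i j')) ?_ ?_ (z1 := z k) (z2 := w j) (z3 := z l)
      (.inr (h.adj _ _)) ?_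
    · rintro r (rfl | rfl)
      · exact ⟨hzK i, hi⟩
      · exact ⟨hwK j', fun h' => hj' (hW _ _ h' hj)⟩
    · intro s hs
      rcases hnb s hs with ⟨m, rfl⟩ | ⟨m, rfl⟩
      · exact ⟨w j', by simp, (h.adj _ _).symm⟩
      · exact ⟨z i, by simp, h.adj _ _⟩
    · intro s hs
      rcases hnb s hs with ⟨m, rfl⟩ | ⟨m, rfl⟩
      · rcases hall m with rfl | rfl | rfl
        · exact absurd hs hi
        · simp
        · simp
      · rw [hW _ _ hs hj]; simp
  push Not at hw
  have hnb' : ∀ s ∈ nb G K, ∃ i, s = z i := by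
    intro s hs
    rcases hnb s hs with h | ⟨i, rfl⟩
    · exact h
    · exact absurd hs (hw i)
  have r3w : ∀ z1 z2 z3, (z1 = z2 ∨ G.Adj z1 z2) →
      (∀ s ∈ nb G K, s = z1 ∨ s = z2 ∨ s = z3) → False := by
    intro z1 z2 z3 h1 h2
    refine hR.r3' hK (CS.singleton (w 0)) ?_ ?_ h1 h2
    · rintro r rfl; exact ⟨hwK 0, hw 0⟩
    · intro s hs
      obtain ⟨i, rfl⟩ := hnb' s hs
      exact ⟨w 0, rfl, (h.adj _ _).symm⟩
  by_cases hz : ∃ i, z i ∉ nb G K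
  · obtain ⟨i, hi⟩ := hz
    obtain ⟨k, hki, l, hli, hlk, hall⟩ := fin3_others i
    refine r3w (z k) (z k) (z l) (.inl rfl) fun s hs => ?_
    obtain ⟨m, rfl⟩ := hnb' s hs
    rcases hall m with rfl | rfl | rfl
    · exact absurd hs hi
    · simp
    · simp
  push Not at hz
  by_cases hzz : ∃ i j, G.Adj (z i) (z j)
  · obtain ⟨i, j, hij⟩ := hzz
    obtain ⟨k, -, -, hall⟩ := fin3_third i j (by rintro rfl; exact hij.ne rfl)
    refine r3w (z i) (z j) (z k) (.inr hij) fun s hs => ?_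
    obtain ⟨m, rfl⟩ := hnb' s hs
    rcases hall m with rfl | rfl | rfl <;> simp
  push Not at hzz
  have hBex : ∀ j, ∃ B, FP G K B ∧ w j ∈ B := by
    intro j
    obtain ⟨B, hB, hwB, -⟩ := exists_FP hK (CS.singleton (w j))
      (by rintro r rfl; exact ⟨hwK j, hw j⟩) (fun s hs => by
        obtain ⟨i, rfl⟩ := hnb' s hs
        exact ⟨w j, rfl, (h.adj _ _).symm⟩)
    exact ⟨B, hB, hwB rfl⟩
  obtain ⟨B, hB, hwB0⟩ := hBex 0
  have hwB : ∀ j, w j ∈ B := by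
    intro j
    by_contra hj
    obtain ⟨B', hB', hwB'⟩ := hBex j
    refine hR.r4 (z1 := z 0) (z2 := z 1) (z3 := z 2) hB hB' ?_ ?_
    · rw [Set.disjoint_left]
      intro x hx hxB'
      have hBn : ∀ x ∈ B, x ∉ nb G B' := by
        intro x hx; rw [← hB'.eq, hB.eq]; exact fun h => h.1 hx
      have hFP' : FP G B' K := hB'.symm
      exact hj (by
        have hBn' : ∀ x ∈ B', x ∉ nb G B := by
          intro x hx; rw [← hB.eq, hB'.eq]; exact fun h => h.1 hx
        exact (hB.symm.subset_of_mem hB'.cB hBn' hxB' hx) hwB')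
    · intro s hs
      obtain ⟨m, rfl⟩ := hnb' s hs
      fin_cases m <;> simp
  have m1 := h.iz.ne (show (0 : Fin 3) ≠ 1 by decide)
  have m2 := h.iz.ne (show (0 : Fin 3) ≠ 2 by decide)
  have m3 := h.iz.ne (show (1 : Fin 3) ≠ 2 by decide)
  obtain ⟨k, hk, hk0, hk1, hk2⟩ := hR.star.common3 hB (hz 0) (hz 1) (hz 2) m1 m2 m3 (hzz _ _)
    (hzz _ _) (hzz _ _) hK (fun x hx h => h.1 hx) (hz 0).2 (hz 1).2 (hz 2).2
  set X := compIn G (B \ {w 1, w 2}) (w 0) with hX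
  have n1 := h.iw.ne (show (0 : Fin 3) ≠ 1 by decide)
  have n2 := h.iw.ne (show (0 : Fin 3) ≠ 2 by decide)
  have n3 := h.iw.ne (show (1 : Fin 3) ≠ 2 by decide)
  have hXB : X ⊆ B \ {w 1, w 2} := compIn_subset ⟨hwB 0, by simp [n1, n2]⟩
  have hw0 : w 0 ∈ X := compIn_self
  obtain ⟨a, ha, haX, b, hb, hbX, hab⟩ := hB.cB.exists_cross X (hwB 0) compIn_self (hwB 1)
    (fun h => (hXB h).2 (by simp))
  have hb12 : b = w 1 ∨ b = w 2 := by
    by_contra hc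
    exact hbX (compIn_closed haX ⟨hb, by simpa using hc⟩ hab)
  have fin : ∀ j l, j ≠ 0 → l ≠ 0 → j ≠ l → b = w j → False := by
    rintro j l hj hl hjl rfl
    have p1 := h.iw.ne hj
    have p2 := h.iw.ne hl
    have p3 := h.iw.ne hjl
    have hlX : w l ∉ X := by
      have : l = 1 ∨ l = 2 := by clear * - hl; revert l; decide
      intro hl
      rcases this with rfl | rfl <;> exact (hXB hl).2 (by simp)
    have hzX : ∀ i, z i ∉ X := fun i hi => (hB.eq ▸ hz i : z i ∈ nb G B).1 (hXB hi).1
    have hkX : k ∉ X := fun hkX => Set.disjoint_left.1 hB.disj hk (hXB hkX).1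
    have hkz : ∀ i, k ≠ z i := by rintro i rfl; exact hzK i hk
    have hkw : ∀ i, k ≠ w i := by rintro i rfl; exact hwK i hk
    have hne : ∀ i j, z i ≠ w j := fun i j => (h.adj i j).ne
    refine hR.k5.contra (CS.pair hk0.symm) (CS.pair (h.adj 1 l)) (CS.singleton (z 2))
      (CS.singleton (w j)) (compIn_cs G (B \ {w 1, w 2}) (w 0))
      (Tch.of k (z 1) hk1 (by simp) (by simp) ?_) (Tch.of k (z 2) hk2 (by simp) (by simp) ?_)
      (Tch.of (z 0) (w j) (h.adj _ _) (by simp) (by simp) ?_)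
      (Tch.of (z 0) (w 0) (h.adj _ _) (by simp) hw0 ?_)
      (Tch.of (w l) (z 2) (h.adj _ _).symm (by simp) (by simp) ?_)
      (Tch.of (z 1) (w j) (h.adj _ _) (by simp) (by simp) ?_)
      (Tch.of (z 1) (w 0) (h.adj _ _) (by simp) hw0 ?_)
      (Tch.of (z 2) (w j) (h.adj _ _) (by simp) (by simp) ?_)
      (Tch.of (z 2) (w 0) (h.adj _ _) (by simp) hw0 ?_)
      (Tch.of (w j) a hab.symm (by simp) haX ?_) <;> grind
  rcases hb12 with h | h
  · exact fin 1 2 (by decide) (by decide) (by decide) h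
  · exact fin 2 1 (by decide) (by decide) (by decide) h

/-- If a reduced graph is spanned by a `K₃,₃`, the first side is not independent: otherwise the second
side would be a separator with three full components. -/
lemma K33.edge_of_cover {z w : Fin 3 → V} (h : K33 G z w) (hR : Red G c)
    (hall : ∀ v, (∃ i, v = z i) ∨ ∃ i, v = w i) : ∃ i j, G.Adj (z i) (z j) := by
  by_contra! hc
  have hnb : ∀ i, nb G {z i} = Set.range w := by
    intro i
    ext u
    constructor
    · rintro ⟨-, _, rfl, hu⟩
      rcases hall u with ⟨m, rfl⟩ | ⟨m, rfl⟩
      · exact absurd hu (hc _ _)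
      · exact ⟨m, rfl⟩
    · rintro ⟨m, rfl⟩
      exact ⟨(h.adj i m).ne.symm, z i, rfl, h.adj i m⟩
  have hFP : ∀ i j, i ≠ j → FP G {z i} {z j} := fun i j hij =>
    ⟨CS.singleton _, CS.singleton _, by simpa using (h.iz.ne hij), by rw [hnb, hnb]⟩
  refine hR.r4 (z1 := w 0) (z2 := w 1) (z3 := w 2) (hFP 0 1 (by decide)) (hFP 0 2 (by decide))
    (by simpa using (h.iz.ne (by decide))) ?_
  intro s hs
  rw [hnb] at hs
  obtain ⟨m, rfl⟩ := hs
  fin_cases m <;> simp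

/-- A reduced graph contains no `K₃,₃`. -/
lemma Red.noK33 (hR : Red G c) {z w : Fin 3 → V} (h : K33 G z w) : False := by
  by_cases hall : ∀ v, (∃ i, v = z i) ∨ ∃ i, v = w i
  · obtain ⟨i, j, hij⟩ := h.edge_of_cover hR hall
    obtain ⟨i', j', hij'⟩ := h.symm.edge_of_cover hR (fun v => (hall v).symm)
    have e1 : i ≠ j := by rintro rfl; exact hij.ne rfl
    have e2 : i' ≠ j' := by rintro rfl; exact hij'.ne rfl
    obtain ⟨k, hki, hkj, -⟩ := fin3_third i j e1
    obtain ⟨k', hki', hkj', -⟩ := fin3_third i' j' e2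
    have n1 := h.iw.ne e2
    have n2 := h.iw.ne hki'
    have n3 := h.iw.ne hkj'
    have m1 := h.iz.ne e1
    have m2 := h.iz.ne hki
    have m3 := h.iz.ne hkj
    have hne : ∀ i j, z i ≠ w j := fun i j => (h.adj i j).ne
    refine hR.k5.contra (CS.singleton (z i)) (CS.singleton (z j)) (CS.singleton (w i'))
      (CS.singleton (w j')) (CS.pair (h.adj k k'))
      (Tch.of _ _ hij (by simp) (by simp) ?_)
      (Tch.of (z i) (w i') (h.adj _ _) (by simp) (by simp) ?_)
      (Tch.of (z i) (w j') (h.adj _ _) (by simp) (by simp) ?_)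
      (Tch.of (z i) (w k') (h.adj _ _) (by simp) (by simp) ?_)
      (Tch.of (z j) (w i') (h.adj _ _) (by simp) (by simp) ?_)
      (Tch.of (z j) (w j') (h.adj _ _) (by simp) (by simp) ?_)
      (Tch.of (z j) (w k') (h.adj _ _) (by simp) (by simp) ?_)
      (Tch.of _ _ hij' (by simp) (by simp) ?_)
      (Tch.of (w i') (z k) (h.adj _ _).symm (by simp) (by simp) ?_)
      (Tch.of (w j') (z k) (h.adj _ _).symm (by simp) (by simp) ?_) <;> grind
  push Not at hall
  obtain ⟨v, hvz, hvw⟩ := hall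
  set U : Set V := {v | (∀ i, v ≠ z i) ∧ ∀ i, v ≠ w i} with hU
  have hvU : v ∈ U := ⟨hvz, hvw⟩
  set K := compIn G U v
  have hK : CS G K := compIn_cs _ _ _
  have hKU : K ⊆ U := compIn_subset hvU
  have hzK : ∀ i, z i ∉ K := fun i hi => (hKU hi).1 i rfl
  have hwK : ∀ i, w i ∉ K := fun i hi => (hKU hi).2 i rfl
  have hnb : ∀ s ∈ nb G K, (∃ i, s = z i) ∨ ∃ i, s = w i := by
    rintro s ⟨hs, k, hk, hks⟩
    by_contra! hc
    exact hs (compIn_closed hk ⟨hc.1, hc.2⟩ hks)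
  have hA : (∀ i, z i ∈ nb G K) → ∀ j, w j ∉ nb G K := fun h1 j h2 =>
    h.caseA hR.k5 hK hzK hwK h1 j h2
  have hA' : (∀ i, w i ∈ nb G K) → ∀ j, z j ∉ nb G K := fun h1 j h2 =>
    h.symm.caseA hR.k5 hK hwK hzK h1 j h2
  by_cases hW : ∀ i j, w i ∈ nb G K → w j ∈ nb G K → i = j
  · exact h.caseD hR hK hzK hwK hnb hA hW
  by_cases hZ : ∀ i j, z i ∈ nb G K → z j ∈ nb G K → i = j
  · exact h.symm.caseD hR hK hwK hzK (fun s hs => (hnb s hs).symm) hA' hZ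
  push Not at hW hZ
  obtain ⟨i', j', hi', hj', hij'⟩ := hW
  obtain ⟨i, j, hi, hj, hij⟩ := hZ
  exact h.caseC hR.k5 hK hzK hwK hij hij' hi hj hi' hj'

lemma K33.mk' {s t r a b d : V} (hst : s ≠ t) (hsr : s ≠ r) (htr : t ≠ r) (hab : a ≠ b)
    (had : a ≠ d) (hbd : b ≠ d) (ha : G.Adj a s ∧ G.Adj a t ∧ G.Adj a r)
    (hb : G.Adj b s ∧ G.Adj b t ∧ G.Adj b r) (hd : G.Adj d s ∧ G.Adj d t ∧ G.Adj d r) :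
    K33 G ![s, t, r] ![a, b, d] := by
  refine ⟨?_, ?_, ?_⟩
  · intro i j hij
    fin_cases i <;> fin_cases j <;> simp_all
  · intro i j hij
    fin_cases i <;> fin_cases j <;> simp_all
  · intro i j
    fin_cases i <;> fin_cases j <;> simp_all [G.adj_comm]

end k33

/-! ### Graphs without good separators are complete -/

section reduced
variable {G : SimpleGraph V} {c : V → Bool} {A B D K S : Set V}

/-- A separator consisting of an independent triple with common neighbours `a ∈ A` and `b ∈ B`:
no component of the complement is attached only to `s`, `t` and `a`. -/
lemma Red.type3_aux (hR : Red G c) {s t r a b : V} (hK : CS G K) (hrK : r ∉ K) (hbK : b ∉ K)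
    (hr : r ∉ nb G K) (hb : b ∉ nb G K) (hra : G.Adj r a) (hrb : G.Adj r b) (hbs : G.Adj b s)
    (hbt : G.Adj b t) (has : G.Adj a s) (h : ∀ u ∈ nb G K, u = s ∨ u = t ∨ u = a) : False := by
  refine hR.r3' hK (CS.pair hrb) ?_ ?_ (z1 := s) (z2 := a) (z3 := t) (.inr has.symm) ?_
  · rintro u (rfl | rfl)
    · exact ⟨hrK, hr⟩
    · exact ⟨hbK, hb⟩
  · intro u hu
    rcases h u hu with rfl | rfl | rfl
    · exact ⟨b, by simp, hbs⟩
    · exact ⟨b, by simp, hbt⟩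
    · exact ⟨r, by simp, hra⟩
  · intro u hu
    have := h u hu
    tauto

/-- A connected set avoiding the separator cannot be adjacent to both sides. -/
lemma FP.not_both (h : FP G A B) (hK : CS G K) (hKS : ∀ x ∈ K, x ∉ nb G A) {a b : V} (ha : a ∈ A)
    (hb : b ∈ B) (haK : a ∈ nb G K) (hbK : b ∈ nb G K) : False := by
  obtain ⟨haK, k, hk, hka⟩ := haK
  have hkA : k ∈ A := by
    by_contra hkA
    exact hKS k hk ⟨hkA, a, ha, hka.symm⟩
  have hsub := h.subset_of_mem hK hKS hk hkA
  obtain ⟨hbK, l, hl, hlb⟩ := hbK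
  exact h.not_adj (hsub hl) hb hlb

/-- No minimal separator of a reduced graph is an independent triple. The triple has common neighbours
`a ∈ A` and `b ∈ B`; a further component attached to all of it contains a third common neighbour,
which gives a `K₃,₃`, and one attached to less gives a good separator. -/
lemma Red.type3 (hR : Red G c) (hFP : FP G A B) {s t r : V} (hs : s ∈ nb G A) (ht : t ∈ nb G A)
    (hr : r ∈ nb G A) (hst : s ≠ t) (hsr : s ≠ r) (htr : t ≠ r) (nst : ¬ G.Adj s t)
    (nsr : ¬ G.Adj s r) (ntr : ¬ G.Adj t r) (hS : ∀ u ∈ nb G A, u = s ∨ u = t ∨ u = r) :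
    False := by
  obtain ⟨a, ha, has, hat, har⟩ := hR.star.common3 hFP hs ht hr hst hsr htr nst nsr ntr hFP.cA
    (fun _ h => hFP.subset_compl h) hs.2 ht.2 hr.2
  obtain ⟨b, hb, hbs, hbt, hbr⟩ := hR.star.common3 hFP hs ht hr hst hsr htr nst nsr ntr hFP.cB
    (fun _ h => by rw [hFP.eq]; exact hFP.symm.subset_compl h)
    (by rw [hFP.eq] at hs; exact hs.2) (by rw [hFP.eq] at ht; exact ht.2)
    (by rw [hFP.eq] at hr; exact hr.2)
  have hab : a ≠ b := fun h => Set.disjoint_left.1 hFP.disj ha (h ▸ hb)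
  have nab := hFP.not_adj ha hb
  by_cases hall : ∀ v, v = s ∨ v = t ∨ v = r ∨ v = a ∨ v = b
  · have key : ∀ x y, (x = s ∧ y = t ∨ x = t ∧ y = s) → nb G {x} = {a, b} := by
      intro x y hxy
      ext u
      constructor
      · rintro ⟨hux, _, rfl, hu⟩
        rcases hxy with ⟨rfl, rfl⟩ | ⟨rfl, rfl⟩ <;> rcases hall u with rfl | rfl | rfl | rfl | rfl <;>
          first
          | exact absurd rfl hux
          | exact absurd hu nst
          | exact absurd hu.symm nst
          | exact absurd hu nsr
          | exact absurd hu ntr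
          | simp
      · rcases hxy with ⟨rfl, rfl⟩ | ⟨rfl, rfl⟩ <;> rintro (rfl | rfl)
        · exact ⟨has.ne, _, rfl, has.symm⟩
        · exact ⟨hbs.ne, _, rfl, hbs.symm⟩
        · exact ⟨hat.ne, _, rfl, hat.symm⟩
        · exact ⟨hbt.ne, _, rfl, hbt.symm⟩
    have h1 := key s t (.inl ⟨rfl, rfl⟩)
    have h2 := key t s (.inr ⟨rfl, rfl⟩)
    refine hR.r3 (A := {s}) (B := {t}) ⟨CS.singleton _, CS.singleton _, by simpa using hst,
      h1.trans h2.symm⟩ (z1 := a) (z2 := a) (z3 := b) (.inl rfl) ?_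
    rw [h1]
    rintro u (rfl | rfl) <;> simp
  push Not at hall
  obtain ⟨v, hv1, hv2, hv3, hv4, hv5⟩ := hall
  set U : Set V := {v | v ≠ s ∧ v ≠ t ∧ v ≠ r ∧ v ≠ a ∧ v ≠ b} with hU
  have hvU : v ∈ U := ⟨hv1, hv2, hv3, hv4, hv5⟩
  set K := compIn G U v
  have hK : CS G K := compIn_cs _ _ _
  have hKU : K ⊆ U := compIn_subset hvU
  have hnb : ∀ u ∈ nb G K, u = s ∨ u = t ∨ u = r ∨ u = a ∨ u = b := by
    rintro u ⟨hu, k, hk, hku⟩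
    by_contra! hc
    exact hu (compIn_closed hk hc hku)
  have hKS : ∀ x ∈ K, x ∉ nb G A := by
    intro x hx hxS
    have h1 := hKU hx
    rcases hS x hxS with rfl | rfl | rfl
    · exact h1.1 rfl
    · exact h1.2.1 rfl
    · exact h1.2.2.1 rfl
  have hsK : s ∉ K := fun h => (hKU h).1 rfl
  have htK : t ∉ K := fun h => (hKU h).2.1 rfl
  have hrK : r ∉ K := fun h => (hKU h).2.2.1 rfl
  have haK : a ∉ K := fun h => (hKU h).2.2.2.1 rfl
  have hbK : b ∉ K := fun h => (hKU h).2.2.2.2 rfl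
  have hab' : a ∉ nb G K ∨ b ∉ nb G K := by
    by_contra! hc
    exact hFP.not_both hK hKS ha hb hc.1 hc.2
  by_cases h1 : s ∈ nb G K
  swap
  · rcases hab' with h | h
    · refine hR.type3_aux (s := t) (t := r) (r := s) (a := b) (b := a) hK hsK haK h1 h hbs.symm
        has.symm hat har hbt fun u hu => ?_
      rcases hnb u hu with rfl | rfl | rfl | rfl | rfl <;> tauto
    · refine hR.type3_aux (s := t) (t := r) (r := s) (a := a) (b := b) hK hsK hbK h1 h has.symm
        hbs.symm hbt hbr hat fun u hu => ?_
      rcases hnb u hu with rfl | rfl | rfl | rfl | rfl <;> tauto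
  by_cases h2 : t ∈ nb G K
  swap
  · rcases hab' with h | h
    · refine hR.type3_aux (s := s) (t := r) (r := t) (a := b) (b := a) hK htK haK h2 h hbt.symm
        hat.symm has har hbs fun u hu => ?_
      rcases hnb u hu with rfl | rfl | rfl | rfl | rfl <;> tauto
    · refine hR.type3_aux (s := s) (t := r) (r := t) (a := a) (b := b) hK htK hbK h2 h hat.symm
        hbt.symm hbs hbr has fun u hu => ?_
      rcases hnb u hu with rfl | rfl | rfl | rfl | rfl <;> tauto
  by_cases h3 : r ∈ nb G K
  swap
  · rcases hab' with h | h
    · refine hR.type3_aux (s := s) (t := t) (r := r) (a := b) (b := a) hK hrK haK h3 h hbr.symm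
        har.symm has hat hbs fun u hu => ?_
      rcases hnb u hu with rfl | rfl | rfl | rfl | rfl <;> tauto
    · refine hR.type3_aux (s := s) (t := t) (r := r) (a := a) (b := b) hK hrK hbK h3 h har.symm
        hbr.symm hbs hbt has fun u hu => ?_
      rcases hnb u hu with rfl | rfl | rfl | rfl | rfl <;> tauto
  obtain ⟨k, hk, hks, hkt, hkr⟩ := hR.star.common3 hFP hs ht hr hst hsr htr nst nsr ntr hK hKS
    h1.2 h2.2 h3.2
  have hka : a ≠ k := by rintro rfl; exact haK hk
  have hkb : b ≠ k := by rintro rfl; exact hbK hk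
  exact hR.noK33 (K33.mk' hst hsr htr hab hka hkb ⟨has, hat, har⟩ ⟨hbs, hbt, hbr⟩ ⟨hks, hkt, hkr⟩)

/-- Every minimal separator of a reduced graph has at least four vertices. -/
lemma Red.four (hR : Red G c) (hFP : FP G A B) (z1 z2 z3 : V) :
    ∃ q ∈ nb G A, q ≠ z1 ∧ q ≠ z2 ∧ q ≠ z3 := by
  by_contra! hc
  have hS : ∀ u ∈ nb G A, u = z1 ∨ u = z2 ∨ u = z3 := by
    intro u hu; by_contra! h; exact h.2.2 (hc u hu h.1 h.2.1)
  have h12 : ¬ (z1 = z2 ∨ G.Adj z1 z2) := fun h => hR.r3 hFP h hS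
  have h13 : ¬ (z1 = z3 ∨ G.Adj z1 z3) := fun h => hR.r3 hFP (z3 := z2) h
    fun u hu => by have := hS u hu; tauto
  have h23 : ¬ (z2 = z3 ∨ G.Adj z2 z3) := fun h => hR.r3 hFP (z3 := z1) h
    fun u hu => by have := hS u hu; tauto
  have m1 : z1 ∈ nb G A := by
    by_contra h
    refine hR.r3 hFP (z1 := z2) (z2 := z2) (z3 := z3) (.inl rfl) fun u hu => ?_
    rcases hS u hu with rfl | rfl | rfl <;> tauto
  have m2 : z2 ∈ nb G A := by
    by_contra h
    refine hR.r3 hFP (z1 := z1) (z2 := z1) (z3 := z3) (.inl rfl) fun u hu => ?_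
    rcases hS u hu with rfl | rfl | rfl <;> tauto
  have m3 : z3 ∈ nb G A := by
    by_contra h
    refine hR.r3 hFP (z1 := z1) (z2 := z1) (z3 := z2) (.inl rfl) fun u hu => ?_
    rcases hS u hu with rfl | rfl | rfl <;> tauto
  push Not at h12 h13 h23
  exact hR.type3 hFP m1 m2 m3 h12.1 h13.1 h23.1 h12.2 h13.2 h23.2 hS

lemma FP.notMem_of_mem (h : FP G A B) {s : V} (hs : s ∈ nb G A) : s ∉ A ∧ s ∉ B :=
  ⟨hs.1, h.notMem_left hs⟩

/-- A minimal separator containing two non-adjacent vertices of one colour and two vertices of the other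
colour gives a `K₅`-minor, because vertices of different colours are adjacent. -/
lemma Red.mixed_same (hR : Red G c) (hFP : FP G A B) {s t p q : V} (hs : s ∈ nb G A)
    (ht : t ∈ nb G A) (hp : p ∈ nb G A) (hq : q ∈ nb G A) (hst : s ≠ t) (nst : ¬ G.Adj s t)
    (hps : c p ≠ c s) (hqp : q ≠ p) (hcq : c q = c p) : False := by
  have hcst := hR.star.color hFP hs ht hst nst
  have aps : G.Adj p s := hR.star.adj_of_color hFP hp hs hps
  have apt : G.Adj p t := hR.star.adj_of_color hFP hp ht (hcst ▸ hps)
  have aqs : G.Adj q s := hR.star.adj_of_color hFP hq hs (hcq ▸ hps)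
  have aqt : G.Adj q t := hR.star.adj_of_color hFP hq ht (hcst ▸ hcq ▸ hps)
  have es := hFP.notMem_of_mem hs
  have et := hFP.notMem_of_mem ht
  have ep := hFP.notMem_of_mem hp
  have eq := hFP.notMem_of_mem hq
  have hd := Set.disjoint_left.1 hFP.disj
  have nps := aps.ne
  have npt := apt.ne
  have nqs := aqs.ne
  have nqt := aqt.ne
  obtain ⟨-, b0, hb0, hb0s⟩ := (hFP.eq ▸ hs : s ∈ nb G B)
  by_cases apq : G.Adj p q
  · obtain ⟨-, b1, hb1, hb1t⟩ := (hFP.eq ▸ ht : t ∈ nb G B)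
    obtain ⟨-, b2, hb2, hb2p⟩ := (hFP.eq ▸ hp : p ∈ nb G B)
    obtain ⟨-, b3, hb3, hb3q⟩ := (hFP.eq ▸ hq : q ∈ nb G B)
    refine hR.k5.contra hFP.cA (hFP.cB.insert hb0 hb0s.symm) (CS.singleton t) (CS.singleton p)
      (CS.singleton q) (hFP.tch_left s hs (by simp) ?_) (hFP.tch_left t ht (by simp) ?_)
      (hFP.tch_left p hp (by simp) ?_) (hFP.tch_left q hq (by simp) ?_)
      (Tch.of b1 t hb1t (by simp [hb1]) (by simp) ?_)
      (Tch.of b2 p hb2p (by simp [hb2]) (by simp) ?_)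
      (Tch.of b3 q hb3q (by simp [hb3]) (by simp) ?_)
      (Tch.of t p apt.symm (by simp) (by simp) ?_) (Tch.of t q aqt.symm (by simp) (by simp) ?_)
      (Tch.of p q apq (by simp) (by simp) ?_) <;> grind
  · obtain ⟨-, -, b, hb, -, -, -, hbs, hbt, hcb⟩ := hR.star.common hFP hs ht hst nst
    obtain ⟨-, -, b', hb', -, -, -, hbp, hbq, hcb'⟩ := hR.star.common hFP hp hq hqp.symm apq
    have hbb' : b ≠ b' := by
      rintro rfl
      revert hcb hcb' hps
      cases c b <;> cases c s <;> cases c p <;> simp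
    refine hR.k5.contra hFP.cA (CS.pair hbs.symm) (CS.singleton t) (CS.pair hbp.symm)
      (CS.singleton q) (hFP.tch_left s hs (by simp) ?_) (hFP.tch_left t ht (by simp) ?_)
      (hFP.tch_left p hp (by simp) ?_) (hFP.tch_left q hq (by simp) ?_)
      (Tch.of b t hbt (by simp) (by simp) ?_)
      (Tch.of s p aps.symm (by simp) (by simp) ?_)
      (Tch.of s q aqs.symm (by simp) (by simp) ?_)
      (Tch.of t p apt.symm (by simp) (by simp) ?_) (Tch.of t q aqt.symm (by simp) (by simp) ?_)
      (Tch.of b' q hbq (by simp) (by simp) ?_) <;> grind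

/-- A minimal separator containing a triangle and a fourth vertex gives a `K₅`-minor. -/
lemma Red.mixed_tri (hR : Red G c) (hFP : FP G A B) {s t p q : V} (hs : s ∈ nb G A)
    (ht : t ∈ nb G A) (hp : p ∈ nb G A) (hq : q ∈ nb G A) (hts : t ≠ s) (htp : t ≠ p)
    (htq : t ≠ q) (asp : G.Adj s p) (asq : G.Adj s q) (apq : G.Adj p q) : False := by
  have es := hFP.notMem_of_mem hs
  have et := hFP.notMem_of_mem ht
  have ep := hFP.notMem_of_mem hp
  have eq := hFP.notMem_of_mem hq
  have hd := Set.disjoint_left.1 hFP.disj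
  have n1 := asp.ne
  have n2 := asq.ne
  have n3 := apq.ne
  obtain ⟨-, b0, hb0, hb0t⟩ := (hFP.eq ▸ ht : t ∈ nb G B)
  obtain ⟨-, b1, hb1, hb1s⟩ := (hFP.eq ▸ hs : s ∈ nb G B)
  obtain ⟨-, b2, hb2, hb2p⟩ := (hFP.eq ▸ hp : p ∈ nb G B)
  obtain ⟨-, b3, hb3, hb3q⟩ := (hFP.eq ▸ hq : q ∈ nb G B)
  refine hR.k5.contra hFP.cA (hFP.cB.insert hb0 hb0t.symm) (CS.singleton s) (CS.singleton p)
    (CS.singleton q) (hFP.tch_left t ht (by simp) ?_) (hFP.tch_left s hs (by simp) ?_)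
    (hFP.tch_left p hp (by simp) ?_) (hFP.tch_left q hq (by simp) ?_)
    (Tch.of b1 s hb1s (by simp [hb1]) (by simp) ?_)
    (Tch.of b2 p hb2p (by simp [hb2]) (by simp) ?_)
    (Tch.of b3 q hb3q (by simp [hb3]) (by simp) ?_)
    (Tch.of s p asp (by simp) (by simp) ?_) (Tch.of s q asq (by simp) (by simp) ?_)
    (Tch.of p q apq (by simp) (by simp) ?_) <;> grind

/-- A minimal separator of a reduced graph with a non-adjacent pair is monochromatic. -/
lemma Red.mixed (hR : Red G c) (hFP : FP G A B) {s t p : V} (hs : s ∈ nb G A)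
    (ht : t ∈ nb G A) (hp : p ∈ nb G A) (hst : s ≠ t) (nst : ¬ G.Adj s t)
    (hps : c p ≠ c s) : False := by
  obtain ⟨q, hq, hqs, hqt, hqp⟩ := hR.four hFP s t p
  have hcst := hR.star.color hFP hs ht hst nst
  by_cases hcq : c q = c p
  · exact hR.mixed_same hFP hs ht hp hq hst nst hps hqp hcq
  have aps : G.Adj p s := hR.star.adj_of_color hFP hp hs hps
  have apt : G.Adj p t := hR.star.adj_of_color hFP hp ht (hcst ▸ hps)
  have apq : G.Adj p q := hR.star.adj_of_color hFP hp hq (Ne.symm hcq)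
  by_cases aqs : G.Adj q s
  · exact hR.mixed_tri hFP hs ht hp hq hst.symm apt.ne.symm hqt.symm aps.symm aqs.symm apq
  by_cases aqt : G.Adj q t
  · exact hR.mixed_tri hFP ht hs hp hq hst aps.ne.symm hqs.symm apt.symm aqt.symm apq
  obtain ⟨a, ha, has, hat, haq⟩ := hR.star.common3 hFP hs ht hq hst hqs.symm hqt.symm nst
    (fun h => aqs h.symm) (fun h => aqt h.symm) hFP.cA (fun _ h => hFP.subset_compl h)
    hs.2 ht.2 hq.2
  obtain ⟨b, hb, hbs, hbt, hbq⟩ := hR.star.common3 hFP hs ht hq hst hqs.symm hqt.symm nst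
    (fun h => aqs h.symm) (fun h => aqt h.symm) hFP.cB
    (fun _ h => by rw [hFP.eq]; exact hFP.symm.subset_compl h)
    (by rw [hFP.eq] at hs; exact hs.2) (by rw [hFP.eq] at ht; exact ht.2)
    (by rw [hFP.eq] at hq; exact hq.2)
  have ep := hFP.notMem_of_mem hp
  have hab : a ≠ b := fun h => Set.disjoint_left.1 hFP.disj ha (h ▸ hb)
  have hap : a ≠ p := by rintro rfl; exact ep.1 ha
  have hbp : b ≠ p := by rintro rfl; exact ep.2 hb
  exact hR.noK33 (K33.mk' hst hqs.symm hqt.symm hab hap hbp ⟨has, hat, haq⟩ ⟨hbs, hbt, hbq⟩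
    ⟨aps, apt, apq⟩)

/-- A minimal separator of a reduced graph has at least four vertices and is therefore not a clique, by
exclusion of `K₅`-minors. -/
lemma Red.exists_nonadj (hR : Red G c) (hFP : FP G A B) :
    ∃ s ∈ nb G A, ∃ t ∈ nb G A, s ≠ t ∧ ¬ G.Adj s t := by
  obtain ⟨a, -⟩ := hFP.cA.1
  obtain ⟨p, hp, -⟩ := hR.four hFP a a a
  obtain ⟨q, hq, hqp, -⟩ := hR.four hFP p p p
  obtain ⟨r, hr, hrp, hrq, -⟩ := hR.four hFP p q q
  obtain ⟨s, hs, hsp, hsq, hsr⟩ := hR.four hFP p q r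
  by_contra! hc
  exact hR.mixed_tri hFP hp hs hq hr hsp hsq hsr (hc p hp q hq hqp.symm) (hc p hp r hr hrp.symm)
    (hc q hq r hr hrq.symm)

lemma Red.mono (hR : Red G c) (hFP : FP G A B) {s t : V} (hs : s ∈ nb G A) (ht : t ∈ nb G A) :
    c s = c t := by
  obtain ⟨p, hp, q, hq, hpq, npq⟩ := hR.exists_nonadj hFP
  have key : ∀ u ∈ nb G A, c u = c p := fun u hu => by
    by_contra h
    exact hR.mixed hFP hp hq hu hpq npq h
  rw [key s hs, key t ht]

/-- The edges inside a minimal separator of a reduced graph form a matching. -/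
lemma Red.matching (hR : Red G c) (hFP : FP G A B) {s t q : V} (hs : s ∈ nb G A)
    (ht : t ∈ nb G A) (hq : q ∈ nb G A) (hst : G.Adj s t) (hqt : G.Adj q t) : s = q := by
  by_contra hne
  by_cases hsq : G.Adj s q
  · obtain ⟨r, hr, hrs, hrt, hrq⟩ := hR.four hFP s t q
    exact hR.mixed_tri hFP hs hr ht hq hrs hrt hrq hst hsq hqt.symm
  · obtain ⟨a, ha, b, hb, has, haq, hca, hbs, hbq, hcb⟩ := hR.star.common hFP hs hq hne hsq
    obtain ⟨A', D', hF, hsA', hqD', -⟩ := closeSep hne hsq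
    have mem : ∀ u, G.Adj u s → G.Adj u q → u ∈ nb G D' := fun u hus huq =>
      ⟨fun h => hF.not_adj h hsA' hus, q, hqD', huq.symm⟩
    have := hR.mono hF (mem a has haq) (mem t hst.symm hqt.symm)
    exact hca (this.trans (hR.mono hFP ht hs))

/-- A vertex off the separator adjacent to one end of an edge `qt` of the separator, and to a further
vertex `s`, is adjacent to the other end as well. -/
lemma Red.partner (hR : Red G c) (hFP : FP G A B) {q t s u : V} (hq : q ∈ nb G A)
    (ht : t ∈ nb G A) (hs : s ∈ nb G A) (hu : u ∉ nb G A) (hqt : G.Adj q t) (hts : t ≠ s)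
    (nts : ¬ G.Adj t s) (hut : G.Adj u t) (hus : G.Adj u s) : G.Adj u q := by
  by_contra huq
  have hqs : q ≠ s := by rintro rfl; exact nts hqt.symm
  have nqs : ¬ G.Adj q s := fun h => hts (hR.matching hFP ht hq hs hqt.symm h.symm)
  obtain ⟨a, ha, b, hb, haq, has, hca, hbq, hbs, hcb⟩ := hR.star.common hFP hq hs hqs nqs
  obtain ⟨A', D', hF, hqA', hsD', hcl⟩ := closeSep hqs nqs
  have huD : u ∈ D' := by
    by_contra h
    exact huq (hcl u ⟨h, s, hsD', hus.symm⟩).symm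
  have ha' : a ∈ nb G D' := ⟨fun h => hF.not_adj h hqA' haq, s, hsD', has.symm⟩
  have ht' : t ∈ nb G D' := ⟨fun h => hF.not_adj h hqA' hqt.symm, u, huD, hut⟩
  exact hca ((hR.mono hF ha' ht').trans (hR.mono hFP ht hq))

/-- Vertices of a minimal separator attached to a connected set `X`, not forming a clique, have a
common neighbour in `X`. -/
lemma Red.universal [Finite V] (hR : Red G c) (hFP : FP G A B) {X R : Set V} (hX : CS G X)
    (hXS : ∀ x ∈ X, x ∉ nb G A) (hRS : R ⊆ nb G A) (hRX : ∀ r ∈ R, ∃ x ∈ X, G.Adj x r)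
    (hR5 : ∃ s ∈ R, ∃ t ∈ R, s ≠ t ∧ ¬ G.Adj s t) : ∃ x ∈ X, ∀ r ∈ R, G.Adj x r := by
  refine helly ?_ ?_ ?_ ?_ hR5
  · intro s hs t ht hst nst
    obtain ⟨-, x, hx, h1, h2, -⟩ := hR.star.fp hFP (hRS hs) (hRS ht) hst nst hX hXS (hRX s hs)
      (hRX t ht)
    exact ⟨x, hx, h1, h2⟩
  · intro q hq t ht s hs u hu h1 h2 h3 h4 h5
    exact hR.partner hFP (hRS hq) (hRS ht) (hRS hs) (hXS u hu) h1 h2 h3 h4 h5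
  · intro s hs t ht q hq x hx x' hx' y hy
    exact hR.star.noSun hFP (hRS hs) (hRS ht) (hRS hq) (hXS x hx) (hXS x' hx') (hXS y hy)
  · intro s hs t ht q hq h1 h2
    exact hR.matching hFP (hRS hs) (hRS ht) (hRS hq) h1 h2

/-- If `a` and `b` are adjacent to the whole separator, no connected set `K` away from `b` is attached to
only `a` and at most two vertices of the separator. -/
lemma Red.small_aux (hR : Red G c) (hFP : FP G A B) {a b s1 s2 : V} (hK : CS G K)
    (haS : ∀ r ∈ nb G A, G.Adj a r) (hbS : ∀ r ∈ nb G A, G.Adj b r) (hbK : b ∉ K)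
    (hbn : b ∉ nb G K) (hKS : ∀ x ∈ K, x ∉ nb G A)
    (hnb : ∀ u ∈ nb G K, u ∈ nb G A ∨ u = a)
    (hN : ∀ u ∈ nb G K, u ∈ nb G A → u = s1 ∨ u = s2) : False := by
  obtain ⟨r, hr, hr1, hr2, -⟩ := hR.four hFP s1 s2 s2
  have hK3 : ∀ z1 z2 z3 : V, (z1 = z2 ∨ G.Adj z1 z2) →
      (∀ u ∈ nb G K, u = z1 ∨ u = z2 ∨ u = z3) → False := by
    intro z1 z2 z3 h1 h2
    refine hR.r3' hK (CS.pair (hbS r hr)) ?_ ?_ h1 h2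
    · rintro u (rfl | rfl)
      · exact ⟨hbK, hbn⟩
      · exact ⟨fun h => hKS _ h hr, fun h => (hN _ h hr).elim hr1 hr2⟩
    · intro u hu
      rcases hnb u hu with h | rfl
      · exact ⟨b, by simp, hbS u h⟩
      · exact ⟨r, by simp, (haS r hr).symm⟩
  by_cases h1 : s1 ∈ nb G A
  · refine hK3 a s1 s2 (.inr (haS s1 h1)) fun u hu => ?_
    rcases hnb u hu with h | rfl
    · have := hN u hu h; tauto
    · simp
  · refine hK3 s2 s2 a (.inl rfl) fun u hu => ?_
    rcases hnb u hu with h | rfl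
    · rcases hN u hu h with rfl | rfl
      · exact absurd h h1
      · simp
    · simp

/-- A reduced graph has no minimal separator. Both sides contain a vertex adjacent to the whole
separator, by `Red.universal`. A third component outside these two vertices and the separator has
at least three attachments in the separator, which yields a `K₅`-minor or a `K₃,₃`; if there is no
such component, a separator close to a non-adjacent pair violates `Red.matching`. -/
lemma Red.no_FP [Finite V] (hR : Red G c) (hFP : FP G A B) : False := by
  have hna := hR.exists_nonadj hFP
  have hBS : ∀ x ∈ B, x ∉ nb G A := fun x hx h => hFP.notMem_left h hx
  obtain ⟨a, ha, haS⟩ := hR.universal hFP hFP.cA (fun _ h => hFP.subset_compl h) subset_rfl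
    (fun r hr => hr.2) hna
  obtain ⟨b, hb, hbS⟩ := hR.universal hFP hFP.cB hBS subset_rfl
    (fun r hr => by rw [hFP.eq] at hr; exact hr.2) hna
  have hab : a ≠ b := fun h => Set.disjoint_left.1 hFP.disj ha (h ▸ hb)
  have haN : a ∉ nb G A := hFP.subset_compl ha
  have hbN : b ∉ nb G A := hBS b hb
  by_cases hall : ∀ v, v ∈ nb G A ∨ v = a ∨ v = b
  · obtain ⟨s, hs, t, ht, hst, nst⟩ := hna
    obtain ⟨A', D', hF, -, -, hcl⟩ := closeSep hst nst
    obtain ⟨q, hq, hqa, hqb, -⟩ := hR.four hF a b b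
    obtain ⟨r, hr, hra, hrb, hrq⟩ := hR.four hF a b q
    have hqS : q ∈ nb G A := by have := hall q; tauto
    have hrS : r ∈ nb G A := by have := hall r; tauto
    exact hrq (hR.matching hFP hrS hs hqS (hcl r hr).symm (hcl q hq).symm)
  push Not at hall
  obtain ⟨v, hv⟩ := hall
  set U : Set V := {v | v ∉ nb G A ∧ v ≠ a ∧ v ≠ b} with hU
  have hvU : v ∈ U := hv
  set K := compIn G U v
  have hK : CS G K := compIn_cs _ _ _
  have hKU : K ⊆ U := compIn_subset hvU
  have hKS : ∀ x ∈ K, x ∉ nb G A := fun x hx => (hKU hx).1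
  have haK : a ∉ K := fun h => (hKU h).2.1 rfl
  have hbK : b ∉ K := fun h => (hKU h).2.2 rfl
  have hnb : ∀ u ∈ nb G K, u ∈ nb G A ∨ u = a ∨ u = b := by
    rintro u ⟨hu, k, hk, hku⟩
    by_contra! hc
    exact hu (compIn_closed hk hc hku)
  have hN3 : ∀ s1 s2, ∃ q ∈ nb G K, q ∈ nb G A ∧ q ≠ s1 ∧ q ≠ s2 := by
    intro s1 s2
    by_contra! hc
    have hN : ∀ u ∈ nb G K, u ∈ nb G A → u = s1 ∨ u = s2 := by
      intro u h1 h2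
      by_contra! h
      exact h.2 (hc u h1 h2 h.1)
    by_cases haK' : a ∈ nb G K
    · have hbK' : b ∉ nb G K := fun h => hFP.not_both hK hKS ha hb haK' h
      refine hR.small_aux hFP (a := a) (b := b) hK haS hbS hbK hbK' hKS (fun u hu => ?_) hN
      rcases hnb u hu with h | rfl | rfl <;> tauto
    · refine hR.small_aux hFP (a := b) (b := a) hK hbS haS haK haK' hKS (fun u hu => ?_) hN
      rcases hnb u hu with h | rfl | rfl <;> tauto
  obtain ⟨n1, hn1, m1, -⟩ := hN3 a a
  obtain ⟨n2, hn2, m2, h21, -⟩ := hN3 n1 n1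
  obtain ⟨n3, hn3, m3, h31, h32⟩ := hN3 n1 n2
  have hKna : ∃ s ∈ nb G K ∩ nb G A, ∃ t ∈ nb G K ∩ nb G A, s ≠ t ∧ ¬ G.Adj s t := by
    by_contra! hc
    exact h21 (hR.matching hFP m2 m3 m1 (hc n2 ⟨hn2, m2⟩ n3 ⟨hn3, m3⟩ h32.symm)
      (hc n1 ⟨hn1, m1⟩ n3 ⟨hn3, m3⟩ h31.symm))
  obtain ⟨k, hk, hkN⟩ := hR.universal hFP hK hKS (R := nb G K ∩ nb G A) Set.inter_subset_right
    (fun r hr => hr.1.2) hKna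
  have hka : a ≠ k := by rintro rfl; exact haK hk
  have hkb : b ≠ k := by rintro rfl; exact hbK hk
  have edge : ∀ z w x, z ∈ nb G K ∩ nb G A → w ∈ nb G K ∩ nb G A → x ∈ nb G K ∩ nb G A →
      x ≠ z → x ≠ w → G.Adj z w → False := by
    intro z w x hz hw hx hxz hxw hzw
    obtain ⟨y, hy, hyz, hyw, hyx⟩ := hR.four hFP z w x
    have hkS : ∀ r ∈ nb G A, k ≠ r := by rintro r hr rfl; exact hKS _ hk hr
    have haS' : ∀ r ∈ nb G A, a ≠ r := by rintro r hr rfl; exact haN hr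
    have hbS' : ∀ r ∈ nb G A, b ≠ r := by rintro r hr rfl; exact hbN hr
    have p1 := hkS z hz.2
    have p2 := hkS w hw.2
    have p4 := hkS y hy
    have q1 := haS' z hz.2
    have q2 := haS' w hw.2
    have q3 := haS' x hx.2
    have q4 := haS' y hy
    have r1 := hbS' z hz.2
    have r2 := hbS' w hw.2
    have r3 := hbS' x hx.2
    have hzw' := hzw.ne
    refine hR.k5.contra (CS.singleton a) (CS.singleton z) (CS.singleton w)
      (CS.pair (hkN x hx).symm) (CS.pair (hbS y hy))
      (Tch.of a z (haS _ hz.2) (by simp) (by simp) ?_)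
      (Tch.of a w (haS _ hw.2) (by simp) (by simp) ?_)
      (Tch.of a x (haS _ hx.2) (by simp) (by simp) ?_)
      (Tch.of a y (haS _ hy) (by simp) (by simp) ?_)
      (Tch.of z w hzw (by simp) (by simp) ?_)
      (Tch.of z k (hkN z hz).symm (by simp) (by simp) ?_)
      (Tch.of z b (hbS z hz.2).symm (by simp) (by simp) ?_)
      (Tch.of w k (hkN w hw).symm (by simp) (by simp) ?_)
      (Tch.of w b (hbS w hw.2).symm (by simp) (by simp) ?_)
      (Tch.of x b (hbS x hx.2).symm (by simp) (by simp) ?_) <;> grind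
  by_cases e12 : G.Adj n1 n2
  · exact edge n1 n2 n3 ⟨hn1, m1⟩ ⟨hn2, m2⟩ ⟨hn3, m3⟩ h31 h32 e12
  by_cases e13 : G.Adj n1 n3
  · exact edge n1 n3 n2 ⟨hn1, m1⟩ ⟨hn3, m3⟩ ⟨hn2, m2⟩ h21 h32.symm e13
  by_cases e23 : G.Adj n2 n3
  · exact edge n2 n3 n1 ⟨hn2, m2⟩ ⟨hn3, m3⟩ ⟨hn1, m1⟩ h21.symm h31.symm e23
  exact hR.noK33 (K33.mk' h21.symm h31.symm h32.symm hab hka hkb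
    ⟨haS _ m1, haS _ m2, haS _ m3⟩ ⟨hbS _ m1, hbS _ m2, hbS _ m3⟩
    ⟨hkN _ ⟨hn1, m1⟩, hkN _ ⟨hn2, m2⟩, hkN _ ⟨hn3, m3⟩⟩)

/-- A graph satisfying `StarC`, `K₅`-minor-free and without good separators is complete. -/
lemma Red.complete [Finite V] (hR : Red G c) {a b : V} (hab : a ≠ b) : G.Adj a b := by
  by_contra h
  obtain ⟨A', D', hF, -⟩ := closeSep hab h
  exact hR.no_FP hF

end reduced

/-! ### Induced paths and induced cycles -/

section cycles
variable {G : SimpleGraph V} {X : Set V} {s t : V}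

/-- The first `n` values of `f` are, in cyclic order, the vertices of an induced cycle of `G`. -/
def IndCyc (G : SimpleGraph V) (n : ℕ) (f : ℕ → V) : Prop :=
  ∀ i j, i < j → j < n → f i ≠ f j ∧ (G.Adj (f i) (f j) ↔ j = i + 1 ∨ (i = 0 ∧ j + 1 = n))

lemma cycleGraph_adj_of_lt {n : ℕ} (hn : 3 ≤ n) {i j : Fin n} (hij : i < j) :
    (SimpleGraph.cycleGraph n).Adj i j ↔ (j : ℕ) = i + 1 ∨ ((i : ℕ) = 0 ∧ (j : ℕ) + 1 = n) := by
  rw [SimpleGraph.cycleGraph_adj']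
  obtain ⟨i, hi⟩ := i
  obtain ⟨j, hj⟩ := j
  simp only [Fin.lt_def] at hij
  rw [Fin.sub_def, Fin.sub_def]
  change (n - j + i) % n = 1 ∨ (n - i + j) % n = 1 ↔ j = i + 1 ∨ i = 0 ∧ j + 1 = n
  rw [Nat.mod_eq_of_lt (show n - j + i < n by omega), show n - i + j = n + (j - i) by omega,
    Nat.add_mod_left, Nat.mod_eq_of_lt (show j - i < n by omega)]
  omega

lemma IndCyc.hasInducedCycleLen {n : ℕ} {f : ℕ → V} (hn : 3 ≤ n) (h : IndCyc G n f) :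
    HasInducedCycleLen G n := by
  refine ⟨hn, ⟨⟨⟨fun i => f i, ?_⟩, ?_⟩⟩⟩
  · intro i j hij
    by_contra hne
    rcases lt_or_gt_of_ne hne with h' | h'
    · exact (h i j h' j.2).1 hij
    · exact (h j i h' i.2).1 hij.symm
  · intro i j
    change G.Adj (f i) (f j) ↔ _
    rcases lt_trichotomy i j with h' | rfl | h'
    · rw [(h i j h' j.2).2, cycleGraph_adj_of_lt hn h']
    · simp
    · rw [G.adj_comm, SimpleGraph.adj_comm (SimpleGraph.cycleGraph n), (h j i h' i.2).2,
        cycleGraph_adj_of_lt hn h']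

/-- `f` runs along a walk of length `m` from `s` to `t` with all interior vertices in `X`. -/
def PathIn (G : SimpleGraph V) (X : Set V) (s t : V) (m : ℕ) (f : ℕ → V) : Prop :=
  f 0 = s ∧ f m = t ∧ (∀ i, 0 < i → i < m → f i ∈ X) ∧ ∀ i < m, G.Adj (f i) (f (i + 1))

/-- A shortest walk with interior in `X` is an induced path. -/
lemma PathIn.exists_induced (h : ∃ m f, PathIn G X s t m f) :
    ∃ m f, PathIn G X s t m f ∧
      ∀ i j, i < j → j ≤ m → f i ≠ f j ∧ (G.Adj (f i) (f j) ↔ j = i + 1) := by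
  classical
  have hm := Nat.find_spec h
  have hmin : ∀ m' < Nat.find h, ¬ ∃ f, PathIn G X s t m' f := fun m' => Nat.find_min h
  set m := Nat.find h
  obtain ⟨f, hf⟩ := hm
  have hshort : ∀ i k, 0 < k → ¬ ((G.Adj (f i) (f (i + 1 + k)) ∧ i + 1 + k ≤ m) ∨
      (f i = f (i + k) ∧ i + k ≤ m)) := by
    intro i k hk hc
    apply hmin (m - k) (by omega)
    refine ⟨fun p => if p ≤ i then f p else f (p + k), ?_, ?_, ?_, ?_⟩
    · simpa using hf.1
    · simp only
      by_cases h1 : i + k = m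
      · have h2 : m - k = i := by omega
        rw [if_pos h2.le, h2]
        rcases hc with hc | hc
        · omega
        · rw [hc.1, h1, hf.2.1]
      · rw [if_neg (by omega), show m - k + k = m by omega, hf.2.1]
    · intro p hp hpm
      simp only
      split_ifs
      · exact hf.2.2.1 p hp (by omega)
      · exact hf.2.2.1 _ (by omega) (by omega)
    · intro p hp
      simp only
      split_ifs with h1 h2 h2
      · exact hf.2.2.2 p (by omega)
      · obtain rfl : p = i := by omega
        rcases hc with hc | hc
        · exact hc.1
        · rw [hc.1, show p + 1 + k = p + k + 1 by omega]; exact hf.2.2.2 _ (by omega)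
      · omega
      · rw [show p + 1 + k = p + k + 1 by omega]; exact hf.2.2.2 _ (by omega)
  refine ⟨m, f, hf, fun i j hij hj => ⟨fun he => ?_, fun ha => ?_, ?_⟩⟩
  · refine hshort i (j - i) (by omega) ?_
    rw [show i + (j - i) = j by omega]
    exact .inr ⟨he, hj⟩
  · by_contra hne
    refine hshort i (j - i - 1) (by omega) ?_
    rw [show i + 1 + (j - i - 1) = j by omega]
    exact .inl ⟨ha, hj⟩
  · rintro rfl
    exact hf.2.2.2 i (by omega)

lemma PathIn.nil : PathIn G X s s 0 (fun _ => s) := ⟨rfl, rfl, by simp, by simp⟩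

lemma PathIn.snoc {a b : V} {m : ℕ} {f : ℕ → V} (h : PathIn G X s a m f) (hab : G.Adj a b)
    (ha : m = 0 ∨ a ∈ X) : PathIn G X s b (m + 1) (fun i => if i ≤ m then f i else b) := by
  obtain ⟨h1, h2, h3, h4⟩ := h
  refine ⟨by simpa using h1, by simp, ?_, ?_⟩
  · intro i hi him
    simp only
    rw [if_pos (by omega)]
    rcases eq_or_ne i m with rfl | hne
    · rw [h2]; exact ha.resolve_left (by omega)
    · exact h3 i hi (by omega)
  · intro i hi
    simp only
    rw [if_pos (by omega)]
    split_ifs with h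
    · exact h4 i h
    · obtain rfl : i = m := by omega
      rwa [h2]

lemma PathIn.exists_of_cs (hX : CS G X) (hs : s ∈ nb G X) (ht : t ∈ nb G X) :
    ∃ m f, PathIn G X s t m f := by
  obtain ⟨hsX, x, hx, hxs⟩ := hs
  obtain ⟨htX, y, hy, hyt⟩ := ht
  have key : X ⊆ {z | ∃ m f, PathIn G X s z m f} := by
    refine hX.subset_closed hx ⟨_, _, PathIn.nil.snoc hxs.symm (.inl rfl)⟩ ?_
    rintro a ha ⟨m, f, hf⟩ b hb hab
    exact ⟨_, _, hf.snoc hab (.inr ha)⟩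
  obtain ⟨m, f, hf⟩ := key hy
  exact ⟨_, _, hf.snoc hyt (.inr hy)⟩

/-- Two non-adjacent vertices attached to two separated connected sets `X`, `Y` are opposite
vertices of an induced cycle passing through `X` and `Y`. -/
lemma exists_indCyc {Y : Set V} (hst : s ≠ t) (hn : ¬ G.Adj s t) (hX : CS G X) (hY : CS G Y)
    (hXY : Anti G X Y) (hsX : s ∈ nb G X) (htX : t ∈ nb G X) (hsY : s ∈ nb G Y)
    (htY : t ∈ nb G Y) : ∃ m l f g, 2 ≤ m ∧ 2 ≤ l ∧ PathIn G X s t m f ∧ PathIn G Y s t l g ∧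
      IndCyc G (m + l) (fun i => if i ≤ m then f i else g (m + l - i)) := by
  obtain ⟨m, f, hf, hfi⟩ := PathIn.exists_induced (PathIn.exists_of_cs hX hsX htX)
  obtain ⟨l, g, hg, hgi⟩ := PathIn.exists_induced (PathIn.exists_of_cs hY hsY htY)
  have two : ∀ {Z m f}, PathIn G Z s t m f → 2 ≤ m := by
    rintro Z m f ⟨h0, hm, h1, h2⟩
    by_contra hlt
    rcases Nat.lt_or_ge m 1 with h | h
    · obtain rfl : m = 0 := by omega
      exact hst (h0.symm.trans hm)
    · obtain rfl : m = 1 := by omega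
      have := h2 0 (by omega)
      rw [h0, zero_add, hm] at this
      exact hn this
  have hm2 := two hf
  have hl2 := two hg
  refine ⟨m, l, f, g, hm2, hl2, hf, hg, fun i j hij hj => ?_⟩
  simp only
  by_cases h1 : j ≤ m
  · rw [if_pos (by omega), if_pos h1, (hfi i j hij h1).2]
    exact ⟨(hfi i j hij h1).1, by omega⟩
  · rw [if_neg h1]
    by_cases h2 : i ≤ m
    · rw [if_pos h2]
      have hgY := hg.2.2.1 (m + l - j) (by omega) (by omega)
      rcases Nat.eq_zero_or_pos i with rfl | hi0
      · rw [hf.1, ← hg.1]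
        have := hgi 0 (m + l - j) (by omega) (by omega)
        exact ⟨this.1, by rw [this.2]; omega⟩
      rcases eq_or_ne i m with rfl | him
      · rw [hf.2.1, ← hg.2.1]
        have := hgi (i + l - j) l (by omega) (by omega)
        exact ⟨this.1.symm, by rw [G.adj_comm, this.2]; omega⟩
      · have hfX := hf.2.2.1 i hi0 (by omega)
        refine ⟨fun he => Set.disjoint_left.1 hXY.1 hfX (he ▸ hgY), ?_⟩
        constructor
        · exact fun h => absurd h (hXY.2 _ hfX _ hgY)
        · omega
    · rw [if_neg h2]
      have := hgi (m + l - j) (m + l - i) (by omega) (by omega)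
      exact ⟨this.1.symm, by rw [G.adj_comm, this.2]; omega⟩

/-- Chordal graphs satisfy `StarC`, vacuously. -/
lemma ChordalG.starC (h : ChordalG G) (c : V → Bool) : StarC G c := by
  intro s t X Y hst hn hX hY hXY h1 h2 h3 h4
  obtain ⟨m, l, f, g, hm, hl, -, -, hc⟩ := exists_indCyc hst hn hX hY hXY h1 h2 h3 h4
  have := h _ (hc.hasInducedCycleLen (by omega))
  omega

/-- A bipartite graph without long induced cycles satisfies `StarC` for its bipartition. -/
lemma starC_of_bipartite {c : V → Bool} (hc : ∀ u v, G.Adj u v → c u ≠ c v)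
    (hcyc : ∀ n, 6 ≤ n → ¬ HasInducedCycleLen G n) : StarC G c := by
  intro s t X Y hst hn hX hY hXY h1 h2 h3 h4
  obtain ⟨m, l, f, g, hm, hl, hf, hg, hC⟩ := exists_indCyc hst hn hX hY hXY h1 h2 h3 h4
  have hle : m + l < 6 := by
    by_contra h
    exact hcyc _ (by omega) (hC.hasInducedCycleLen (by omega))
  have col : ∀ {Z m f}, PathIn G Z s t m f → c t = (c s ^^ decide (m % 2 = 1)) := by
    rintro Z m f ⟨h0, hm, -, h2⟩
    have : ∀ i ≤ m, c (f i) = (c s ^^ decide (i % 2 = 1)) := by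
      intro i hi
      induction i with
      | zero => simp [h0]
      | succ i ih =>
        have h3 := ih (by omega)
        have h4 := hc _ _ (h2 i (by omega))
        rcases Nat.mod_two_eq_zero_or_one i with h5 | h5
        · have h6 : (i + 1) % 2 = 1 := by omega
          simp only [h5, h6] at h3 ⊢
          revert h3 h4
          cases c s <;> cases c (f i) <;> cases c (f (i + 1)) <;> simp
        · have h6 : (i + 1) % 2 = 0 := by omega
          simp only [h5, h6] at h3 ⊢
          revert h3 h4
          cases c s <;> cases c (f i) <;> cases c (f (i + 1)) <;> simp
    rw [← hm, this m le_rfl]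
  have e1 := col hf
  have e2 := col hg
  have hpar : m % 2 = l % 2 := by
    rw [e1] at e2
    rcases Nat.mod_two_eq_zero_or_one m with h5 | h5 <;>
      rcases Nat.mod_two_eq_zero_or_one l with h6 | h6 <;> simp [h5, h6] at e2 ⊢
  obtain rfl : m = 2 := by omega
  have hs := hf.2.2.2 0 (by omega)
  have ht := hf.2.2.2 1 (by omega)
  have h2' := hf.2.1
  rw [hf.1] at hs
  norm_num at ht hs
  rw [h2'] at ht
  refine ⟨by simpa using e1.symm, f 1, hf.2.2.1 1 (by omega) (by omega), hs.symm, ht, ?_⟩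
  exact (hc _ _ hs).symm

/-- In a bridgeless chordal graph every edge lies in a triangle. -/
lemma exists_triangle (hb : BridgelessG G) (hch : ChordalG G) {u v : V} (huv : G.Adj u v) :
    ∃ w, G.Adj u w ∧ G.Adj w v := by
  obtain ⟨a, p, hp, hmem⟩ := hb s(u, v) huv
  have hr := (SimpleGraph.adj_and_reachable_delete_edges_iff_exists_cycle.2 ⟨a, p, hp, hmem⟩).2
  set G' := G.deleteEdges {s(u, v)} with hG'
  have hadj : ∀ a b, G'.Adj a b ↔ G.Adj a b ∧ ¬ (s(a, b) = s(u, v)) := by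
    intro a b; rw [hG', SimpleGraph.deleteEdges_adj]; simp
  have hex : ∃ m f, PathIn G' Set.univ u v m f := by
    rw [SimpleGraph.reachable_iff_reflTransGen] at hr
    have key : ∀ z, Relation.ReflTransGen G'.Adj u z → ∃ m f, PathIn G' Set.univ u z m f := by
      intro z hz
      induction hz with
      | refl => exact ⟨_, _, PathIn.nil⟩
      | tail _ hbc ih =>
        obtain ⟨m, f, hf⟩ := ih
        exact ⟨_, _, hf.snoc hbc (.inr trivial)⟩
    exact key v hr
  obtain ⟨m, f, hf, hfi⟩ := PathIn.exists_induced hex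
  have hm2 : 2 ≤ m := by
    by_contra hlt
    rcases Nat.lt_or_ge m 1 with h | h
    · obtain rfl : m = 0 := by omega
      exact huv.ne (hf.1.symm.trans hf.2.1)
    · obtain rfl : m = 1 := by omega
      have := hf.2.2.2 0 (by omega)
      rw [hf.1, zero_add, hf.2.1, hadj] at this
      exact this.2 rfl
  have hC : IndCyc G (m + 1) f := by
    intro i j hij hj
    have h1 := hfi i j hij (by omega)
    refine ⟨h1.1, ?_⟩
    by_cases he : s(f i, f j) = s(u, v)
    · have hij' : i = 0 ∧ j = m := by
        by_contra hne
        rw [← hf.1, ← hf.2.1, Sym2.eq_iff] at he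
        rcases he with ⟨e1, e2⟩ | ⟨e1, e2⟩
        · by_cases hi : i = 0
          · exact (hfi j m (by omega) le_rfl).1 e2
          · exact (hfi 0 i (by omega) (by omega)).1 e1.symm
        · exact (hfi 0 j (by omega) (by omega)).1 e2.symm
      obtain ⟨rfl, rfl⟩ := hij'
      rw [hf.1, hf.2.1]
      simp [huv]
    · have h2 : G.Adj (f i) (f j) ↔ G'.Adj (f i) (f j) := by rw [hadj]; tauto
      rw [h2, h1.2]
      constructor
      · exact .inl
      · rintro (h | ⟨rfl, h⟩)
        · exact h
        · obtain rfl : j = m := by omega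
          rw [hf.1, hf.2.1] at he
          exact absurd rfl he
  have := hch _ (hC.hasInducedCycleLen (by omega))
  obtain rfl : m = 2 := by omega
  have h1 := hf.2.2.2 0 (by omega)
  have h2 := hf.2.2.2 1 (by omega)
  have h3 := hf.2.1
  rw [hf.1] at h1
  norm_num at h1 h2
  rw [h3] at h2
  exact ⟨f 1, ((hadj _ _).1 h1).1, ((hadj _ _).1 h2).1⟩

end cycles

/-! ### Sums of cuts on complete graphs and gluing -/

/-- The number of coordinates, as an integer, in which two Boolean vectors differ. A sum of `d` cuts
is encoded by `φ : V → Fin d → Bool`, the `i`-th cut being `{v | φ v i}`, and takes the value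
`hd (φ u) (φ v)` on the pair `uv`. -/
def hd {d : ℕ} (f g : Fin d → Bool) : ℤ := ∑ i, if f i = g i then 0 else 1

/-- The conditions on a sum `y` of `d` cuts of a complete graph imposed by its triangles. -/
structure Tri (d : ℕ) (y : V → V → ℤ) : Prop where
  symm : ∀ u v, y u v = y v u
  self : ∀ u, y u u = 0
  tri : ∀ u v w, y u w ≤ y u v + y v w
  per : ∀ u v w, y u v + y v w + y u w ≤ 2 * d
  even : ∀ u v w, 2 ∣ y u v + y v w + y u w

lemma Tri.comap {W : Type} {d : ℕ} {y : V → V → ℤ} (h : Tri d y) (f : W → V) :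
    Tri d (fun u v => y (f u) (f v)) :=
  ⟨fun _ _ => h.symm _ _, fun _ => h.self _, fun _ _ _ => h.tri _ _ _, fun _ _ _ => h.per _ _ _,
    fun _ _ _ => h.even _ _ _⟩

section hd
variable {d : ℕ}

lemma hd_symm (f g : Fin d → Bool) : hd f g = hd g f := by
  unfold hd; exact Finset.sum_congr rfl fun i _ => by simp only [eq_comm]

lemma hd_self (f : Fin d → Bool) : hd f f = 0 := by simp [hd]

/-- Two triples of Boolean vectors with the same pairwise distances differ by a permutation of the
coordinates followed by a translation, which is then applied to the whole family `φ₂`. -/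
lemma exists_align (φ₁ φ₂ : V → Fin d → Bool) (z1 z2 z3 : V)
    (h12 : hd (φ₁ z1) (φ₁ z2) = hd (φ₂ z1) (φ₂ z2))
    (h13 : hd (φ₁ z1) (φ₁ z3) = hd (φ₂ z1) (φ₂ z3))
    (h23 : hd (φ₁ z2) (φ₁ z3) = hd (φ₂ z2) (φ₂ z3)) :
    ∃ φ : V → Fin d → Bool, (∀ u v, hd (φ u) (φ v) = hd (φ₂ u) (φ₂ v)) ∧
      φ z1 = φ₁ z1 ∧ φ z2 = φ₁ z2 ∧ φ z3 = φ₁ z3 := by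
  let τ : (V → Fin d → Bool) → Fin d → Bool × Bool :=
    fun φ i => (φ z1 i ^^ φ z2 i, φ z1 i ^^ φ z3 i)
  have aux : ∀ a b c k1 k2 : Bool,
      2 * (if ((a ^^ b, a ^^ c) : Bool × Bool) = (k1, k2) then (1 : ℤ) else 0) =
        (if k1 then 0 else if k2 then 0 else 2) * 1 +
        (if k1 then 1 else if k2 then -1 else -1) * (if a = b then 0 else 1) +
        (if k1 then (if k2 then 1 else -1) else (if k2 then 1 else -1)) * (if a = c then 0 else 1) +
        (if k1 then (if k2 then -1 else 1) else (if k2 then 1 else -1)) *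
          (if b = c then 0 else 1) := by
    decide
  have aux2 : ∀ p q a b : Bool, (p ^^ q) = (a ^^ b) → (q ^^ p ^^ a) = b := by decide
  have hcard : ∀ k : Bool × Bool,
      Fintype.card {i // τ φ₁ i = k} = Fintype.card {i // τ φ₂ i = k} := by
    intro ⟨k1, k2⟩
    have key : ∀ φ : V → Fin d → Bool,
        2 * (Fintype.card {i // τ φ i = (k1, k2)} : ℤ) =
          (if k1 then 0 else if k2 then 0 else 2 * (d : ℤ)) +
          (if k1 then 1 else if k2 then -1 else -1) * hd (φ z1) (φ z2) +
          (if k1 then (if k2 then 1 else -1) else (if k2 then 1 else -1)) * hd (φ z1) (φ z3) +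
          (if k1 then (if k2 then -1 else 1) else (if k2 then 1 else -1)) *
            hd (φ z2) (φ z3) := by
      intro φ
      have hd' : (d : ℤ) = ∑ _i : Fin d, 1 := by simp
      rw [Fintype.card_subtype, Finset.card_filter]
      unfold hd
      rw [hd']
      push_cast
      have h0 : (if k1 then 0 else if k2 then 0 else 2 * ∑ _i : Fin d, (1 : ℤ)) =
          (if k1 then 0 else if k2 then 0 else 2) * ∑ _i : Fin d, (1 : ℤ) := by
        split_ifs <;> simp
      rw [h0]
      simp only [Finset.mul_sum, ← Finset.sum_add_distrib]
      refine Finset.sum_congr rfl fun i _ => ?_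
      exact aux _ _ _ _ _
    have e1 := key φ₁
    have e2 := key φ₂
    rw [h12, h13, h23, ← e2] at e1
    omega
  let σ : Fin d ≃ Fin d := Equiv.ofFiberEquiv fun k => Fintype.equivOfCardEq (hcard k)
  have hσ : ∀ i, τ φ₂ (σ i) = τ φ₁ i := fun i => Equiv.ofFiberEquiv_map _ i
  refine ⟨fun v i => (φ₂ v (σ i) ^^ φ₂ z1 (σ i) ^^ φ₁ z1 i), fun u v => ?_, ?_, ?_, ?_⟩
  · unfold hd
    rw [← Equiv.sum_comp σ (fun i => if φ₂ u i = φ₂ v i then (0 : ℤ) else 1)]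
    refine Finset.sum_congr rfl fun i _ => ?_
    congr 1
    simp
  · funext i; simp
  · funext i
    exact aux2 _ _ _ _ (congrArg Prod.fst (hσ i))
  · funext i
    exact aux2 _ _ _ _ (congrArg Prod.snd (hσ i))

/-- Gluing of two sums of `d` cuts along at most three vertices. -/
lemma exists_glue (V1 V2 : Set V) (φ₁ φ₂ : V → Fin d → Bool) (z1 z2 z3 : V)
    (hS : V1 ∩ V2 ⊆ {z1, z2, z3}) (h12 : hd (φ₁ z1) (φ₁ z2) = hd (φ₂ z1) (φ₂ z2))
    (h13 : hd (φ₁ z1) (φ₁ z3) = hd (φ₂ z1) (φ₂ z3))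
    (h23 : hd (φ₁ z2) (φ₁ z3) = hd (φ₂ z2) (φ₂ z3)) :
    ∃ φ : V → Fin d → Bool, (∀ u ∈ V1, ∀ v ∈ V1, hd (φ u) (φ v) = hd (φ₁ u) (φ₁ v)) ∧
      (∀ u ∈ V2, ∀ v ∈ V2, hd (φ u) (φ v) = hd (φ₂ u) (φ₂ v)) := by
  classical
  obtain ⟨ψ, hψ, e1, e2, e3⟩ := exists_align φ₁ φ₂ z1 z2 z3 h12 h13 h23
  have hV2 : ∀ u ∈ V2, (if u ∈ V1 then φ₁ u else ψ u) = ψ u := by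
    intro u hu
    split_ifs with h
    · rcases hS ⟨h, hu⟩ with rfl | rfl | rfl
      · exact e1.symm
      · exact e2.symm
      · exact e3.symm
    · rfl
  refine ⟨fun u => if u ∈ V1 then φ₁ u else ψ u, fun u hu v hv => ?_, fun u hu v hv => ?_⟩
  · simp only [if_pos hu, if_pos hv]
  · simp only [hV2 u hu, hV2 v hv, hψ]

/-- `y` is a sum of `d` cuts of the complete graph on `V`. -/
def SumCut (d : ℕ) (y : V → V → ℤ) : Prop := ∃ φ : V → Fin d → Bool, ∀ u v, hd (φ u) (φ v) = y u v

lemma SumCut.add {d e : ℕ} {y z : V → V → ℤ} (hy : SumCut d y) (hz : SumCut e z) : SumCut (d + e) (y + z) := by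
  obtain ⟨φ, hφ⟩ := hy
  obtain ⟨ψ, hψ⟩ := hz
  refine ⟨fun v => Fin.append (φ v) (ψ v), fun u v => ?_⟩
  rw [Pi.add_apply, Pi.add_apply, ← hφ, ← hψ]
  unfold hd
  rw [Fin.sum_univ_add]
  simp

lemma sumCut_smul (n : ℕ) (f : V → Bool) :
    SumCut n (fun u v => n * if f u = f v then 0 else 1) :=
  ⟨fun v _ => f v, fun u v => by simp [hd]⟩

/-- On four vertices the triangle conditions characterize sums of `d` cuts. -/
lemma Tri.sumCut_four {y : Fin 4 → Fin 4 → ℤ} (h : Tri d y) : SumCut d y := by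
  -- The multiplicities of the four cuts `{i}` are `a i`, those of the three cuts `{0, j} | rest`
  -- are `b j`, and `e` is that of the empty cut. Each sum `a i + b j` or `a i + e` is half the slack
  -- of a triangle condition, so all of them are determined by `a 0`.
  obtain ⟨P3, hP3⟩ := h.even 0 1 2
  obtain ⟨P2, hP2⟩ := h.even 0 1 3
  obtain ⟨P1, hP1⟩ := h.even 0 2 3
  obtain ⟨P0, hP0⟩ := h.even 1 2 3
  have tri := h.tri
  have per := h.per
  have symm := h.symm
  have t1 := tri 0 1 2
  have t2 := tri 1 0 2
  have t3 := tri 0 2 1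
  have t4 := tri 0 1 3
  have t5 := tri 1 0 3
  have t6 := tri 0 3 1
  have t7 := tri 0 2 3
  have t8 := tri 2 0 3
  have t9 := tri 0 3 2
  have t10 := tri 1 2 3
  have t11 := tri 2 1 3
  have t12 := tri 1 3 2
  have p1 := per 0 1 2
  have p2 := per 0 1 3
  have p3 := per 0 2 3
  have p4 := per 1 2 3
  rw [symm 1 0] at t2 t5
  rw [symm 2 0] at t8
  rw [symm 2 1] at t3 t11
  rw [symm 3 1] at t6
  rw [symm 3 2] at t9 t12
  have s10 := symm 1 0
  have s20 := symm 2 0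
  have s30 := symm 3 0
  have s21 := symm 2 1
  have s31 := symm 3 1
  have s32 := symm 3 2
  have hex : ∃ a0 a1 a2 a3 b1 b2 b3 e : ℕ, y 0 1 = a0 + a1 + b2 + b3 ∧ y 0 2 = a0 + a2 + b1 + b3 ∧
      y 0 3 = a0 + a3 + b1 + b2 ∧ y 2 3 = a2 + a3 + b2 + b3 ∧ y 1 3 = a1 + a3 + b1 + b3 ∧
      y 1 2 = a1 + a2 + b1 + b2 ∧ a0 + a1 + a2 + a3 + b1 + b2 + b3 + e = d := by
    obtain ⟨t, h1, h2, h3, h4, h5, h6, h7, h8⟩ : ∃ t : ℤ, 0 ≤ t ∧ t ≤ P3 - y 1 2 ∧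
        t ≤ P2 - y 1 3 ∧ t ≤ P1 - y 2 3 ∧ t ≤ d - P0 ∧ P1 - P0 ≤ t ∧ P2 - P0 ≤ t ∧ P3 - P0 ≤ t :=
      ⟨max (max 0 (P1 - P0)) (max (P2 - P0) (P3 - P0)), by omega⟩
    obtain ⟨a0, k0⟩ := Int.eq_ofNat_of_zero_le h1
    obtain ⟨a1, k1⟩ := Int.eq_ofNat_of_zero_le (show 0 ≤ P0 - P1 + t by linarith)
    obtain ⟨a2, k2⟩ := Int.eq_ofNat_of_zero_le (show 0 ≤ P0 - P2 + t by linarith)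
    obtain ⟨a3, k3⟩ := Int.eq_ofNat_of_zero_le (show 0 ≤ P0 - P3 + t by linarith)
    obtain ⟨b1, m1⟩ := Int.eq_ofNat_of_zero_le (show 0 ≤ P1 - y 2 3 - t by linarith)
    obtain ⟨b2, m2⟩ := Int.eq_ofNat_of_zero_le (show 0 ≤ P2 - y 1 3 - t by linarith)
    obtain ⟨b3, m3⟩ := Int.eq_ofNat_of_zero_le (show 0 ≤ P3 - y 1 2 - t by linarith)
    obtain ⟨e, ke⟩ := Int.eq_ofNat_of_zero_le (show 0 ≤ d - P0 - t by linarith)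
    refine ⟨a0, a1, a2, a3, b1, b2, b3, e, ?_, ?_, ?_, ?_, ?_, ?_, ?_⟩
    case refine_7 => zify; linarith
    all_goals linarith
  obtain ⟨a0, a1, a2, a3, b1, b2, b3, e, e1, e2, e3, e4, e5, e6, rfl⟩ := hex
  have hR := (((((((sumCut_smul a0 ![true, false, false, false]).add
    (sumCut_smul a1 ![false, true, false, false])).add
    (sumCut_smul a2 ![false, false, true, false])).add
    (sumCut_smul a3 ![false, false, false, true])).add
    (sumCut_smul b1 ![true, true, false, false])).add
    (sumCut_smul b2 ![true, false, true, false])).add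
    (sumCut_smul b3 ![true, false, false, true])).add (sumCut_smul e fun _ => true)
  have self := h.self
  obtain ⟨φ, hφ⟩ := hR
  refine ⟨φ, fun u v => (hφ u v).trans ?_⟩
  fin_cases u <;> fin_cases v <;> simp [self, s10, s20, s30, s21, s31, s32, e1, e2, e3, e4, e5, e6]

end hd

/-! ### Sums of cuts on `K₅`-minor-free graphs -/

/-- A complete `K₅`-minor-free graph has at most four vertices. -/
lemma card_le_four [Finite V] {G : SimpleGraph V} (hK : K5Free G)
    (h : ∀ a b, a ≠ b → G.Adj a b) : Nat.card V ≤ 4 := by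
  by_contra hc
  have := Fintype.ofFinite V
  have hle : Fintype.card (Fin 5) ≤ Fintype.card V := by
    rw [← Nat.card_eq_fintype_card (α := V), Fintype.card_fin]; omega
  obtain ⟨e⟩ := Function.Embedding.nonempty_of_card_le hle
  refine hK ⟨fun u => {e u}, fun u => by simp, fun u v huv => by simpa using huv, fun u => ?_, ?_⟩
  · exact cs_iff_connected.1 (CS.singleton _)
  · intro u v huv
    exact ⟨_, rfl, _, rfl, h _ _ fun he => huv.ne (e.injective he)⟩

/-- If `G` is `K₅`-minor-free and satisfies `StarC`, every vector on the pairs of vertices which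
satisfies the triangle conditions restricts to a sum of `d` cuts of `G`. A graph with a good
separator is split along it into two smaller graphs; otherwise `G` is complete. -/
theorem exists_cuts {d : ℕ} [Finite V] {G : SimpleGraph V} {c : V → Bool} (hs : StarC G c)
    (hK : K5Free G) {y : V → V → ℤ} (hy : Tri d y) :
    ∃ φ : V → Fin d → Bool, ∀ u v, G.Adj u v → hd (φ u) (φ v) = y u v := by
  classical
  induction hn : Nat.card V using Nat.strong_induction_on generalizing V with
  | _ n ih =>
  by_cases hsep : ∃ A B, GoodSep G A B
  · obtain ⟨A, B, hg⟩ := hsep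
    have hFP := hg.1
    set S := nb G A with hS
    have hs' := hs.complG hFP hS
    have hK' := hK.complG hg hS
    have sub : ∀ (U : Set V), U ≠ Set.univ → ∃ φ : V → Fin d → Bool,
        ∀ u ∈ U, ∀ v ∈ U, (complG G S).Adj u v → hd (φ u) (φ v) = y u v := by
      intro U hU
      have hlt : Nat.card U < n := by
        rw [← hn, Nat.card_coe_set_eq, ← Set.ncard_univ]
        exact Set.ncard_lt_ncard (Set.ssubset_univ_iff.2 hU)
      obtain ⟨φ, hφ⟩ := ih _ hlt (hs'.comap (Subtype.val : U → V) Subtype.val_injective)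
        (hK'.of_inj Subtype.val Subtype.val_injective (fun _ _ h => h)) (hy.comap Subtype.val) rfl
      refine ⟨fun v => if h : v ∈ U then φ ⟨v, h⟩ else fun _ => false, fun u hu v hv huv => ?_⟩
      simp only [dif_pos hu, dif_pos hv]
      exact hφ ⟨u, hu⟩ ⟨v, hv⟩ huv
    obtain ⟨a, ha⟩ := hFP.cA.1
    obtain ⟨b, hb⟩ := hFP.cB.1
    obtain ⟨φ₁, h1⟩ := sub (A ∪ S) (fun h => by
      have : b ∈ A ∪ S := h ▸ trivial
      rcases this with h' | h'
      · exact Set.disjoint_left.1 hFP.disj h' hb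
      · exact hFP.notMem_left h' hb)
    obtain ⟨φ₂, h2⟩ := sub Aᶜ (fun h => by
      have : a ∈ Aᶜ := h ▸ trivial
      exact this ha)
    have hglue : ∃ φ : V → Fin d → Bool,
        (∀ u ∈ A ∪ S, ∀ v ∈ A ∪ S, hd (φ u) (φ v) = hd (φ₁ u) (φ₁ v)) ∧
        (∀ u ∈ Aᶜ, ∀ v ∈ Aᶜ, hd (φ u) (φ v) = hd (φ₂ u) (φ₂ v)) := by
      obtain ⟨-, w1, w2, w3, hz, -⟩ := hg
      have hSd : ∀ s ∈ S, ∀ t ∈ S, hd (φ₁ s) (φ₁ t) = hd (φ₂ s) (φ₂ t) := by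
        intro s hs t ht
        rcases eq_or_ne s t with rfl | hne
        · rw [hd_self, hd_self]
        · rw [h1 s (.inr hs) t (.inr ht) ⟨hne, .inr ⟨hs, ht⟩⟩,
            h2 s hs.1 t ht.1 ⟨hne, .inr ⟨hs, ht⟩⟩]
      have hint : (A ∪ S) ∩ Aᶜ ⊆ S := by
        rintro x ⟨hx | hx, hx'⟩
        · exact absurd hx hx'
        · exact hx
      by_cases hne : S.Nonempty
      · -- The three gluing vertices are chosen inside `S`.
        obtain ⟨s0, hs0⟩ := hne
        have hw : ∀ w, (if w ∈ S then w else s0) ∈ S := by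
          intro w; split_ifs with h; exacts [h, hs0]
        refine exists_glue _ _ φ₁ φ₂ (if w1 ∈ S then w1 else s0) (if w2 ∈ S then w2 else s0)
          (if w3 ∈ S then w3 else s0) ?_ (hSd _ (hw _) _ (hw _)) (hSd _ (hw _) _ (hw _))
          (hSd _ (hw _) _ (hw _))
        intro x hx
        have hxS := hint hx
        rcases hz hxS with rfl | rfl | rfl
        · left; rw [if_pos hxS]
        · right; left; rw [if_pos hxS]
        · right; right; rw [if_pos hxS]; rfl
      · refine exists_glue _ _ φ₁ φ₂ a a a (fun x hx => absurd ⟨x, hint hx⟩ hne) ?_ ?_ ?_ <;>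
          rw [hd_self, hd_self]
    obtain ⟨φ, e1, e2⟩ := hglue
    refine ⟨φ, ?_⟩
    have key : ∀ u v, G.Adj u v → u ∈ A → hd (φ u) (φ v) = y u v := by
      intro u v huv hu
      have hv : v ∈ A ∪ S := by
        by_cases hv : v ∈ A
        · exact .inl hv
        · exact .inr ⟨hv, u, hu, huv⟩
      rw [e1 u (.inl hu) v hv, h1 u (.inl hu) v hv (le_complG huv)]
    intro u v huv
    by_cases hu : u ∈ A
    · exact key u v huv hu
    by_cases hv : v ∈ A
    · rw [hd_symm, hy.symm, key v u huv.symm hv]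
    · rw [e2 u hu v hv, h2 u hu v hv (le_complG huv)]
  · have hcomp : ∀ a b, a ≠ b → G.Adj a b := fun a b hab =>
      Red.complete (c := c) ⟨hs, hK, fun A B h => hsep ⟨A, B, h⟩⟩ hab
    have hcard := card_le_four hK hcomp
    rcases isEmpty_or_nonempty V with he | hne
    · exact ⟨fun v => (he.false v).elim, fun u => (he.false u).elim⟩
    have := Fintype.ofFinite V
    have hle : Fintype.card V ≤ Fintype.card (Fin 4) := by
      rw [← Nat.card_eq_fintype_card (α := V), Fintype.card_fin]; exact hcard
    obtain ⟨e⟩ := Function.Embedding.nonempty_of_card_le hle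
    obtain ⟨φ, hφ⟩ := (hy.comap (Function.invFun e)).sumCut_four
    refine ⟨fun v => φ (e v), fun u v _ => ?_⟩
    rw [hφ]
    simp only [Function.leftInverse_invFun e.injective _]

/-! ### Tight antipodal metrics -/

/-- An integral semimetric `D` on a set with an antipodal map `bar`, invariant under this map, in which
antipodal points are at distance `d`, and with the parities prescribed by a potential `P`. -/
structure Met {Z : Type} (bar : Z → Z) (P : Z → ℤ) (d : ℤ) (D : Z → Z → ℤ) : Prop where
  self : ∀ p, D p p = 0
  symm : ∀ p q, D p q = D q p
  anti : ∀ p q, D (bar p) (bar q) = D p q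
  tri : ∀ p q r, D p r ≤ D p q + D q r
  dia : ∀ p, D p (bar p) = d
  even : ∀ p q, 2 ∣ D p q + P p + P q

section met
variable {Z : Type} {bar : Z → Z} {P : Z → ℤ} {d : ℤ} {D : Z → Z → ℤ}

lemma Met.nonneg (h : Met bar P d D) (p q : Z) : 0 ≤ D p q := by
  have h1 := h.tri p q p
  rw [h.self, h.symm q p] at h1
  omega

/-- Shortening the distance between `a` and `b` (and between their antipodes) to `t`. -/
lemma Met.shorten (hbar : ∀ p, bar (bar p) = p) (h : Met bar P d D) (a b : Z) (t : ℤ) (ht : 0 ≤ t)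
    (hd : d ≤ t + D a (bar b)) (hpar : 2 ∣ t + P a + P b) :
    ∃ D', Met bar P d D' ∧ (∀ p q, D' p q ≤ D p q) ∧ D' a b ≤ t := by
  have hn := h.nonneg
  obtain ⟨St, hSt⟩ : ∃ St : Z → Z → Prop, ∀ r s, St r s ↔ (r = a ∧ s = b) ∨ (r = b ∧ s = a) ∨
      (r = bar a ∧ s = bar b) ∨ (r = bar b ∧ s = bar a) := ⟨_, fun _ _ => Iff.rfl⟩
  have hD' : ∃ D' : Z → Z → ℤ, (∀ p q, D' p q ≤ D p q) ∧
      (∀ r s, St r s → ∀ p q, D' p q ≤ D p r + t + D s q) ∧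
      (∀ p q, D' p q = D p q ∨ ∃ r s, St r s ∧ D' p q = D p r + t + D s q) := by
    refine ⟨fun p q => min (D p q) (min (min (D p a + t + D b q) (D p b + t + D a q))
      (min (D p (bar a) + t + D (bar b) q) (D p (bar b) + t + D (bar a) q))), fun p q => ?_,
      fun r s hrs p q => ?_, fun p q => ?_⟩
    · simp
    · rw [hSt] at hrs
      rcases hrs with ⟨rfl, rfl⟩ | ⟨rfl, rfl⟩ | ⟨rfl, rfl⟩ | ⟨rfl, rfl⟩ <;> simp
    · have k1 := (hSt a b).2 (by tauto)
      have k2 := (hSt b a).2 (by tauto)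
      have k3 := (hSt (bar a) (bar b)).2 (by tauto)
      have k4 := (hSt (bar b) (bar a)).2 (by tauto)
      simp only
      rcases min_choice (D p q) (min (min (D p a + t + D b q) (D p b + t + D a q))
        (min (D p (bar a) + t + D (bar b) q) (D p (bar b) + t + D (bar a) q))) with e | e
      · exact .inl e
      right
      rw [e]
      rcases min_choice (min (D p a + t + D b q) (D p b + t + D a q))
        (min (D p (bar a) + t + D (bar b) q) (D p (bar b) + t + D (bar a) q)) with e | e <;> rw [e]
      · rcases min_choice (D p a + t + D b q) (D p b + t + D a q) with e | e <;> rw [e]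
        exacts [⟨_, _, k1, rfl⟩, ⟨_, _, k2, rfl⟩]
      · rcases min_choice (D p (bar a) + t + D (bar b) q) (D p (bar b) + t + D (bar a) q)
          with e | e <;> rw [e]
        exacts [⟨_, _, k3, rfl⟩, ⟨_, _, k4, rfl⟩]
  obtain ⟨D', hle, hst, hor⟩ := hD'
  have hbar' : ∀ p q, D (bar p) q = D p (bar q) := fun p q => by rw [← h.anti p, hbar]
  have Ssymm : ∀ r s, St r s → St s r := by
    intro r s; rw [hSt, hSt]; tauto
  have Sbar : ∀ r s, St r s → St (bar r) (bar s) := by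
    intro r s; rw [hSt, hSt]
    rintro (⟨rfl, rfl⟩ | ⟨rfl, rfl⟩ | ⟨rfl, rfl⟩ | ⟨rfl, rfl⟩) <;> simp [hbar]
  have Sd : ∀ r s, St r s → d ≤ t + D r (bar s) := by
    intro r s; rw [hSt]
    have e : D b (bar a) = D a (bar b) := by rw [h.symm, hbar']
    rintro (⟨rfl, rfl⟩ | ⟨rfl, rfl⟩ | ⟨rfl, rfl⟩ | ⟨rfl, rfl⟩) <;>
      (try simp only [hbar, hbar']) <;> omega
  have Srel : ∀ r s r' s', St r s → St r' s' → (r' = r ∧ s' = s) ∨ (r' = s ∧ s' = r) ∨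
      (r' = bar r ∧ s' = bar s) ∨ (r' = bar s ∧ s' = bar r) := by
    intro r s r' s'; rw [hSt, hSt]
    rintro (⟨rfl, rfl⟩ | ⟨rfl, rfl⟩ | ⟨rfl, rfl⟩ | ⟨rfl, rfl⟩) <;> (try simp only [hbar]) <;> tauto
  have Spar : ∀ r s, St r s → 2 ∣ t + P r + P s := by
    intro r s; rw [hSt]
    have e1 := h.even a (bar a)
    have e2 := h.even b (bar b)
    rw [h.dia] at e1 e2
    rintro (⟨rfl, rfl⟩ | ⟨rfl, rfl⟩ | ⟨rfl, rfl⟩ | ⟨rfl, rfl⟩) <;> omega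
  have hsymm : ∀ p q, D' p q ≤ D' q p := by
    intro p q
    rcases hor q p with e | ⟨r, s, hrs, e⟩
    · rw [e, h.symm]; exact hle p q
    · rw [e]
      have := hst s r (Ssymm r s hrs) p q
      rw [h.symm p s, h.symm r q] at this
      omega
  have hanti : ∀ p q, D' (bar p) (bar q) ≤ D' p q := by
    intro p q
    rcases hor p q with e | ⟨r, s, hrs, e⟩
    · rw [e, ← h.anti]; exact hle _ _
    · rw [e, ← h.anti p, ← h.anti s]
      exact hst _ _ (Sbar r s hrs) _ _
  refine ⟨D', ⟨fun p => le_antisymm ((hle p p).trans (h.self p).le) ?_,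
    fun p q => le_antisymm (hsymm p q) (hsymm q p), fun p q => le_antisymm (hanti p q) ?_,
    fun p q r => ?_, fun p => le_antisymm ((hle _ _).trans (h.dia p).le) ?_, fun p q => ?_⟩, hle, ?_⟩
  · rcases hor p p with e | ⟨r, s, hrs, e⟩ <;> rw [e]
    · exact hn _ _
    · have := hn p r
      have := hn s p
      omega
  · have := hanti (bar p) (bar q)
    rwa [hbar, hbar] at this
  · rcases hor p q with e | ⟨u, v, huv, e⟩ <;> rcases hor q r with e' | ⟨u', v', huv', e'⟩ <;>
      rw [e, e']
    · exact (hle _ _).trans (h.tri _ _ _)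
    · have h1 := hst _ _ huv' p r
      have h2 := h.tri p q u'
      omega
    · have h1 := hst _ _ huv p r
      have h2 := h.tri v q r
      omega
    · have h1 := h.tri v q u'
      have h2 := hn v q
      have h3 := hn q u'
      rcases Srel _ _ _ _ huv huv' with ⟨rfl, rfl⟩ | ⟨rfl, rfl⟩ | ⟨rfl, rfl⟩ | ⟨rfl, rfl⟩
      · have := hst _ _ huv p r
        omega
      · have := hle p r
        have := h.tri p v' r
        omega
      · have h4 := hst _ _ huv' p r
        have h5 := h.tri p u (bar u)
        rw [h.dia] at h5
        have h6 := Sd _ _ huv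
        rw [← hbar', h.symm] at h6
        have h7 := hbar' v u
        rw [h.symm (bar v) u, ← hbar', h.symm] at h7
        have h8 : D v (bar u) = D (bar v) u := by rw [hbar']
        have h9 := h.symm (bar v) u
        have h10 : D u (bar v) = D (bar u) v := by rw [hbar']
        have h11 := h.symm (bar u) v
        omega
      · have h4 := hle p r
        have h5 := h.tri p u (bar u)
        have h6 := h.tri p (bar u) r
        rw [h.dia] at h1 h5
        omega
  · rcases hor p (bar p) with e | ⟨r, s, hrs, e⟩ <;> rw [e]
    · exact (h.dia p).ge
    · have h1 := h.tri s (bar p) (bar r)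
      rw [h.anti, h.symm s (bar r), hbar'] at h1
      have h2 := Sd _ _ hrs
      omega
  · rcases hor p q with e | ⟨r, s, hrs, e⟩ <;> rw [e]
    · exact h.even _ _
    · have h1 := h.even p r
      have h2 := h.even s q
      have h3 := Spar _ _ hrs
      omega
  · have := hst a b ((hSt a b).2 (by tauto)) a b
    rw [h.self, h.self] at this
    omega

/-- Below every antipodal metric there is one in which each pair of antipodal points is
on a geodesic through every other point. -/
lemma Met.exists_tight [Finite Z] (hbar : ∀ p, bar (bar p) = p) (hd : 1 ≤ d)
    (h : Met bar P d D) : ∃ D', Met bar P d D' ∧ (∀ p q, D' p q ≤ D p q) ∧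
      ∀ p q, D' p q + D' p (bar q) = d := by
  have := Fintype.ofFinite Z
  induction hN : (∑ p, ∑ q, D p q).toNat using Nat.strong_induction_on generalizing D with
  | _ N ih =>
  by_cases ht : ∀ p q, D p q + D p (bar q) = d
  · exact ⟨D, h, fun _ _ => le_rfl, ht⟩
  push Not at ht
  obtain ⟨a, b, hab⟩ := ht
  have key : ∀ a b : Z, ∀ t, 0 ≤ t → d ≤ t + D a (bar b) → 2 ∣ t + P a + P b → t < D a b →
      ∃ D', Met bar P d D' ∧ (∀ p q, D' p q ≤ D p q) ∧ ∀ p q, D' p q + D' p (bar q) = d := by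
    intro a b t h0 h1 h2 h3
    obtain ⟨D1, hM, hle, hlt⟩ := h.shorten hbar a b t h0 h1 h2
    have hsum : ∑ p, ∑ q, D1 p q < ∑ p, ∑ q, D p q := by
      refine Finset.sum_lt_sum (fun p _ => Finset.sum_le_sum fun q _ => hle p q)
        ⟨a, Finset.mem_univ _, Finset.sum_lt_sum (fun q _ => hle a q) ⟨b, Finset.mem_univ _, ?_⟩⟩
      omega
    have hpos : 0 ≤ ∑ p, ∑ q, D1 p q :=
      Finset.sum_nonneg fun p _ => Finset.sum_nonneg fun q _ => hM.nonneg p q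
    obtain ⟨D2, hM2, hle2, ht2⟩ := ih (∑ p, ∑ q, D1 p q).toNat (by omega) hM rfl
    exact ⟨D2, hM2, fun p q => (hle2 p q).trans (hle p q), ht2⟩
  have h1 := h.tri a b (bar a)
  have h1' : D b (bar a) = D a (bar b) := by rw [h.symm, ← h.anti, hbar]
  have h2 := h.tri a b (bar b)
  rw [h.dia] at h1 h2
  have e1 := h.even a b
  have e2 := h.even a (bar b)
  have e3 := h.even b (bar b)
  rw [h.dia] at e3
  have h4 := h.nonneg a b
  by_cases hD : 2 ≤ D a b
  · exact key a b (D a b - 2) (by omega) (by omega) (by omega) (by omega)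
  · refine key a (bar b) (D a (bar b) - 2) (by omega) ?_ (by omega) (by omega)
    rw [hbar]
    omega

end met

/-! ### From local conditions to an even semimetric -/

/-- Weighted walks: `Wk W n p q w` says that some walk with `n` steps from `p` to `q`
has total weight `w`. -/
inductive Wk {Z : Type} (W : Z → Z → ℤ) : ℕ → Z → Z → ℤ → Prop
  | nil (p : Z) : Wk W 0 p p 0
  | cons {n : ℕ} {p q r : Z} {w : ℤ} : Wk W n q r w → Wk W (n + 1) p r (W p q + w)

section walks
variable {Z : Type} {W : Z → Z → ℤ}

lemma Wk.one (p q : Z) : Wk W 1 p q (W p q) := by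
  simpa using Wk.cons (p := p) (Wk.nil (W := W) q)

lemma Wk.append {n m : ℕ} {p q r : Z} {w w' : ℤ} (h : Wk W n p q w) (h' : Wk W m q r w') :
    Wk W (n + m) p r (w + w') := by
  induction h with
  | nil p => simpa using h'
  | @cons n p q r w h ih =>
    have := Wk.cons (p := p) (ih h')
    rwa [← add_assoc, add_right_comm] at this

lemma Wk.reverse (hs : ∀ p q, W p q = W q p) {n : ℕ} {p q : Z} {w : ℤ} (h : Wk W n p q w) :
    Wk W n q p w := by
  induction h with
  | nil p => exact .nil p
  | @cons n p q r w h ih =>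
    have := ih.append (Wk.one q p)
    rwa [add_comm w, hs q p] at this

lemma Wk.map {f : Z → Z} (hf : ∀ p q, W (f p) (f q) = W p q) {n : ℕ} {p q : Z} {w : ℤ}
    (h : Wk W n p q w) : Wk W n (f p) (f q) w := by
  induction h with
  | nil p => exact .nil _
  | @cons n p q r w h ih =>
    have := Wk.cons (p := f p) ih
    rwa [hf] at this

lemma Wk.nonneg (hn : ∀ p q, 0 ≤ W p q) {n : ℕ} {p q : Z} {w : ℤ} (h : Wk W n p q w) : 0 ≤ w := by
  induction h with
  | nil p => exact le_rfl
  | @cons n p q r w h ih => have := hn p q; omega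

lemma Wk.even {P : Z → ℤ} (he : ∀ p q, 2 ∣ W p q + P p + P q) {n : ℕ} {p q : Z} {w : ℤ}
    (h : Wk W n p q w) : 2 ∣ w + P p + P q := by
  induction h with
  | nil p => omega
  | @cons n p q r w h ih => have := he p q; omega

lemma Wk.exists_seq {n : ℕ} {p q : Z} {w : ℤ} (h : Wk W n p q w) :
    ∃ z : ℕ → Z, z 0 = p ∧ z n = q ∧ w = ∑ i ∈ Finset.range n, W (z i) (z (i + 1)) := by
  induction h with
  | nil p => exact ⟨fun _ => p, rfl, rfl, by simp⟩
  | @cons n p q r w h ih =>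
    obtain ⟨z, h0, hn, rfl⟩ := ih
    refine ⟨fun i => Nat.casesOn i p z, rfl, hn, ?_⟩
    rw [Finset.sum_range_succ']
    simp [h0, add_comm]

lemma Wk.of_seq (z : ℕ → Z) {i j : ℕ} (hij : i ≤ j) :
    Wk W (j - i) (z i) (z j) (∑ k ∈ Finset.Ico i j, W (z k) (z (k + 1))) := by
  induction j, hij using Nat.le_induction with
  | base => simpa using Wk.nil (W := W) (z i)
  | succ j hij ih =>
    rw [Finset.sum_Ico_succ_top hij, Nat.succ_sub hij]
    exact ih.append (Wk.one _ _)

/-- A weight function on the double cover `V × Bool` of `G` for which antipodal walks along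
edges of `G` are at least as heavy as `d` as soon as this holds on triangles and induced
quadrilaterals. -/
structure CoverWeight (G : SimpleGraph V) (d : ℤ) (W : V × Bool → V × Bool → ℤ) : Prop where
  self : ∀ p, W p p = 0
  symm : ∀ p q, W p q = W q p
  anti : ∀ p q : V × Bool, W (p.1, !p.2) (q.1, !q.2) = W p q
  nonneg : ∀ p q, 0 ≤ W p q
  dia : ∀ p : V × Bool, W p (p.1, !p.2) = d
  far : ∀ p q : V × Bool, p ≠ q → ¬ G.Adj p.1 q.1 → d ≤ W p q
  adj : ∀ p q : V × Bool, G.Adj p.1 q.1 → W p q + W q (p.1, !p.2) = d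
  three : ∀ p q r : V × Bool, G.Adj p.1 q.1 → G.Adj q.1 r.1 → G.Adj r.1 p.1 →
    d ≤ W p q + W q r + W r (p.1, !p.2)
  four : ∀ p q r s : V × Bool, G.Adj p.1 q.1 → G.Adj q.1 r.1 → G.Adj r.1 s.1 → G.Adj s.1 p.1 →
    p.1 ≠ r.1 → q.1 ≠ s.1 → ¬ G.Adj p.1 r.1 → ¬ G.Adj q.1 s.1 →
    d ≤ W p q + W q r + W r s + W s (p.1, !p.2)

/-- Without long induced cycles, every walk between antipodal points weighs at least `d`:
a chord splits such a walk into two shorter antipodal walks. -/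
lemma CoverWeight.antipodal {G : SimpleGraph V} {d : ℤ} {W : V × Bool → V × Bool → ℤ}
    (h : CoverWeight G d W) (hcyc : ∀ n, 5 ≤ n → ¬ HasInducedCycleLen G n) {n : ℕ}
    {p : V × Bool} {w : ℤ} (hw : Wk W n p (p.1, !p.2) w) : d ≤ w := by
  induction n using Nat.strong_induction_on generalizing p w with
  | _ n ih =>
  obtain ⟨z, h0, hn, rfl⟩ := hw.exists_seq
  have hsplit : ∀ i j, i ≤ j → j ≤ n → ∑ k ∈ Finset.range n, W (z k) (z (k + 1)) =
      ∑ k ∈ Finset.Ico 0 i, W (z k) (z (k + 1)) + ∑ k ∈ Finset.Ico i j, W (z k) (z (k + 1)) +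
      ∑ k ∈ Finset.Ico j n, W (z k) (z (k + 1)) := by
    intro i j hij hjn
    rw [Finset.sum_Ico_consecutive _ (Nat.zero_le _) hij,
      Finset.sum_Ico_consecutive _ (Nat.zero_le _) hjn, Finset.range_eq_Ico]
  by_cases hadj : ∀ k < n, G.Adj (z k).1 (z (k + 1)).1
  swap
  · push Not at hadj
    obtain ⟨k, hk, hna⟩ := hadj
    have hs := hsplit k (k + 1) (by omega) hk
    have e : ∑ i ∈ Finset.Ico k (k + 1), W (z i) (z (i + 1)) = W (z k) (z (k + 1)) := by simp
    rw [e] at hs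
    have w1 := Wk.of_seq (W := W) z (Nat.zero_le k)
    have w2 := Wk.of_seq (W := W) z (Nat.succ_le_of_lt hk)
    by_cases hz : z k = z (k + 1)
    · rw [hz, h.self] at hs
      rw [hz] at w1
      have := w1.append w2
      rw [h0, hn] at this
      have := ih _ (by omega) this
      simp only [Nat.succ_eq_add_one] at this
      rw [hs]
      simpa [add_assoc] using this
    · have a1 := w1.nonneg h.nonneg
      have a2 := w2.nonneg h.nonneg
      have a3 := h.far _ _ hz hna
      simp only [Nat.succ_eq_add_one] at a2
      omega
  by_cases hch : ∃ i j, i < j ∧ j < n ∧ 2 ≤ j - i ∧ j - i ≤ n - 2 ∧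
      ((z i).1 = (z j).1 ∨ G.Adj (z i).1 (z j).1)
  · obtain ⟨i, j, hij, hj, h2, hn2, ha⟩ := hch
    have hs := hsplit i j hij.le hj.le
    have w1 := Wk.of_seq (W := W) z (Nat.zero_le i)
    have w2 := Wk.of_seq (W := W) z hij.le
    have w3 := Wk.of_seq (W := W) z hj.le
    have b1 := ih _ (by omega) (w2.append (Wk.one (z j) ((z i).1, !(z i).2)))
    have w4 := (w1.append (Wk.one (z i) (z j))).append w3
    rw [h0, hn] at w4
    have b2 := ih _ (by omega) w4
    have hd : W (z i) (z j) + W (z j) ((z i).1, !(z i).2) = d := by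
      rcases ha with ha | ha
      · by_cases hb : (z i).2 = (z j).2
        · have e : z i = z j := Prod.ext ha hb
          rw [e, h.self, h.dia, zero_add]
        · have e : z j = ((z i).1, !(z i).2) := by
            refine Prod.ext ha.symm ?_
            revert hb
            cases (z i).2 <;> cases (z j).2 <;> simp
          rw [e, h.self, h.dia, add_zero]
      · exact h.adj _ _ ha
    omega
  push Not at hch
  have hz0 : (z n).1 = (z 0).1 := by rw [h0, hn]
  have hzn : z n = ((z 0).1, !(z 0).2) := by rw [h0, hn]
  rcases Nat.lt_or_ge n 3 with hn3 | hn3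
  · interval_cases n
    · rw [Prod.ext_iff] at hzn
      simp at hzn
    · have := hadj 0 (by omega)
      rw [zero_add, hz0] at this
      exact (G.irrefl this).elim
    · have := h.adj _ _ (hadj 0 (by omega))
      rw [Finset.sum_range_succ, Finset.sum_range_one]
      rw [show W (z 1) (z (1 + 1)) = W (z 1) ((z 0).1, !(z 0).2) by rw [← hzn]]
      exact this.ge
  · have hI : IndCyc G n fun i => (z i).1 := by
      intro i j hij hj
      by_cases h1 : j = i + 1
      · subst h1
        have := hadj i (by omega)
        exact ⟨this.ne, by simp [this]⟩
      by_cases h2 : i = 0 ∧ j + 1 = n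
      · obtain ⟨rfl, h2⟩ := h2
        have := hadj j hj
        rw [h2, hz0] at this
        exact ⟨this.ne', by simp [this.symm, h2]⟩
      · have := hch i j hij hj (by omega) (by omega)
        exact ⟨this.1, by simp [this.2, h1, h2]⟩
    rcases Nat.lt_or_ge n 5 with hn5 | hn5
    · have a0 := hadj 0 (by omega)
      have a1 := hadj 1 (by omega)
      have a2 := hadj 2 (by omega)
      interval_cases n
      · rw [hz0] at a2
        have := h.three _ _ _ a0 a1 a2
        rw [← hzn] at this
        simpa [Finset.sum_range_succ] using this
      · have a3 := hadj 3 (by omega)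
        rw [hz0] at a3
        have n1 := hI 0 2 (by omega) (by omega)
        have n2 := hI 1 3 (by omega) (by omega)
        have := h.four _ _ _ _ a0 a1 a2 a3 n1.1 n2.1 (fun h => by simpa using n1.2.1 h)
          (fun h => by simpa using n2.2.1 h)
        rw [← hzn] at this
        simpa [Finset.sum_range_succ] using this
    · exact (hcyc n hn5 (hI.hasInducedCycleLen hn3)).elim

end walks

open Classical in
/-- The weight of a pair of points of the double cover prescribed by edge lengths `x`, with
vertex parities `p`. Non-adjacent pairs get the least value from `d` on with the right parity. -/
noncomputable def coverW (G : SimpleGraph V) (d : ℤ) (p : V → ℤ) (x : V → V → ℤ)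
    (a b : V × Bool) : ℤ :=
  if G.Adj a.1 b.1 then (if a.2 = b.2 then x a.1 b.1 else d - x a.1 b.1)
  else if a = b then 0 else
    d + (d + (p a.1 + if a.2 then d else 0) + (p b.1 + if b.2 then d else 0)) % 2

lemma coverW_adj {G : SimpleGraph V} {d : ℤ} {p : V → ℤ} {x : V → V → ℤ} {a b : V × Bool}
    (h : G.Adj a.1 b.1) :
    coverW G d p x a b = if a.2 = b.2 then x a.1 b.1 else d - x a.1 b.1 := by
  rw [coverW, if_pos h]

/-- Local conditions on edge lengths `x`: bounds on edges, triangle and perimeter inequalities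
on triangles, and the cycle inequalities on induced quadrilaterals. -/
structure LocalCond (G : SimpleGraph V) (d : ℤ) (p : V → ℤ) (x : V → V → ℤ) : Prop where
  symm : ∀ u v, x u v = x v u
  even : ∀ u v, G.Adj u v → 2 ∣ x u v + p u + p v
  nonneg : ∀ u v, G.Adj u v → 0 ≤ x u v
  le : ∀ u v, G.Adj u v → x u v ≤ d
  tri : ∀ u v w, G.Adj u v → G.Adj v w → G.Adj w u → x w u ≤ x u v + x v w
  per : ∀ u v w, G.Adj u v → G.Adj v w → G.Adj w u → x u v + x v w + x w u ≤ 2 * d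
  one : ∀ a b c e, G.Adj a b → G.Adj b c → G.Adj c e → G.Adj e a → a ≠ c → b ≠ e →
    ¬ G.Adj a c → ¬ G.Adj b e → x e a ≤ x a b + x b c + x c e
  three : ∀ a b c e, G.Adj a b → G.Adj b c → G.Adj c e → G.Adj e a → a ≠ c → b ≠ e →
    ¬ G.Adj a c → ¬ G.Adj b e → x a b + x b c + x c e - x e a ≤ 2 * d

lemma LocalCond.coverWeight {G : SimpleGraph V} {d : ℤ} {p : V → ℤ} {x : V → V → ℤ}
    (h : LocalCond G d p x) (hd : 1 ≤ d) : CoverWeight G d (coverW G d p x) where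
  self a := by simp [coverW]
  symm a b := by
    have hs := h.symm a.1 b.1
    by_cases hA : G.Adj a.1 b.1
    · rw [coverW_adj hA, coverW_adj hA.symm, hs]
      simp only [eq_comm (a := a.2)]
    · have hA' : ¬ G.Adj b.1 a.1 := fun h => hA h.symm
      rw [coverW, coverW, if_neg hA, if_neg hA']
      by_cases hab : a = b
      · rw [if_pos hab, if_pos hab.symm]
      · rw [if_neg hab, if_neg (Ne.symm hab), add_right_comm d]
  anti a b := by
    obtain ⟨u, i⟩ := a
    obtain ⟨v, j⟩ := b
    by_cases hA : G.Adj u v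
    · cases i <;> cases j <;> simp [coverW, hA]
    · by_cases huv : u = v
      · subst huv
        cases i <;> cases j <;> simp [coverW] <;> omega
      · cases i <;> cases j <;> simp [coverW, hA, huv] <;> omega
  nonneg a b := by
    unfold coverW
    split_ifs with h1
    · exact h.nonneg _ _ h1
    · have := h.le _ _ h1; omega
    all_goals omega
  dia a := by
    obtain ⟨u, i⟩ := a
    cases i <;> simp [coverW] <;> omega
  far a b hab hA := by
    rw [coverW, if_neg hA, if_neg hab]
    omega
  adj a b hA := by
    obtain ⟨u, i⟩ := a
    obtain ⟨v, j⟩ := b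
    have hA' : G.Adj u v := hA
    have := h.symm v u
    cases i <;> cases j <;> simp [coverW, hA', hA'.symm, this]
  three a b c h1 h2 h3 := by
    have t1 := h.tri _ _ _ h1 h2 h3
    have t2 := h.tri _ _ _ h2 h3 h1
    have t3 := h.tri _ _ _ h3 h1 h2
    have t4 := h.per _ _ _ h1 h2 h3
    rw [coverW_adj h1, coverW_adj h2, coverW_adj (b := (a.1, !a.2)) h3]
    obtain ⟨u, i⟩ := a
    obtain ⟨v, j⟩ := b
    obtain ⟨w, k⟩ := c
    cases i <;> cases j <;> cases k <;> simp at t1 t2 t3 t4 ⊢ <;> omega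
  four a b c e h1 h2 h3 h4 n1 n2 m1 m2 := by
    have n1' := n1.symm
    have n2' := n2.symm
    have m1' := fun h : G.Adj c.1 a.1 => m1 h.symm
    have m2' := fun h : G.Adj e.1 b.1 => m2 h.symm
    have t1 := h.one _ _ _ _ h1 h2 h3 h4 n1 n2 m1 m2
    have t2 := h.one _ _ _ _ h2 h3 h4 h1 n2 n1' m2 m1'
    have t3 := h.one _ _ _ _ h3 h4 h1 h2 n1' n2' m1' m2'
    have t4 := h.one _ _ _ _ h4 h1 h2 h3 n2' n1 m2' m1
    have s1 := h.three _ _ _ _ h1 h2 h3 h4 n1 n2 m1 m2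
    have s2 := h.three _ _ _ _ h2 h3 h4 h1 n2 n1' m2 m1'
    have s3 := h.three _ _ _ _ h3 h4 h1 h2 n1' n2' m1' m2'
    have s4 := h.three _ _ _ _ h4 h1 h2 h3 n2' n1 m2' m1
    rw [coverW_adj h1, coverW_adj h2, coverW_adj h3, coverW_adj (b := (a.1, !a.2)) h4]
    clear n1 n2 m1 m2 n1' n2' m1' m2' h1 h2 h3 h4 h
    obtain ⟨u, i⟩ := a
    obtain ⟨v, j⟩ := b
    obtain ⟨w, k⟩ := c
    obtain ⟨t, l⟩ := e
    cases i <;> cases j <;> cases k <;> cases l <;>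
      simp at t1 t2 t3 t4 s1 s2 s3 s4 ⊢ <;> omega

lemma LocalCond.coverW_even {G : SimpleGraph V} {d : ℤ} {p : V → ℤ} {x : V → V → ℤ}
    (h : LocalCond G d p x) (a b : V × Bool) :
    2 ∣ coverW G d p x a b + (p a.1 + if a.2 then d else 0) + (p b.1 + if b.2 then d else 0) := by
  obtain ⟨u, i⟩ := a
  obtain ⟨v, j⟩ := b
  by_cases hA : G.Adj u v
  · have := h.even u v hA
    cases i <;> cases j <;> simp [coverW, hA] <;> omega
  · by_cases huv : u = v
    · subst huv
      cases i <;> cases j <;> simp [coverW] <;> omega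
    · cases i <;> cases j <;> simp [coverW, hA, huv] <;> omega

/-- **Extension**: in a graph without induced cycles of length at least five, edge lengths
satisfying the local conditions extend to an even semimetric on all vertices whose triangles have
perimeter at most `2 * d`. -/
theorem LocalCond.exists_tri [Finite V] {G : SimpleGraph V} {d : ℕ} {p : V → ℤ} {x : V → V → ℤ}
    (h : LocalCond G d p x) (hd : 1 ≤ d) (hcyc : ∀ n, 5 ≤ n → ¬ HasInducedCycleLen G n) :
    ∃ y, Tri d y ∧ ∀ u v, G.Adj u v → y u v = x u v := by
  have hd' : (1 : ℤ) ≤ d := by exact_mod_cast hd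
  have hW := h.coverWeight hd'
  have hWe := h.coverW_even
  set W := coverW G d p x with hWdef
  have hleast : ∀ a b, ∃ w, (∃ n, Wk W n a b w) ∧ ∀ w', (∃ n, Wk W n a b w') → w ≤ w' :=
    fun a b => Int.exists_least_of_bdd ⟨0, fun z ⟨n, hz⟩ => hz.nonneg hW.nonneg⟩
      ⟨_, 1, Wk.one a b⟩
  choose D hD hmin using hleast
  choose N hN using hD
  have hle : ∀ {n a b w}, Wk W n a b w → D a b ≤ w := fun h => hmin _ _ _ ⟨_, h⟩
  let bar : V × Bool → V × Bool := fun a => (a.1, !a.2)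
  have hbar : ∀ a, bar (bar a) = a := fun a => by simp [bar]
  have hM : Met bar (fun a => p a.1 + if a.2 then (d : ℤ) else 0) d D := by
    refine ⟨fun a => le_antisymm (hle (.nil a)) ((hN a a).nonneg hW.nonneg),
      fun a b => le_antisymm (hle ((hN b a).reverse hW.symm)) (hle ((hN a b).reverse hW.symm)),
      fun a b => le_antisymm (hle ((hN a b).map hW.anti)) ?_,
      fun a b c => hle ((hN a b).append (hN b c)),
      fun a => le_antisymm ?_ (hW.antipodal hcyc (hN a _)), fun a b => (hN a b).even hWe⟩
    · have := (hN (bar a) (bar b)).map hW.anti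
      have := hle this
      simpa [bar] using this
    · exact (hle (Wk.one a (bar a))).trans (hW.dia a).le
  obtain ⟨D', hM', hle', ht⟩ := hM.exists_tight hbar hd'
  refine ⟨fun u v => D' (u, false) (v, false), ⟨fun u v => hM'.symm _ _, fun u => hM'.self _,
    fun u v w => hM'.tri _ _ _, fun u v w => ?_, fun u v w => ?_⟩, fun u v hA => ?_⟩
  · have h1 := ht (u, false) (w, false)
    have h2 := hM'.tri (u, false) (v, true) (w, false)
    have h3 := ht (u, false) (v, false)
    have h4 := ht (w, false) (v, false)
    have h5 := hM'.symm (w, false) (v, false)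
    have h6 := hM'.symm (w, false) (v, true)
    simp only [bar, Bool.not_false] at h1 h3 h4
    omega
  · have h1 := hM'.even (u, false) (v, false)
    have h2 := hM'.even (v, false) (w, false)
    have h3 := hM'.even (u, false) (w, false)
    simp only [Bool.false_eq_true, if_false] at h1 h2 h3
    omega
  · have h1 := (hle' (u, false) (v, false)).trans (hle (Wk.one _ _))
    have h2 := (hle' (u, false) (v, true)).trans (hle (Wk.one _ _))
    have h3 := ht (u, false) (v, false)
    simp only [bar, Bool.not_false] at h3
    rw [hWdef, coverW_adj hA] at h1 h2
    simp only [if_true, Bool.false_eq_true, if_false] at h1 h2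
    change D' (u, false) (v, false) = x u v
    omega

/-! ### Elements of the cut monoid -/

lemma hd_even {d : ℕ} (f g h : Fin d → Bool) : 2 ∣ hd f g + hd g h + hd f h := by
  unfold hd
  rw [← Finset.sum_add_distrib, ← Finset.sum_add_distrib]
  refine Finset.dvd_sum fun i _ => ?_
  cases f i <;> cases g i <;> cases h i <;> simp

open Classical in
lemma cutVec_mk (A : Set V) (u v : V) :
    cutVec A s(u, v) = if (u ∈ A ↔ v ∈ A) then 0 else 1 := by
  unfold cutVec
  rw [Sym2.lift_mk]

/-- The elements of the cut monoid of degree `d` are the sums of `d` cuts of the complete graph,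
restricted to the edges. -/
lemma mem_cutMonoid_iff (G : SimpleGraph V) (p : (G.edgeSet → ℤ) × ℤ) :
    p ∈ cutMonoid G ↔ ∃ (d : ℕ) (y : V → V → ℤ), SumCut d y ∧ p.2 = d ∧
      ∀ u v (h : G.Adj u v), p.1 ⟨s(u, v), h⟩ = y u v := by
  classical
  constructor
  · intro hp
    induction hp using AddSubmonoid.closure_induction with
    | mem p hp =>
      obtain ⟨A, rfl⟩ := hp
      refine ⟨1, _, sumCut_smul 1 fun u => decide (u ∈ A), rfl, fun u v h => ?_⟩
      simp [cutVec_mk]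
    | zero => exact ⟨0, _, sumCut_smul 0 fun _ => true, rfl, fun u v h => by simp⟩
    | add p q _ _ hp hq =>
      obtain ⟨d, y, hy, h1, h2⟩ := hp
      obtain ⟨e, z, hz, h3, h4⟩ := hq
      refine ⟨d + e, _, hy.add hz, by simp [h1, h3], fun u v h => ?_⟩
      simp [h2, h4]
  · rintro ⟨d, y, ⟨φ, hφ⟩, h1, h2⟩
    have : p = ∑ i : Fin d, ((fun e => cutVec {v | φ v i = true} e.1, 1) :
        (G.edgeSet → ℤ) × ℤ) := by
      refine Prod.ext (funext fun e => ?_) ?_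
      · obtain ⟨e, he⟩ := e
        induction e using Sym2.ind with
        | _ u v =>
        rw [h2 u v he, ← hφ, Prod.fst_sum, Finset.sum_apply]
        refine Finset.sum_congr rfl fun i _ => ?_
        simp only [cutVec_mk]
        cases hu : φ u i <;> cases hv : φ v i <;> simp [hu, hv]
      · simp [Prod.snd_sum, h1]
    rw [this]
    exact sum_mem fun i _ => AddSubmonoid.subset_closure ⟨_, rfl⟩

/-! ### The cut cone and its interior -/

/-- The real cut vector `(δ_A, 1)`. -/
noncomputable def rc (G : SimpleGraph V) (A : Set V) : (G.edgeSet → ℝ) × ℝ :=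
  (fun e => ((cutVec A e.1 : ℤ) : ℝ), (1 : ℝ))

/-- The point `(1, …, 1, 2)`, a positive multiple of the sum of all cut vectors. -/
noncomputable def ctr (G : SimpleGraph V) : (G.edgeSet → ℝ) × ℝ := (fun _ => 1, 2)

section cone
variable {G : SimpleGraph V}

lemma smul_rc_mem {c : ℝ} (hc : 0 ≤ c) (A : Set V) : c • rc G A ∈ cutCone G :=
  AddSubmonoid.subset_closure ⟨c, A, hc, rfl⟩

lemma cutCone_add {p q : (G.edgeSet → ℝ) × ℝ} (hp : p ∈ cutCone G) (hq : q ∈ cutCone G) :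
    p + q ∈ cutCone G := add_mem (S := AddSubmonoid _) hp hq

lemma cutCone_smul {c : ℝ} (hc : 0 ≤ c) {p : (G.edgeSet → ℝ) × ℝ} (hp : p ∈ cutCone G) :
    c • p ∈ cutCone G := by
  induction hp using AddSubmonoid.closure_induction with
  | mem p hp =>
    obtain ⟨t, A, ht, rfl⟩ := hp
    rw [smul_smul]
    exact smul_rc_mem (mul_nonneg hc ht) A
  | zero => rw [smul_zero]; exact zero_mem (AddSubmonoid.closure (cutConeGens G))
  | add p q _ _ hp hq => rw [smul_add]; exact cutCone_add hp hq

lemma cutInterior_add {p q : (G.edgeSet → ℝ) × ℝ} (hp : p ∈ interior (cutCone G))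
    (hq : q ∈ cutCone G) : p + q ∈ interior (cutCone G) := by
  have ho : IsOpen ((fun x => x + q) '' interior (cutCone G)) :=
    (Homeomorph.addRight q).isOpenMap _ isOpen_interior
  refine interior_maximal ?_ ho ⟨p, hp, rfl⟩
  rintro _ ⟨x, hx, rfl⟩
  exact cutCone_add (interior_subset hx) hq

lemma cutInterior_smul {c : ℝ} (hc : 0 < c) {p : (G.edgeSet → ℝ) × ℝ}
    (hp : p ∈ interior (cutCone G)) : c • p ∈ interior (cutCone G) := by
  have ho : IsOpen ((fun x => c • x) '' interior (cutCone G)) :=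
    isOpenMap_smul₀ hc.ne' _ isOpen_interior
  refine interior_maximal ?_ ho ⟨p, hp, rfl⟩
  rintro _ ⟨x, hx, rfl⟩
  exact cutCone_smul hc.le (interior_subset hx)

lemma cutVec_flip (A : Set V) {u v : V} (huv : u ≠ v) :
    cutVec A s(u, v) + cutVec (symmDiff A {u}) s(u, v) = 1 := by
  classical
  rw [cutVec_mk, cutVec_mk]
  by_cases h1 : u ∈ A <;> by_cases h2 : v ∈ A <;>
    simp [Set.mem_symmDiff, h1, h2, huv.symm]

/-- Averaged over all sets, the cut value of a pair is `1 / 2`. -/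
lemma sum_cutVec [Fintype (Set V)] {u v : V} (f : Set V → Set V)
    (hf : ∀ A, cutVec (f A) s(u, v) + cutVec (f (symmDiff A {u})) s(u, v) = 1) :
    2 * ∑ A : Set V, ((cutVec (f A) s(u, v) : ℤ) : ℝ) = Fintype.card (Set V) := by
  have h1 : ∑ A : Set V, cutVec (f (symmDiff A {u})) s(u, v) = ∑ A, cutVec (f A) s(u, v) :=
    Fintype.sum_bijective (fun A : Set V => symmDiff A {u})
      (symmDiff_left_involutive {u} : Function.Involutive _).bijective _ _ fun _ => rfl
  have h2 : ∑ A : Set V, (cutVec (f A) s(u, v) + cutVec (f (symmDiff A {u})) s(u, v)) =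
      Fintype.card (Set V) := by
    simp [hf]
  rw [Finset.sum_add_distrib, h1, ← two_mul] at h2
  exact_mod_cast h2

/-- The cut vectors span `ℝ^E × ℝ`, so the image of the positive orthant under nonnegative
combination is open. -/
lemma ctr_mem_interior [Finite V] (G : SimpleGraph V) : ctr G ∈ interior (cutCone G) := by
  classical
  have := Fintype.ofFinite V
  have := Fintype.ofFinite (Set V)
  let T : (Set V → ℝ) →ₗ[ℝ] (G.edgeSet → ℝ) × ℝ := Fintype.linearCombination ℝ (rc G)
  have hT : ∀ l, T l = ∑ A, l A • rc G A := fun l => Fintype.linearCombination_apply ..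
  have hrc : ∀ A, rc G A ∈ LinearMap.range T := fun A => ⟨Pi.single A 1, by
    rw [hT, Finset.sum_eq_single A] <;> simp +contextual⟩
  have hsurj : Function.Surjective T := by
    rw [← LinearMap.range_eq_top, eq_top_iff]
    rintro ⟨f, t⟩ -
    have h1 : ((0, 1) : (G.edgeSet → ℝ) × ℝ) ∈ LinearMap.range T := by
      convert hrc ∅ using 1
      refine Prod.ext (funext fun e => ?_) rfl
      obtain ⟨e, he⟩ := e
      induction e using Sym2.ind with
      | _ a b => simp [rc, cutVec_mk]
    have h2 : ∀ e, ((Pi.single e 1, 0) : (G.edgeSet → ℝ) × ℝ) ∈ LinearMap.range T := by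
      rintro ⟨e, he⟩
      induction e using Sym2.ind with
      | _ u v =>
      have huv : u ≠ v := G.ne_of_adj he
      have key : ((Pi.single ⟨s(u, v), he⟩ 1, 0) : (G.edgeSet → ℝ) × ℝ) =
          (1 / 2 : ℝ) • (rc G {u} + rc G {v} - rc G {u, v} - rc G ∅) := by
        refine Prod.ext (funext fun e => ?_) ?_
        · obtain ⟨e, he'⟩ := e
          induction e using Sym2.ind with
          | _ a b =>
          have hab : a ≠ b := G.ne_of_adj he'
          simp only [rc, Prod.smul_fst, Prod.fst_add, Prod.fst_sub, Pi.smul_apply, Pi.sub_apply,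
            Pi.add_apply, cutVec_mk, Pi.single_apply, Subtype.mk.injEq, Sym2.eq_iff,
            Set.mem_singleton_iff, Set.mem_insert_iff, Set.mem_empty_iff_false]
          by_cases e1 : a = u <;> by_cases e2 : a = v <;> by_cases e3 : b = u <;>
            by_cases e4 : b = v <;> simp_all <;> norm_num
        · simp [rc]
      rw [key]
      exact Submodule.smul_mem _ _ (sub_mem (sub_mem (add_mem (hrc _) (hrc _)) (hrc _)) (hrc _))
    have h3 : ((f, t) : (G.edgeSet → ℝ) × ℝ) =
        ∑ e, f e • ((Pi.single e 1, 0) : (G.edgeSet → ℝ) × ℝ) + t • (0, 1) := by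
      refine Prod.ext (funext fun e => ?_) ?_
      · simp [Prod.fst_sum, Finset.sum_apply, Pi.single_apply]
      · simp [Prod.snd_sum]
    rw [h3]
    exact add_mem (sum_mem fun e _ => Submodule.smul_mem _ _ (h2 e)) (Submodule.smul_mem _ _ h1)
  have hopen : IsOpen (T '' Set.pi Set.univ fun _ => Set.Ioi 0) :=
    T.isOpenMap_of_finiteDimensional hsurj _ (isOpen_set_pi Set.finite_univ fun _ _ => isOpen_Ioi)
  have hN : (0 : ℝ) < Fintype.card (Set V) := by exact_mod_cast Fintype.card_pos
  refine interior_maximal ?_ hopen ⟨fun _ => 2 / Fintype.card (Set V), fun _ _ => ?_, ?_⟩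
  · rintro _ ⟨l, hl, rfl⟩
    rw [hT]
    exact sum_mem (S := AddSubmonoid.closure (cutConeGens G)) fun A _ =>
      smul_rc_mem (hl A trivial).le A
  · exact div_pos two_pos hN
  · rw [hT, ← Finset.smul_sum]
    refine Prod.ext (funext fun e => ?_) ?_
    · obtain ⟨e, he⟩ := e
      induction e using Sym2.ind with
      | _ u v =>
      have huv : u ≠ v := G.ne_of_adj he
      have := sum_cutVec id fun A => cutVec_flip A huv
      simp only [rc, ctr, Prod.smul_fst, Prod.fst_sum, Pi.smul_apply, Finset.sum_apply, smul_eq_mul]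
      simp only [id] at this
      rw [div_mul_eq_mul_div, this, div_self hN.ne']
    · simp only [rc, ctr, Prod.smul_snd, Prod.snd_sum, smul_eq_mul, Finset.sum_const,
        Finset.card_univ, nsmul_eq_mul, mul_one]
      exact div_mul_cancel₀ _ hN.ne'

/-- A small multiple of the centre can be subtracted from an interior point. -/
lemma exists_sub_ctr {p : (G.edgeSet → ℝ) × ℝ} (hp : p ∈ interior (cutCone G)) :
    ∃ η : ℝ, 0 < η ∧ p - η • ctr G ∈ cutCone G := by
  have hc : Continuous fun t : ℝ => p - t • ctr G := by fun_prop
  have h0 : (fun t : ℝ => p - t • ctr G) ⁻¹' interior (cutCone G) ∈ nhds (0 : ℝ) :=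
    (isOpen_interior.preimage hc).mem_nhds (by simpa using hp)
  obtain ⟨ε, hε, hb⟩ := Metric.mem_nhds_iff.1 h0
  refine ⟨ε / 2, by positivity, interior_subset (hb ?_)⟩
  rw [Metric.mem_ball, Real.dist_eq, sub_zero, abs_of_pos (by positivity)]
  linarith

/-- A linear inequality valid for all cuts and strict at the centre is strict at interior points. -/
lemma strict_of_interior {f : (G.edgeSet → ℝ) × ℝ → ℝ} (hf : IsLinearMap ℝ f)
    (hA : ∀ A, 0 ≤ f (rc G A)) (hc : 0 < f (ctr G)) {p : (G.edgeSet → ℝ) × ℝ}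
    (hp : p ∈ interior (cutCone G)) : 0 < f p := by
  have hcone : ∀ q ∈ cutCone G, 0 ≤ f q := by
    intro q hq
    induction hq using AddSubmonoid.closure_induction with
    | mem q hq =>
      obtain ⟨c, A, hc, rfl⟩ := hq
      rw [hf.map_smul]
      exact mul_nonneg hc (hA A)
    | zero => rw [hf.map_zero]
    | add p q _ _ hp hq => rw [hf.map_add]; exact add_nonneg hp hq
  obtain ⟨η, hη, hq⟩ := exists_sub_ctr hp
  have h1 := hcone _ hq
  rw [hf.map_sub, hf.map_smul, smul_eq_mul] at h1
  have := mul_pos hη hc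
  linarith

end cone

/-! ### Strict inequalities at interior points -/

section strict
variable {G : SimpleGraph V} {p : (G.edgeSet → ℤ) × ℤ} {d : ℤ} {y : V → V → ℤ}

lemma rc_fst (A : Set V) {u v : V} (h : G.Adj u v) [Decidable (u ∈ A ↔ v ∈ A)] :
    (rc G A).1 ⟨s(u, v), h⟩ = if (u ∈ A ↔ v ∈ A) then 0 else 1 := by
  simp only [rc, cutVec_mk]
  split_ifs <;> simp

lemma int_edge [Finite V] (hp : p ∈ cutInterior G) (h1 : p.2 = d)
    (h2 : ∀ u v (h : G.Adj u v), p.1 ⟨s(u, v), h⟩ = y u v) {u v : V} (h : G.Adj u v) :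
    0 < y u v ∧ y u v < d := by
  classical
  constructor
  · have := strict_of_interior (f := fun q => q.1 ⟨s(u, v), h⟩)
      ⟨by intros; simp, by intros; simp⟩ (fun A => by
        simp only [rc_fst]; split_ifs <;> norm_num) (by simp [ctr]) hp.2
    simp only [toRealCut, h2] at this
    exact_mod_cast this
  · have := strict_of_interior (f := fun q => q.2 - q.1 ⟨s(u, v), h⟩)
      ⟨by intros; simp; ring, by intros; simp; ring⟩ (fun A => by
        simp only [rc_fst]; split_ifs <;> norm_num [rc]) (by norm_num [ctr]) hp.2
    simp only [toRealCut, h2, h1, sub_pos] at this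
    exact_mod_cast this

lemma int_tri [Finite V] (hp : p ∈ cutInterior G) (h1 : p.2 = d)
    (h2 : ∀ u v (h : G.Adj u v), p.1 ⟨s(u, v), h⟩ = y u v) {u v w : V} (huv : G.Adj u v)
    (hvw : G.Adj v w) (hwu : G.Adj w u) :
    y w u < y u v + y v w ∧ y u v + y v w + y w u < 2 * d := by
  classical
  constructor
  · have := strict_of_interior
      (f := fun q => q.1 ⟨s(u, v), huv⟩ + q.1 ⟨s(v, w), hvw⟩ - q.1 ⟨s(w, u), hwu⟩)
      ⟨by intros; simp; ring, by intros; simp; ring⟩ (fun A => by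
        simp only [rc_fst]
        by_cases a : u ∈ A <;> by_cases b : v ∈ A <;> by_cases c : w ∈ A <;> simp [a, b, c])
      (by norm_num [ctr]) hp.2
    simp only [toRealCut, h2, sub_pos] at this
    exact_mod_cast this
  · have := strict_of_interior
      (f := fun q => 2 * q.2 - (q.1 ⟨s(u, v), huv⟩ + q.1 ⟨s(v, w), hvw⟩ + q.1 ⟨s(w, u), hwu⟩))
      ⟨by intros; simp; ring, by intros; simp; ring⟩ (fun A => by
        simp only [rc_fst, show (rc G A).2 = 1 from rfl]
        by_cases a : u ∈ A <;> by_cases b : v ∈ A <;> by_cases c : w ∈ A <;>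
          norm_num [a, b, c])
      (by norm_num [ctr]) hp.2
    simp only [toRealCut, h2, h1, sub_pos] at this
    exact_mod_cast this

lemma int_quad [Finite V] (hp : p ∈ cutInterior G) (h1 : p.2 = d)
    (h2 : ∀ u v (h : G.Adj u v), p.1 ⟨s(u, v), h⟩ = y u v) {u v w t : V} (huv : G.Adj u v)
    (hvw : G.Adj v w) (hwt : G.Adj w t) (htu : G.Adj t u) :
    y t u < y u v + y v w + y w t ∧ y u v + y v w + y w t - y t u < 2 * d := by
  classical
  constructor
  · have := strict_of_interior
      (f := fun q => q.1 ⟨s(u, v), huv⟩ + q.1 ⟨s(v, w), hvw⟩ + q.1 ⟨s(w, t), hwt⟩ -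
        q.1 ⟨s(t, u), htu⟩)
      ⟨by intros; simp; ring, by intros; simp; ring⟩ (fun A => by
        simp only [rc_fst]
        by_cases a : u ∈ A <;> by_cases b : v ∈ A <;> by_cases c : w ∈ A <;>
          by_cases e : t ∈ A <;> norm_num [a, b, c, e])
      (by norm_num [ctr]) hp.2
    simp only [toRealCut, h2, sub_pos] at this
    exact_mod_cast this
  · have := strict_of_interior
      (f := fun q => 2 * q.2 - (q.1 ⟨s(u, v), huv⟩ + q.1 ⟨s(v, w), hvw⟩ + q.1 ⟨s(w, t), hwt⟩ -
        q.1 ⟨s(t, u), htu⟩))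
      ⟨by intros; simp; ring, by intros; simp; ring⟩ (fun A => by
        simp only [rc_fst, show (rc G A).2 = 1 from rfl]
        by_cases a : u ∈ A <;> by_cases b : v ∈ A <;> by_cases c : w ∈ A <;>
          by_cases e : t ∈ A <;> norm_num [a, b, c, e])
      (by norm_num [ctr]) hp.2
    simp only [toRealCut, h2, h1, sub_pos] at this
    exact_mod_cast this

end strict

/-! ### Decomposition on the two summands -/

/-- Edge lengths satisfying the local conditions are sums of `d` cuts. -/
lemma LocalCond.exists_cuts [Finite V] {G : SimpleGraph V} {d : ℕ} {p : V → ℤ} {x : V → V → ℤ}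
    (h : LocalCond G d p x) (hcyc : ∀ n, 5 ≤ n → ¬ HasInducedCycleLen G n)
    {c : V → Bool} (hs : StarC G c) (hK : K5Free G) :
    ∃ φ : V → Fin d → Bool, ∀ u v, G.Adj u v → hd (φ u) (φ v) = x u v := by
  rcases Nat.eq_zero_or_pos d with rfl | hd
  · refine ⟨fun _ _ => true, fun u v huv => ?_⟩
    have h1 := h.nonneg u v huv
    have h2 := h.le u v huv
    rw [hd_self]
    push_cast at h2
    omega
  · obtain ⟨y, hy, hxy⟩ := h.exists_tri hd hcyc
    obtain ⟨φ, hφ⟩ := _root_.exists_cuts hs hK hy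
    exact ⟨φ, fun u v huv => (hφ u v huv).trans (hxy u v huv)⟩

/-- A chordal graph has no induced quadrilateral. -/
lemma ChordalG.not_quad {G : SimpleGraph V} (h : ChordalG G) {a b c e : V} (h1 : G.Adj a b)
    (h2 : G.Adj b c) (h3 : G.Adj c e) (h4 : G.Adj e a) (n1 : a ≠ c) (n2 : b ≠ e)
    (m1 : ¬ G.Adj a c) (m2 : ¬ G.Adj b e) : False := by
  have hI : IndCyc G 4 fun i => if i = 0 then a else if i = 1 then b else if i = 2 then c else e := by
    intro i j hij hj
    have hi : i < 3 := by omega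
    interval_cases i <;> interval_cases j <;> simp [h1, h2, h3, h4.symm, n1, n2, m1, m2] <;>
      first | exact h1.ne | exact h2.ne | exact h3.ne | exact h4.ne'
  have := h 4 (hI.hasInducedCycleLen (by norm_num))
  omega

/-- A properly two-coloured graph has no induced pentagon. -/
lemma not_pentagon {G : SimpleGraph V} {c : V → Bool} (hc : ∀ u v, G.Adj u v → c u ≠ c v) :
    ¬ HasInducedCycleLen G 5 := by
  rintro ⟨-, ⟨f⟩⟩
  have key : ∀ i : Fin 5, c (f i) ≠ c (f (i + 1)) := fun i => hc _ _ (f.map_rel_iff.2 (by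
    revert i; decide))
  have h0 := key 0
  have h1 := key 1
  have h2 := key 2
  have h3 := key 3
  have h4 := key 4
  simp only [Fin.reduceAdd] at h0 h1 h2 h3 h4
  revert h0 h1 h2 h3 h4
  generalize c (f 0) = a0
  generalize c (f 1) = a1
  generalize c (f 2) = a2
  generalize c (f 3) = a3
  generalize c (f 4) = a4
  cases a0 <;> cases a1 <;> cases a2 <;> cases a3 <;> cases a4 <;> simp

/-! ### Zero-sums -/

section zeroSum
variable {G : SimpleGraph V} {V1 V2 : Set V} {v : V}

lemma SumCut.symm {d : ℕ} {y : V → V → ℤ} (h : SumCut d y) (u w : V) : y u w = y w u := by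
  obtain ⟨φ, hφ⟩ := h
  rw [← hφ, ← hφ, hd_symm]

lemma SumCut.even {d : ℕ} {y : V → V → ℤ} (h : SumCut d y) (u v w : V) :
    2 ∣ y u v + y v w + y u w := by
  obtain ⟨φ, hφ⟩ := h
  rw [← hφ, ← hφ, ← hφ]
  exact hd_even _ _ _

lemma restrictCut_mk (s : Set V) (p : G.edgeSet → ℤ) {a b : s} (h : (G.induce s).Adj a b) :
    restrictCut G s p ⟨s(a, b), h⟩ = p ⟨s(a.1, b.1), h⟩ := rfl

lemma exists_edgeFun (G : SimpleGraph V) {z : V → V → ℤ} (hz : ∀ u w, z u w = z w u) :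
    ∃ f : G.edgeSet → ℤ, ∀ u w (h : G.Adj u w), f ⟨s(u, w), h⟩ = z u w :=
  ⟨fun e => Sym2.lift ⟨z, hz⟩ e.1, fun _ _ _ => rfl⟩

lemma toRealCut_add (a b : (G.edgeSet → ℤ) × ℤ) :
    toRealCut G (a + b) = toRealCut G a + toRealCut G b := by
  refine Prod.ext (funext fun e => ?_) ?_
  · simp [toRealCut]
  · simp [toRealCut]

lemma toRealCut_mem_cutCone {m : (G.edgeSet → ℤ) × ℤ} (hm : m ∈ cutMonoid G) :
    toRealCut G m ∈ cutCone G := by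
  induction hm using AddSubmonoid.closure_induction with
  | mem m hm =>
    obtain ⟨A, rfl⟩ := hm
    have := smul_rc_mem (G := G) zero_le_one A
    rw [one_smul] at this
    convert this using 1
    simp [toRealCut, rc]
  | zero =>
    have : toRealCut G 0 = 0 := by
      refine Prod.ext (funext fun e => ?_) ?_
      · simp [toRealCut]
      · simp [toRealCut]
    rw [this]
    exact zero_mem (AddSubmonoid.closure (cutConeGens G))
  | add a b _ _ ha hb => rw [toRealCut_add]; exact cutCone_add ha hb

/-- Sums of `k` cuts of the two summands of a `0`-sum glue to a sum of `k` cuts. -/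
lemma exists_glue_one (hinter : V1 ∩ V2 = {v}) {k : ℕ} (φ₁ : V1 → Fin k → Bool)
    (φ₂ : V2 → Fin k → Bool) : ∃ z : V → V → ℤ, SumCut k z ∧
      (∀ u w : V1, z u w = hd (φ₁ u) (φ₁ w)) ∧ ∀ u w : V2, z u w = hd (φ₂ u) (φ₂ w) := by
  classical
  obtain ⟨φ, h1, h2⟩ := exists_glue V1 V2 (fun u => if h : u ∈ V1 then φ₁ ⟨u, h⟩ else fun _ => true)
    (fun u => if h : u ∈ V2 then φ₂ ⟨u, h⟩ else fun _ => true) v v v (by rw [hinter]; simp)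
    (by rw [hd_self, hd_self]) (by rw [hd_self, hd_self]) (by rw [hd_self, hd_self])
  refine ⟨fun u w => hd (φ u) (φ w), ⟨φ, fun _ _ => rfl⟩, fun u w => ?_, fun u w => ?_⟩
  · have := h1 u u.2 w w.2
    simpa using this
  · have := h2 u u.2 w w.2
    simpa using this

/-- On a bridgeless chordal summand, subtracting `(2, …, 2, 4)` from an interior point preserves
the local conditions: every edge lies in a triangle, and strict triangle conditions have slack at
least two by parity. -/
lemma localCond_chordal [Finite V] {p : (G.edgeSet → ℤ) × ℤ} {d : ℕ} {y : V → V → ℤ}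
    (hp : p ∈ cutInterior G) (h1 : p.2 = d) (h2 : ∀ u w (h : G.Adj u w), p.1 ⟨s(u, w), h⟩ = y u w)
    (hy : SumCut d y) (v : V) (hbl : BridgelessG (G.induce V1)) (hch : ChordalG (G.induce V1)) :
    (∀ u w : V1, (G.induce V1).Adj u w → 4 ≤ d) ∧
    LocalCond (G.induce V1) ((d : ℤ) - 4) (fun u => y u v) (fun u w => y u w - 2) := by
  have slack : ∀ u w t : V1, (G.induce V1).Adj u w → (G.induce V1).Adj w t →
      (G.induce V1).Adj t u → y t u + 2 ≤ y u w + y w t ∧ y u w + y w t + y t u + 2 ≤ 2 * d := by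
    intro u w t a b c
    have e1 := int_tri hp h1 h2 (u := u.1) (v := w.1) (w := t.1) a b c
    have e2 := hy.even u w t
    have e3 := hy.symm u t
    omega
  have bound : ∀ u w : V1, (G.induce V1).Adj u w → 2 ≤ y u w ∧ y u w + 2 ≤ d := by
    intro u w a
    obtain ⟨t, b, c⟩ := exists_triangle hbl hch a
    have e1 := slack u w t a c.symm b.symm
    have e2 := slack w t u c.symm b.symm a
    have e3 := slack t u w b.symm a c.symm
    omega
  refine ⟨fun u w a => ?_, fun u w => ?_, fun u w a => ?_, fun u w a => ?_, fun u w a => ?_,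
    fun u w t a b c => ?_, fun u w t a b c => ?_, ?_, ?_⟩
  · have := bound u w a
    omega
  · rw [hy.symm]
  · have := hy.even u w v
    omega
  · have := bound u w a
    omega
  · have := bound u w a
    omega
  · have := slack u w t a b c
    omega
  · have := slack u w t a b c
    omega
  · intro a b c e q1 q2 q3 q4 n1 n2 m1 m2
    exact (hch.not_quad q1 q2 q3 q4 n1 n2 m1 m2).elim
  · intro a b c e q1 q2 q3 q4 n1 n2 m1 m2
    exact (hch.not_quad q1 q2 q3 q4 n1 n2 m1 m2).elim

/-- On a bipartite summand, subtracting `(1, …, 1, 2)` from an interior point preserves the local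
conditions. -/
lemma localCond_bipartite [Finite V] {p : (G.edgeSet → ℤ) × ℤ} {d : ℕ} {y : V → V → ℤ}
    (hp : p ∈ cutInterior G) (h1 : p.2 = d) (h2 : ∀ u w (h : G.Adj u w), p.1 ⟨s(u, w), h⟩ = y u w)
    (hy : SumCut d y) (v : V) {c : V2 → Bool} (hc : ∀ u w, (G.induce V2).Adj u w → c u ≠ c w) :
    LocalCond (G.induce V2) ((d : ℤ) - 2) (fun u => y u v + if c u then 1 else 0)
      (fun u w => y u w - 1) := by
  have quad : ∀ a b t e : V2, (G.induce V2).Adj a b → (G.induce V2).Adj b t →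
      (G.induce V2).Adj t e → (G.induce V2).Adj e a →
      y e a + 2 ≤ y a b + y b t + y t e ∧ y a b + y b t + y t e - y e a + 2 ≤ 2 * d := by
    intro a b t e q1 q2 q3 q4
    have e1 := int_quad hp h1 h2 (u := a.1) (v := b.1) (w := t.1) (t := e.1) q1 q2 q3 q4
    have e2 := hy.even a b t
    have e3 := hy.even a t e
    have e4 := hy.symm a e
    omega
  have notri : ∀ u w t : V2, (G.induce V2).Adj u w → (G.induce V2).Adj w t →
      (G.induce V2).Adj t u → False := by
    intro u w t a b e
    have h1 := hc _ _ a
    have h2 := hc _ _ b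
    have h3 := hc _ _ e
    revert h1 h2 h3
    cases c u <;> cases c w <;> cases c t <;> simp
  refine ⟨fun u w => ?_, fun u w a => ?_, fun u w a => ?_, fun u w a => ?_,
    fun u w t a b c => (notri _ _ _ a b c).elim, fun u w t a b c => (notri _ _ _ a b c).elim, ?_, ?_⟩
  · rw [hy.symm]
  · have h1 := hy.even u w v
    have h2 := hc u w a
    revert h2
    cases c u <;> cases c w <;> simp <;> omega
  · have := int_edge hp h1 h2 (u := u.1) (v := w.1) a
    omega
  · have := int_edge hp h1 h2 (u := u.1) (v := w.1) a
    omega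
  · intro a b c e q1 q2 q3 q4 n1 n2 m1 m2
    have := quad a b c e q1 q2 q3 q4
    omega
  · intro a b c e q1 q2 q3 q4 n1 n2 m1 m2
    have := quad a b c e q1 q2 q3 q4
    omega

/-- A point of the cone of one summand extends to a point of the cone of a `0`-sum by half the
degree on the edges of the other summand: average over all ways to extend a cut. -/
lemma exists_lift_cone [Finite V] (hinter : V1 ∩ V2 = {v})
    {q : ((G.induce V2).edgeSet → ℝ) × ℝ} (hq : q ∈ cutCone (G.induce V2)) :
    ∃ r ∈ cutCone G, r.2 = q.2 ∧
      (∀ (a b : V2) (h : (G.induce V2).Adj a b), r.1 ⟨s(a.1, b.1), h⟩ = q.1 ⟨s(a, b), h⟩) ∧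
      ∀ (a b : V1) (h : (G.induce V1).Adj a b), r.1 ⟨s(a.1, b.1), h⟩ = q.2 / 2 := by
  classical
  have := Fintype.ofFinite (Set V)
  have hN : (0 : ℝ) < Fintype.card (Set V) := by exact_mod_cast Fintype.card_pos
  induction hq using AddSubmonoid.closure_induction with
  | mem q hq =>
    obtain ⟨c, A, hc, rfl⟩ := hq
    -- The cut `A`, completed by the part of `B` outside `V2`.
    let f : Set V → Set V := fun B => {u | if h : u ∈ V2 then (⟨u, h⟩ : V2) ∈ A else u ∈ B}
    refine ⟨(c / Fintype.card (Set V)) • ∑ B, rc G (f B), cutCone_smul (by positivity)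
      (sum_mem (S := AddSubmonoid.closure (cutConeGens G)) fun B _ => ?_), ?_, fun a b h => ?_,
      fun a b h => ?_⟩
    · have := smul_rc_mem (G := G) zero_le_one (f B)
      rwa [one_smul] at this
    · simp [Prod.snd_sum, rc, div_mul_cancel₀ _ hN.ne']
    · have : ∀ B, (rc G (f B)).1 ⟨s(a.1, b.1), h⟩ = ((cutVec A s(a, b) : ℤ) : ℝ) := by
        intro B
        simp [rc, cutVec_mk, f]
      simp only [Prod.smul_fst, Prod.fst_sum, Pi.smul_apply, Finset.sum_apply, this, smul_eq_mul,
        Finset.sum_const, Finset.card_univ, nsmul_eq_mul]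
      field_simp
    · have hab : a.1 ≠ b.1 := fun e => (G.ne_of_adj h) e
      have key : ∀ a b : V, a ∉ V2 → a ≠ b →
          2 * ∑ B : Set V, ((cutVec (f B) s(a, b) : ℤ) : ℝ) = Fintype.card (Set V) := by
        intro a b ha hab
        refine sum_cutVec f fun B => ?_
        by_cases hb : b ∈ V2
        · by_cases h1 : a ∈ B <;> by_cases h2 : (⟨b, hb⟩ : V2) ∈ A <;>
            simp [cutVec_mk, f, ha, hb, Set.mem_symmDiff, h1, h2]
        · by_cases h1 : a ∈ B <;> by_cases h2 : b ∈ B <;>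
            simp [cutVec_mk, f, ha, hb, Set.mem_symmDiff, h1, h2, hab.symm]
      have hs : 2 * ∑ B : Set V, ((cutVec (f B) s(a.1, b.1) : ℤ) : ℝ) = Fintype.card (Set V) := by
        by_cases ha : a.1 ∈ V2
        · have hb : b.1 ∉ V2 := fun hb => by
            have e1 : a.1 ∈ V1 ∩ V2 := ⟨a.2, ha⟩
            have e2 : b.1 ∈ V1 ∩ V2 := ⟨b.2, hb⟩
            rw [hinter] at e1 e2
            exact hab (e1.trans e2.symm)
          rw [Sym2.eq_swap]
          exact key _ _ hb hab.symm
        · exact key _ _ ha hab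
      simp only [rc, Prod.smul_fst, Prod.fst_sum, Pi.smul_apply, Finset.sum_apply, smul_eq_mul,
        Prod.smul_snd, mul_one]
      rw [(by linarith : ∑ B : Set V, ((cutVec (f B) s(a.1, b.1) : ℤ) : ℝ) =
        Fintype.card (Set V) / 2)]
      field_simp
  | zero => exact ⟨0, zero_mem (AddSubmonoid.closure (cutConeGens G)), rfl, fun _ _ _ => rfl,
      fun _ _ _ => by simp⟩
  | add p q _ _ hp hq =>
    obtain ⟨r, hr, r1, r2, r3⟩ := hp
    obtain ⟨r', hr', r1', r2', r3'⟩ := hq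
    refine ⟨r + r', cutCone_add hr hr', by simp [r1, r1'], fun a b h => ?_, fun a b h => ?_⟩
    · simp [r2, r2']
    · simp only [Prod.fst_add, Pi.add_apply, Prod.snd_add, r3, r3']
      ring

end zeroSum

/-! ### The interior of the cut monoid of a zero-sum -/

/-- For a `0`-sum of a `K₅`-minor-free bridgeless chordal graph `G₁`
and a `K₅`-minor-free bipartite graph `G₂` with no induced cycle of length `≥ 6`
(both with at least one edge), `int(M_G)` is the union of the sets
`((2,…,2), y, 4) + M_G` over all `y` with `(y, 4) ∈ int(M_{G₂})`. -/
theorem zeroSum_gorenstein_interior {V : Type} [Fintype V] (G : SimpleGraph V)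
    (V1 V2 : Set V) (v : V)
    (hcover : V1 ∪ V2 = Set.univ) (hinter : V1 ∩ V2 = {v})
    (hedges : ∀ a b, G.Adj a b → ((a ∈ V1 ∧ b ∈ V1) ∨ (a ∈ V2 ∧ b ∈ V2)))
    (hK51 : K5Free (G.induce V1)) (hbl1 : BridgelessG (G.induce V1))
    (hch1 : ChordalG (G.induce V1)) (hedge1 : (G.induce V1).edgeSet.Nonempty)
    (hK52 : K5Free (G.induce V2)) (hbip2 : BipartiteG (G.induce V2))
    (hedge2 : (G.induce V2).edgeSet.Nonempty)
    (hcyc2 : ∀ n, 6 ≤ n → ¬ HasInducedCycleLen (G.induce V2) n) :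
    cutInterior G =
      ⋃ q ∈ {q : (G.edgeSet → ℤ) × ℤ | q.2 = 4 ∧
          restrictCut G V1 q.1 = (fun _ => 2) ∧
          ((restrictCut G V2 q.1, (4 : ℤ)) ∈ cutInterior (G.induce V2))},
        (fun m => q + m) '' (cutMonoid G : Set ((G.edgeSet → ℤ) × ℤ)) := by
  classical
  obtain ⟨s, hs⟩ := hbip2
  let c : V2 → Bool := fun u => decide (u ∈ s)
  have hc : ∀ u w, (G.induce V2).Adj u w → c u ≠ c w := by
    intro u w a
    rcases hs a with ⟨h1, h2⟩ | ⟨h1, h2⟩ <;> simp [c, h1, h2]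
  ext p
  simp only [Set.mem_iUnion, Set.mem_image, SetLike.mem_coe, Set.mem_ofPred_eq, exists_prop]
  constructor
  · intro hp
    obtain ⟨d, y, hy, h1, h2⟩ := (mem_cutMonoid_iff G p).1 hp.1
    obtain ⟨hd4, hL1⟩ := localCond_chordal hp h1 h2 hy v hbl1 hch1
    have hL2 := localCond_bipartite hp h1 h2 hy v hc
    have hd' : 4 ≤ d := by
      obtain ⟨e, he⟩ := hedge1
      induction e using Sym2.ind with
      | _ a b => exact hd4 a b he
    obtain ⟨k, rfl⟩ := Nat.exists_eq_add_of_le' hd'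
    have e1 : ((k + 4 : ℕ) : ℤ) - 4 = (k : ℕ) := by push_cast; ring
    have e2 : ((k + 4 : ℕ) : ℤ) - 2 = ((k + 2 : ℕ) : ℤ) := by push_cast; ring
    rw [e1] at hL1
    rw [e2] at hL2
    obtain ⟨φ₁, hφ₁⟩ := hL1.exists_cuts
      (fun n hn h => by have := hch1 n h; omega) (hch1.starC fun _ => true) hK51
    obtain ⟨φ₂, hφ₂⟩ := hL2.exists_cuts (fun n hn h => by
      rcases hn.lt_or_eq with hn | rfl
      · exact hcyc2 n hn h
      · exact not_pentagon hc h) (starC_of_bipartite hc hcyc2) hK52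
    -- Two of the `k + 2` cuts on the bipartite part go to `(y, 4)`, the others to the remainder.
    obtain ⟨z, hz, hz1, hz2⟩ := exists_glue_one hinter φ₁ fun u i => φ₂ u i.succ.succ
    have hsplit : ∀ u w : V2, hd (φ₂ u) (φ₂ w) = (if φ₂ u 0 = φ₂ w 0 then 0 else 1) +
        ((if φ₂ u 1 = φ₂ w 1 then 0 else 1) + z u w) := by
      intro u w
      rw [hz2]
      unfold hd
      rw [Fin.sum_univ_succ, Fin.sum_univ_succ]
      rfl
    obtain ⟨m, hm⟩ := exists_edgeFun G hz.symm
    have hmM : ((m, (k : ℤ)) : (G.edgeSet → ℤ) × ℤ) ∈ cutMonoid G :=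
      (mem_cutMonoid_iff G _).2 ⟨k, z, hz, rfl, hm⟩
    have hV2 : ∀ (a b : V2) (h : (G.induce V2).Adj a b),
        restrictCut G V2 (p - (m, (k : ℤ))).1 ⟨s(a, b), h⟩ =
        (if c a = c b then 0 else 1) + (if φ₂ a 0 = φ₂ b 0 then 0 else 1) +
          (if φ₂ a 1 = φ₂ b 1 then 0 else 1) := by
      intro a b h
      have h3 := hφ₂ a b h
      rw [hsplit] at h3
      have e3 := hm a b h
      have e4 := h2 a b h
      change p.1 ⟨s(a.1, b.1), h⟩ - m ⟨s(a.1, b.1), h⟩ = _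
      rw [if_neg (hc a b h)]
      omega
    refine ⟨p - (m, (k : ℤ)), ⟨?_, ?_, ?_, ?_⟩, (m, (k : ℤ)), hmM, sub_add_cancel _ _⟩
    · rw [Prod.snd_sub, h1]
      push_cast
      ring
    · funext ⟨e, he⟩
      induction e using Sym2.ind with
      | _ a b =>
      have e3 := hm a b he
      have e4 := h2 a b he
      have e5 := hz1 a b
      have e6 := hφ₁ a b he
      change p.1 ⟨s(a.1, b.1), he⟩ - m ⟨s(a.1, b.1), he⟩ = 2
      omega
    · rw [mem_cutMonoid_iff]
      refine ⟨1 + 1 + 1 + 1, _, (((sumCut_smul 1 c).add (sumCut_smul 1 fun u => φ₂ u 0)).add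
        (sumCut_smul 1 fun u => φ₂ u 1)).add (sumCut_smul 1 fun _ => true), rfl, fun a b h => ?_⟩
      refine (hV2 a b h).trans ?_
      simp
    · have := cutInterior_add (ctr_mem_interior (G.induce V2)) (cutCone_add
        (smul_rc_mem zero_le_one {u | φ₂ u 0 = true}) (smul_rc_mem zero_le_one {u | φ₂ u 1 = true}))
      convert this using 1
      refine Prod.ext (funext fun ⟨e, he⟩ => ?_) ?_
      · induction e using Sym2.ind with
        | _ a b =>
        have e3 := rc_fst {u | φ₂ u 0 = true} (G := G.induce V2) (u := a) (v := b) he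
        have e4 := rc_fst {u | φ₂ u 1 = true} (G := G.induce V2) (u := a) (v := b) he
        simp only [Set.mem_ofPred_eq, Bool.coe_iff_coe] at e3 e4
        simp only [toRealCut, hV2 a b he, if_neg (hc a b he), Prod.fst_add, Pi.add_apply, one_smul,
          e3, e4, ctr]
        push_cast
        ring
      · simp only [toRealCut, ctr, rc, Prod.snd_add, one_smul]
        norm_num
  · rintro ⟨q, ⟨hq4, hq1, hqM, hqI⟩, m, hm, rfl⟩
    have hq1' : ∀ (a b : V1) (h : (G.induce V1).Adj a b), q.1 ⟨s(a.1, b.1), h⟩ = 2 :=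
      fun a b h => congrFun hq1 ⟨s(a, b), h⟩
    have hqG : q ∈ cutMonoid G := by
      obtain ⟨d, y, ⟨φ₂, hφ₂⟩, h1, h2⟩ := (mem_cutMonoid_iff _ _).1 hqM
      obtain rfl : d = 4 := by exact_mod_cast (show (4 : ℤ) = d from h1).symm
      have htri : Tri 4 fun a b : V1 => if a = b then (0 : ℤ) else 2 := by
        refine ⟨fun a b => by simp only [eq_comm], fun a => by simp, fun a b e => ?_,
          fun a b e => ?_, fun a b e => ?_⟩
        · by_cases h : a = b
          · subst h; simp
          · simp only [h, if_false]; split_ifs <;> norm_num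
        · split_ifs <;> norm_num
        · split_ifs <;> norm_num
      obtain ⟨φ₁, hφ₁⟩ := exists_cuts (hch1.starC fun _ => true) hK51 htri
      obtain ⟨z, hz, hz1, hz2⟩ := exists_glue_one hinter φ₁ φ₂
      refine (mem_cutMonoid_iff _ _).2 ⟨4, z, hz, hq4, fun u w h => ?_⟩
      rcases hedges u w h with ⟨hu, hw⟩ | ⟨hu, hw⟩
      · rw [hq1' ⟨u, hu⟩ ⟨w, hw⟩ h, hz1 ⟨u, hu⟩ ⟨w, hw⟩, hφ₁ ⟨u, hu⟩ ⟨w, hw⟩ h,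
          if_neg fun e => G.ne_of_adj h (Subtype.mk.inj e)]
      · rw [hz2 ⟨u, hu⟩ ⟨w, hw⟩, hφ₂, ← h2 ⟨u, hu⟩ ⟨w, hw⟩ h]
        rfl
    refine ⟨add_mem hqG hm, ?_⟩
    have hqint : toRealCut G q ∈ interior (cutCone G) := by
      obtain ⟨η, hη, hsub⟩ := exists_sub_ctr hqI
      obtain ⟨r, hr, r1, r2, r3⟩ := exists_lift_cone hinter hsub
      have := cutInterior_add (cutInterior_smul hη (ctr_mem_interior G)) hr
      convert this using 1
      refine Prod.ext (funext fun ⟨e, he⟩ => ?_) ?_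
      · induction e using Sym2.ind with
        | _ u w =>
        rcases hedges u w he with ⟨hu, hw⟩ | ⟨hu, hw⟩
        · have e1 := r3 ⟨u, hu⟩ ⟨w, hw⟩ he
          have e2 := hq1' ⟨u, hu⟩ ⟨w, hw⟩ he
          simp only [toRealCut, ctr, Prod.fst_add, Pi.add_apply, Prod.smul_fst, Pi.smul_apply,
            Prod.snd_sub, Prod.smul_snd, smul_eq_mul] at e1 e2 ⊢
          rw [e1, e2]
          push_cast
          ring
        · have e1 := r2 ⟨u, hu⟩ ⟨w, hw⟩ he
          simp only [toRealCut, ctr, Prod.fst_add, Pi.add_apply, Prod.smul_fst, Pi.smul_apply,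
            Prod.fst_sub, Pi.sub_apply, smul_eq_mul] at e1 ⊢
          rw [e1]
          change _ = η * 1 + (((q.1 ⟨s(u, w), he⟩ : ℤ) : ℝ) - η * 1)
          ring
      · simp only [Prod.snd_add, r1, toRealCut, ctr, Prod.snd_sub, Prod.smul_snd, smul_eq_mul, hq4]
        push_cast
        ring
    rw [toRealCut_add]
    exact cutInterior_add hqint (toRealCut_mem_cutCone hm)
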